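/- Let k ≥ 3 be an integer and α₁,…,α_k ∈ ℝ. Suppose there exists a natural number j with 2 ≤ j ≤ k such that, for some a ∈ ℤ and q ∈ ℕ with gcd(a,q) = 1, one has |α_j − a/q| ≤ q^{−2}. Then ∑_{1≤n≤N} e(α₁n + α₂n² + ⋯ + α_k n^k) ≪ N^{1+ε}(q^{−1} + N^{−1} + qN^{−j})^{1/(k(k−1))}. -/

import Mathlib

open scoped BigOperators Classical
open Real

noncomputable section

/-- `e(t) = e^{2πit}`. -/
def eC (t : ℝ) : ℂ := Complex.exp (2 * Real.pi * Complex.I * t)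

/-- The Piatetski-Shapiro set `ℕ^c = {⌊n^c⌋ : n ∈ ℕ}`. -/
def PS (c : ℝ) : Set ℕ := {m | ∃ n : ℕ, 0 < n ∧ m = ⌊(n : ℝ) ^ c⌋₊}

/-- The Fourier transform `f̂(α) = ∑_{n ∈ ℤ} f(n) e(αn)` of a finitely
supported function on `ℤ`. -/
def FT (f : ℤ → ℂ) (α : ℝ) : ℂ := ∑ᶠ n : ℤ, f n * eC (α * n)

/-- `w = (1/2) log log x`. -/
def wps (x : ℕ) : ℝ := Real.log (Real.log x) / 2

/-- `W = 4 d³ ∏_{p ≤ w} p`. -/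
def Wps (d x : ℕ) : ℕ :=
  4 * d ^ 3 * ∏ p ∈ Finset.filter Nat.Prime (Finset.Iic ⌊wps x⌋₊), p

/-- `σ(b) = #{z ∈ [W] : z^d ≡ -b (mod W)}`. -/
def sigmaPS (d W b : ℕ) : ℕ :=
  ((Finset.Icc 1 W).filter fun z => (z ^ d + b) % W = 0).card

/-- `N = ⌊x^d / W⌋ + 1`. -/
def Nps (d x : ℕ) : ℕ := ⌊(x : ℝ) ^ d / (Wps d x : ℝ)⌋₊ + 1

/-- `b ∈ [W]` and `-b ∈ (ℤ/Wℤ)^{×d}`. -/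
def bSpec (d x b : ℕ) : Prop :=
  b ∈ Finset.Icc 1 (Wps d x) ∧
    ∃ z : (ZMod (Wps d x))ˣ, (z : ZMod (Wps d x)) ^ d = -(b : ZMod (Wps d x))

/-- `S(d) = 2⌊d²/2⌋`. -/
def Sd (d : ℕ) : ℕ := 2 * (d ^ 2 / 2)

def hD (d : ℕ) : ℝ := 1 / ((d : ℝ) * ((d : ℝ) + 1) ^ 2 - 1)
def kD (d : ℕ) : ℝ := 2 / (27 * (d : ℝ) ^ 2 - 14)
def lD (d : ℕ) : ℝ := 2 / (27 * (d : ℝ) ^ 2 - 5)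

/-- `θ(d, c)`. -/
def θdc (d : ℕ) (c : ℝ) : ℝ :=
  if d = 2 then (4 * c + 7) / 13
  else if d = 3 then (15 * c + 14) / 30
  else if d ≤ 11 then (1 + c) / 2 * (1 - hD d)
  else if 2 ∣ d then (1 + c) / 2 * (1 - kD d)
  else (1 + c) / 2 * (1 - lD d)

/-- `c₂(d)`. -/
def c2ps (d : ℕ) : ℝ :=
  if d = 2 then 1 / 54
  else if d = 3 then 1 / 495
  else if d ≤ 11 then 2 * hD d / (4 * (Sd d : ℝ) + 1 - hD d)
  else if 2 ∣ d then 2 * kD d / (4 * (Sd d : ℝ) + 1 - kD d)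
  else 2 * lD d / (4 * (Sd d : ℝ) + 1 - lD d)

/-- The majorant `ν = ν_b` from the density transfer lemma, characterized by
its defining property. -/
def nuSpec (d x : ℕ) (c : ℝ) (b : ℕ) (ν : ℤ → ℝ) : Prop :=
  (∀ n : ℤ, ∀ p : ℕ, p.Prime → p ∈ PS c → p ≤ x →
      (Wps d x : ℤ) * n - (b : ℤ) = (p : ℤ) ^ d →
      ν n = c * (Nat.totient (Wps d x) : ℝ) /
          ((sigmaPS d (Wps d x) b : ℝ) * (Wps d x : ℝ)) *
          (p : ℝ) ^ ((d : ℝ) - 1 / c) * Real.log p) ∧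
  (∀ n : ℤ, (¬ ∃ p : ℕ, p.Prime ∧ p ∈ PS c ∧ p ≤ x ∧
      (Wps d x : ℤ) * n - (b : ℤ) = (p : ℤ) ^ d) → ν n = 0)

/-- The majorant `τ`, characterized by its defining property. -/
def tauSpec (d x : ℕ) (c : ℝ) (b : ℕ) (τ : ℤ → ℝ) : Prop :=
  (∀ n : ℤ, ∀ m : ℕ, m ∈ PS c → m ≤ x →
      (Wps d x : ℤ) * n - (b : ℤ) = (m : ℤ) ^ d →
      τ n = c / (sigmaPS d (Wps d x) b : ℝ) * (m : ℝ) ^ ((d : ℝ) - 1 / c)) ∧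
  (∀ n : ℤ, (¬ ∃ m : ℕ, m ∈ PS c ∧ m ≤ x ∧
      (Wps d x : ℤ) * n - (b : ℤ) = (m : ℤ) ^ d) → τ n = 0)

/-- The function `μ`, characterized by its defining property. -/
def muSpec (d x : ℕ) (b : ℕ) (μ : ℤ → ℝ) : Prop :=
  (∀ n : ℤ, ∀ m : ℕ, 1 ≤ m → m ≤ x →
      (Wps d x : ℤ) * n - (b : ℤ) = (m : ℤ) ^ d →
      μ n = (m : ℝ) ^ (d - 1) / (sigmaPS d (Wps d x) b : ℝ)) ∧
  (∀ n : ℤ, (¬ ∃ m : ℕ, 1 ≤ m ∧ m ≤ x ∧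
      (Wps d x : ℤ) * n - (b : ℤ) = (m : ℤ) ^ d) → μ n = 0)

namespace VMV
open Finset

lemma exists_root {r : ℕ} (hr : 1 ≤ r) {x : ℝ} (hx : 0 ≤ x) : ∃ y : ℝ, 0 ≤ y ∧ y ^ r = x :=
  ⟨x ^ ((r : ℝ)⁻¹), Real.rpow_nonneg hx _, Real.rpow_inv_natCast_pow hx (by omega)⟩

lemma mink_pos {Ω ι : Type*} [Fintype Ω] [Fintype ι] (g : Ω → ℝ) (hg : ∀ ω, 0 ≤ g ω)
    {r : ℕ} (hr : 1 ≤ r) (t : ι → Ω → ℝ) (ht : ∀ i ω, 0 ≤ t i ω) (T : ι → ℝ) (hT : ∀ i, 0 < T i)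
    (h : ∀ i, 𝔼 ω, g ω * t i ω ^ r ≤ T i ^ r) :
    𝔼 ω, g ω * (∑ i, t i ω) ^ r ≤ (∑ i, T i) ^ r := by
  rcases isEmpty_or_nonempty ι with hι | hι
  · simp [show r ≠ 0 by omega]
  set S := ∑ i, T i with hS
  have hSpos : 0 < S := Finset.sum_pos (fun i _ => hT i) univ_nonempty
  have key : ∀ ω, (∑ i, t i ω) ^ r ≤ ∑ i, (T i / S) * (t i ω * (S / T i)) ^ r := by
    intro ω
    have := Real.pow_arith_mean_le_arith_mean_pow univ (fun i => T i / S)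
      (fun i => t i ω * (S / T i)) (fun i _ => (div_pos (hT i) hSpos).le)
      (by rw [← Finset.sum_div]; exact div_self hSpos.ne')
      (fun i _ => mul_nonneg (ht i ω) (div_pos hSpos (hT i)).le) r
    refine le_trans (le_of_eq ?_) this
    congr 1
    refine Finset.sum_congr rfl fun i _ => ?_
    have := (hT i).ne'
    field_simp
  calc 𝔼 ω, g ω * (∑ i, t i ω) ^ r
      ≤ 𝔼 ω, ∑ i, (T i / S) * (S / T i) ^ r * (g ω * t i ω ^ r) := by
        refine Finset.expect_le_expect fun ω _ => ?_
        refine (mul_le_mul_of_nonneg_left (key ω) (hg ω)).trans (le_of_eq ?_)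
        rw [Finset.mul_sum]
        refine Finset.sum_congr rfl fun i _ => ?_
        rw [mul_pow]; ring
    _ = ∑ i, (T i / S) * (S / T i) ^ r * 𝔼 ω, (g ω * t i ω ^ r) := by
        rw [Finset.expect_sum_comm]
        refine Finset.sum_congr rfl fun i _ => ?_
        rw [Finset.mul_expect]
    _ ≤ ∑ i, (T i / S) * (S / T i) ^ r * T i ^ r := by
        refine Finset.sum_le_sum fun i _ => ?_
        refine mul_le_mul_of_nonneg_left (h i) ?_
        have := hT i
        positivity
    _ = ∑ i, (T i / S) * S ^ r := by
        refine Finset.sum_congr rfl fun i _ => ?_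
        rw [mul_assoc, ← mul_pow, div_mul_cancel₀ _ (hT i).ne']
    _ = S ^ r := by
        rw [← Finset.sum_mul, ← Finset.sum_div, div_self hSpos.ne', one_mul]

lemma mink {Ω ι : Type*} [Fintype Ω] [Fintype ι] (g : Ω → ℝ) (hg : ∀ ω, 0 ≤ g ω)
    {r : ℕ} (hr : 1 ≤ r) (t : ι → Ω → ℝ) (ht : ∀ i ω, 0 ≤ t i ω) (T : ι → ℝ) (hT : ∀ i, 0 ≤ T i)
    (h : ∀ i, 𝔼 ω, g ω * t i ω ^ r ≤ T i ^ r) :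
    𝔼 ω, g ω * (∑ i, t i ω) ^ r ≤ (∑ i, T i) ^ r := by
  have hc : Continuous (fun e : ℝ => (∑ i, (T i + e)) ^ r) := by fun_prop
  have h0 : Filter.Tendsto (fun e : ℝ => (∑ i, (T i + e)) ^ r) (nhdsWithin 0 (Set.Ioi 0))
      (nhds ((∑ i, T i) ^ r)) := by
    have := (hc.tendsto 0).mono_left (nhdsWithin_le_nhds (s := Set.Ioi 0))
    simpa using this
  refine ge_of_tendsto h0 ?_
  filter_upwards [self_mem_nhdsWithin] with e he
  have he' : (0 : ℝ) < e := he
  refine mink_pos g hg hr t ht _ (fun i => by have := hT i; linarith) (fun i => (h i).trans ?_)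
  exact pow_le_pow_left₀ (hT i) (by linarith) r

lemma holder {Ω : Type*} [Fintype Ω] [Nonempty Ω] (A B C : Ω → ℝ) (hA : ∀ ω, 0 ≤ A ω)
    (hB : ∀ ω, 0 ≤ B ω) (hC : ∀ ω, 0 ≤ C ω) {m : ℕ} (hm : 1 ≤ m)
    (h : ∀ ω, A ω ^ (m + 1) = B ω * C ω ^ m) :
    (𝔼 ω, A ω) ^ (m + 1) ≤ (𝔼 ω, B ω) * (𝔼 ω, C ω) ^ m := by
  have hm' : (0 : ℝ) < m := by exact_mod_cast hm
  have hpq : Real.HolderConjugate ((m : ℝ) + 1) (((m : ℝ) + 1) / m) := by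
    rw [Real.holderConjugate_iff]
    refine ⟨by linarith, ?_⟩
    field_simp
    ring
  have hSB : 0 ≤ ∑ ω, B ω := Finset.sum_nonneg fun i _ => hB i
  have hSC : 0 ≤ ∑ ω, C ω := Finset.sum_nonneg fun i _ => hC i
  have hSA : 0 ≤ ∑ ω, A ω := Finset.sum_nonneg fun i _ => hA i
  have H := Real.inner_le_Lp_mul_Lq_of_nonneg univ hpq
    (f := fun ω => B ω ^ (((m : ℝ) + 1)⁻¹)) (g := fun ω => C ω ^ ((m : ℝ) / ((m : ℝ) + 1)))
    (fun i _ => Real.rpow_nonneg (hB i) _) (fun i _ => Real.rpow_nonneg (hC i) _)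
  have e1 : ∀ ω, (B ω ^ (((m : ℝ) + 1)⁻¹)) ^ ((m : ℝ) + 1) = B ω := fun ω => by
    rw [← Real.rpow_mul (hB ω), inv_mul_cancel₀ (by positivity), Real.rpow_one]
  have e2 : ∀ ω, (C ω ^ ((m : ℝ) / ((m : ℝ) + 1))) ^ (((m : ℝ) + 1) / m) = C ω := fun ω => by
    rw [← Real.rpow_mul (hC ω), div_mul_div_cancel₀ (by positivity), div_self hm'.ne',
      Real.rpow_one]
  have e3 : ∀ ω, B ω ^ (((m : ℝ) + 1)⁻¹) * C ω ^ ((m : ℝ) / ((m : ℝ) + 1)) = A ω := fun ω => by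
    have h1 : C ω ^ ((m : ℝ) / ((m : ℝ) + 1)) = (C ω ^ m) ^ (((m : ℝ) + 1)⁻¹) := by
      rw [← Real.rpow_natCast, ← Real.rpow_mul (hC ω), div_eq_mul_inv]
    rw [h1, ← Real.mul_rpow (hB ω) (pow_nonneg (hC ω) _), ← h ω, ← Real.rpow_natCast,
      ← Real.rpow_mul (hA ω)]
    push_cast
    rw [mul_inv_cancel₀ (by positivity), Real.rpow_one]
  simp only [e1, e2, e3] at H
  have H2 : (∑ ω, A ω) ^ (m + 1) ≤ (∑ ω, B ω) * (∑ ω, C ω) ^ m := by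
    refine (pow_le_pow_left₀ hSA H (m + 1)).trans (le_of_eq ?_)
    rw [mul_pow]
    congr 1
    · rw [← Real.rpow_natCast, ← Real.rpow_mul hSB]
      push_cast
      rw [one_div, inv_mul_cancel₀ (by positivity), Real.rpow_one]
    · rw [← Real.rpow_natCast, ← Real.rpow_mul hSC, ← Real.rpow_natCast]
      congr 1
      push_cast
      field_simp
  rw [Fintype.expect_eq_sum_div_card, Fintype.expect_eq_sum_div_card,
    Fintype.expect_eq_sum_div_card, div_pow, div_pow, div_mul_div_comm, ← pow_succ']
  gcongr

lemma expect_surj {A B : Type*} [AddCommGroup A] [AddCommGroup B] [Fintype A] [Fintype B]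
    (φ : A →+ B) (hφ : Function.Surjective φ) (f : B → ℝ) :
    𝔼 a, f (φ a) = 𝔼 b, f b := by
  have h1 : ∀ a : A, 𝔼 b, f b = 𝔼 b, f (φ a + b) := fun a =>
    (Fintype.expect_equiv (Equiv.addLeft (φ a)) _ _ (fun b => rfl)).symm
  choose s hs using hφ
  have h2 : ∀ b : B, 𝔼 a, f (φ a) = 𝔼 a, f (φ a + b) := fun b =>
    (Fintype.expect_equiv (Equiv.addRight (s b)) _ _ (fun a => by simp [hs])).symm
  calc 𝔼 a, f (φ a) = 𝔼 b : B, 𝔼 a, f (φ a + b) := by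
        rw [← Fintype.expect_const (ι := B) (𝔼 a, f (φ a))]
        exact Finset.expect_congr rfl fun b _ => h2 b
    _ = 𝔼 a, 𝔼 b, f (φ a + b) := Finset.expect_comm _ _ _
    _ = 𝔼 b, f b := by
        rw [← Fintype.expect_const (ι := A) (𝔼 b, f b)]
        exact Finset.expect_congr rfl fun b _ => (h1 b).symm
end VMV

namespace VMV
open Finset

def sg (k : ℕ) : ℕ := k * (k + 1) / 2

lemma two_sg (k : ℕ) : 2 * sg k = k * (k + 1) :=
  Nat.mul_div_cancel' (Nat.even_mul_succ_self k).two_dvd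

lemma sg_pos {k : ℕ} (hk : 1 ≤ k) : 1 ≤ sg k := by
  have := two_sg k; nlinarith

abbrev Om (p k M : ℕ) := Fin k → ZMod (p ^ M)

section
variable {p : ℕ} [hp : Fact p.Prime] {k M : ℕ}

def pol (α : Om p k M) (x : ℤ) : ZMod (p ^ M) :=
  ∑ i, α i * (x : ZMod (p ^ M)) ^ (i.val + 1)

lemma pol_add (α β : Om p k M) (x : ℤ) : pol (α + β) x = pol α x + pol β x := by
  simp [pol, add_mul, Finset.sum_add_distrib]

lemma pol_shift {l : ℕ} (α : Om p k M) (θ : Fin l → ZMod (p ^ M)) (h : Fin l → Om p k M) (x : ℤ) :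
    pol (α + ∑ i, θ i • h i) x = pol α x + ∑ i, θ i * pol (h i) x := by
  rw [pol_add]
  congr 1
  simp only [pol, Finset.sum_apply, Pi.smul_apply, smul_eq_mul, Finset.sum_mul, Finset.mul_sum]
  rw [Finset.sum_comm]
  exact Finset.sum_congr rfl fun i _ => Finset.sum_congr rfl fun j _ => by ring

def Fs (a : ℤ → ℂ) (s : Finset ℤ) (α : Om p k M) : ℂ :=
  ∑ x ∈ s, a x * ZMod.stdAddChar (pol α x)

def Nn (a : ℤ → ℂ) (s : Finset ℤ) (α : Om p k M) : ℝ := ‖Fs a s α‖ ^ 2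

lemma Nn_nonneg (a : ℤ → ℂ) (s : Finset ℤ) (α : Om p k M) : 0 ≤ Nn a s α := sq_nonneg _

def cls (p : ℕ) (s : Finset ℤ) (m : ℕ) (c : ZMod (p ^ m)) : Finset ℤ :=
  s.filter (fun x : ℤ => (x : ZMod (p ^ m)) = c)

lemma mem_cls {s : Finset ℤ} {m : ℕ} {c : ZMod (p ^ m)} {x : ℤ} :
    x ∈ cls p s m c ↔ x ∈ s ∧ (x : ZMod (p ^ m)) = c := by simp [cls]

lemma Fs_eq_sum_cls (a : ℤ → ℂ) (s : Finset ℤ) (m : ℕ) (α : Om p k M) :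
    Fs a s α = ∑ c : ZMod (p ^ m), Fs a (cls p s m c) α := by
  simp only [Fs, cls]
  exact (Finset.sum_fiberwise s (fun x : ℤ => (x : ZMod (p ^ m))) _).symm

lemma Nn_empty (a : ℤ → ℂ) (α : Om p k M) : Nn a ∅ α = 0 := by simp [Nn, Fs]

lemma Nn_le_sum_cls (a : ℤ → ℂ) (s : Finset ℤ) (m : ℕ) (α : Om p k M) :
    Nn a s α ≤ ∑ c : ZMod (p ^ m), (p : ℝ) ^ m * Nn a (cls p s m c) α := by
  rw [← Finset.mul_sum]
  unfold Nn
  rw [Fs_eq_sum_cls a s m α]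
  calc ‖∑ c : ZMod (p ^ m), Fs a (cls p s m c) α‖ ^ 2
      ≤ (∑ c : ZMod (p ^ m), ‖Fs a (cls p s m c) α‖) ^ 2 :=
        pow_le_pow_left₀ (norm_nonneg _) (norm_sum_le _ _) 2
    _ ≤ _ := by
        have := sq_sum_le_card_mul_sum_sq (s := (univ : Finset (ZMod (p ^ m))))
          (f := fun c => ‖Fs a (cls p s m c) α‖)
        simpa [ZMod.card] using this

def WD (g : Om p k M → ℝ) (r : ℕ) (a : ℤ → ℂ) (s : Finset ℤ) (m : ℕ) (W : ℝ) : Prop :=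
  ∀ T : ZMod (p ^ m) → ℝ, (∀ c, 0 ≤ T c) →
    (∀ c, 𝔼 α, g α * Nn a (cls p s m c) α ^ r ≤ T c ^ r) →
    𝔼 α, g α * Nn a s α ^ r ≤ (W * ∑ c, T c) ^ r

lemma WD_mono {g : Om p k M → ℝ} {r : ℕ} {a : ℤ → ℂ} {s : Finset ℤ} {m : ℕ} {W W' : ℝ}
    (h : WD g r a s m W) (hW : 0 ≤ W) (hWW : W ≤ W') : WD g r a s m W' := by
  intro T hT H
  have : 0 ≤ ∑ c, T c := Finset.sum_nonneg fun c _ => hT c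
  exact (h T hT H).trans (pow_le_pow_left₀ (by positivity) (by gcongr) r)

lemma WD_trivial (g : Om p k M → ℝ) (hg : ∀ α, 0 ≤ g α) {r : ℕ} (hr : 1 ≤ r) (a : ℤ → ℂ)
    (s : Finset ℤ) (m : ℕ) : WD g r a s m ((p : ℝ) ^ m) := by
  intro T hT H
  rw [Finset.mul_sum]
  refine le_trans (Finset.expect_le_expect fun α _ => ?_)
    (mink g hg hr (fun c α => (p : ℝ) ^ m * Nn a (cls p s m c) α)
      (fun c α => by have := Nn_nonneg a (cls p s m c) α; positivity)
      (fun c => (p : ℝ) ^ m * T c) (fun c => by have := hT c; positivity) ?_)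
  · have := Nn_nonneg a s α
    have := Nn_le_sum_cls a s m α
    have := hg α
    gcongr
  · intro c
    simp only [mul_pow]
    calc 𝔼 α, g α * (((p : ℝ) ^ m) ^ r * Nn a (cls p s m c) α ^ r)
        = ((p : ℝ) ^ m) ^ r * 𝔼 α, g α * Nn a (cls p s m c) α ^ r := by
          rw [Finset.mul_expect]
          exact Finset.expect_congr rfl fun α _ => by ring
      _ ≤ _ := by have := H c; gcongr

def red (p : ℕ) {m m' : ℕ} (h : m ≤ m') : ZMod (p ^ m') →+* ZMod (p ^ m) :=
  ZMod.castHom (pow_dvd_pow p h) (ZMod (p ^ m))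

lemma cls_cls {s : Finset ℤ} {m m' : ℕ} (h : m ≤ m') (c : ZMod (p ^ m)) (c' : ZMod (p ^ m')) :
    cls p (cls p s m c) m' c' = if red p h c' = c then cls p s m' c' else ∅ := by
  ext x
  split_ifs with hc
  · simp only [mem_cls]
    constructor
    · rintro ⟨⟨h1, _⟩, h3⟩; exact ⟨h1, h3⟩
    · rintro ⟨h1, h3⟩
      refine ⟨⟨h1, ?_⟩, h3⟩
      rw [← hc, ← h3]; simp [red]
  · simp only [mem_cls, Finset.notMem_empty, iff_false]
    rintro ⟨⟨_, h2⟩, h3⟩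
    apply hc
    rw [← h3, ← h2]; simp [red]

lemma WD_comp {g : Om p k M → ℝ} {r : ℕ} (hr : 1 ≤ r) {a : ℤ → ℂ} {s : Finset ℤ}
    {m m' : ℕ} (hm : m ≤ m') {W W' : ℝ} (hW' : 0 ≤ W')
    (h1 : WD g r a s m W) (h2 : ∀ c, WD g r a (cls p s m c) m' W') : WD g r a s m' (W * W') := by
  intro T hT H
  have := h1 (fun c => W' * ∑ c', if red p hm c' = c then T c' else 0)
    (fun c => mul_nonneg hW' (Finset.sum_nonneg fun c' _ => by split_ifs <;> simp [hT]))
    (fun c => by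
      refine h2 c _ (fun c' => by split_ifs <;> simp [hT]) (fun c' => ?_)
      rw [cls_cls hm]
      split_ifs
      · exact H c'
      · simp [Nn_empty, show r ≠ 0 by omega])
  rw [← Finset.mul_sum, Finset.sum_comm] at this
  simpa [mul_assoc] using this

def Dec (p : ℕ) [Fact p.Prime] (l n : ℕ) (D : ℝ) : Prop :=
  ∀ (a : ℤ → ℂ) (s : Finset ℤ), WD (p := p) (k := l) (M := l * n) (fun _ => 1) (sg l) a s n D

lemma psi_scale {M' : ℕ} (h : M' ≤ M) (t : ZMod (p ^ M)) :
    ZMod.stdAddChar ((p : ZMod (p ^ M)) ^ (M - M') * t) = ZMod.stdAddChar (red p h t) := by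
  obtain ⟨z, rfl⟩ := ZMod.intCast_surjective t
  have : (p : ZMod (p ^ M)) ^ (M - M') * (z : ZMod (p ^ M))
      = (((p : ℤ) ^ (M - M') * z : ℤ) : ZMod (p ^ M)) := by push_cast; rfl
  rw [this, ZMod.stdAddChar_coe]
  simp only [red, map_intCast]
  rw [ZMod.stdAddChar_coe]
  congr 1
  have hp0 : (p : ℂ) ≠ 0 := by exact_mod_cast hp.out.ne_zero
  push_cast
  have : (p : ℂ) ^ M = (p : ℂ) ^ (M - M') * (p : ℂ) ^ M' := by rw [← pow_add]; congr 1; omega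
  rw [this]
  field_simp

lemma Nn_shift_const {l : ℕ} (a : ℤ → ℂ) (s : Finset ℤ) (α : Om p k M) (θ : Fin l → ZMod (p ^ M))
    (h : Fin l → Om p k M) (c : Fin l → ZMod (p ^ M)) (hc : ∀ x ∈ s, ∀ i, pol (h i) x = c i) :
    Nn a s (α + ∑ i, θ i • h i) = Nn a s α := by
  have : Fs a s (α + ∑ i, θ i • h i) = ZMod.stdAddChar (∑ i, θ i * c i) * Fs a s α := by
    unfold Fs
    rw [Finset.mul_sum]
    refine Finset.sum_congr rfl fun x hx => ?_
    rw [pol_shift, AddChar.map_add_eq_mul]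
    simp only [hc x hx]
    ring
  rw [Nn, this, norm_mul, AddChar.norm_apply, one_mul, Nn]

lemma transfer_aux {l n' m : ℕ} (hM : l * n' ≤ M) (a : ℤ → ℂ) (Y : Finset ℤ) (ξ : ℤ)
    (h : Fin l → Om p k M) (c : Fin l → ZMod (p ^ M))
    (hh : ∀ i (y : ℤ), pol (h i) (ξ + (p : ℤ) ^ m * y)
      = c i + (p : ZMod (p ^ M)) ^ (M - l * n') * (y : ZMod (p ^ M)) ^ (i.val + 1))
    (α : Om p k M) (θ : Fin l → ZMod (p ^ M)) :
    Nn a (Y.image fun y => ξ + (p : ℤ) ^ m * y) (α + ∑ i, θ i • h i)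
      = Nn (p := p) (k := l) (M := l * n')
        (fun y => a (ξ + (p : ℤ) ^ m * y) * ZMod.stdAddChar (pol α (ξ + (p : ℤ) ^ m * y))) Y
        (fun i => red p hM (θ i)) := by
  have hp0 : (p : ℤ) ≠ 0 := by exact_mod_cast hp.out.ne_zero
  have : Fs a (Y.image fun y => ξ + (p : ℤ) ^ m * y) (α + ∑ i, θ i • h i)
      = ZMod.stdAddChar (∑ i, θ i * c i) * Fs (p := p) (k := l) (M := l * n')
        (fun y => a (ξ + (p : ℤ) ^ m * y) * ZMod.stdAddChar (pol α (ξ + (p : ℤ) ^ m * y))) Y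
        (fun i => red p hM (θ i)) := by
    unfold Fs
    rw [Finset.sum_image (fun x _ y _ hxy => by
      have h2 : (p : ℤ) ^ m * x = (p : ℤ) ^ m * y := by linarith
      exact mul_left_cancel₀ (pow_ne_zero _ hp0) h2), Finset.mul_sum]
    refine Finset.sum_congr rfl fun y _ => ?_
    rw [pol_shift, AddChar.map_add_eq_mul]
    simp only [hh, mul_add, Finset.sum_add_distrib]
    rw [AddChar.map_add_eq_mul]
    have e : ∑ i, θ i * ((p : ZMod (p ^ M)) ^ (M - l * n') * (y : ZMod (p ^ M)) ^ (i.val + 1))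
        = (p : ZMod (p ^ M)) ^ (M - l * n') * ∑ i, θ i * (y : ZMod (p ^ M)) ^ (i.val + 1) := by
      rw [Finset.mul_sum]; exact Finset.sum_congr rfl fun i _ => by ring
    rw [e, psi_scale hM]
    have e2 : red p hM (∑ i, θ i * (y : ZMod (p ^ M)) ^ (i.val + 1))
        = pol (p := p) (k := l) (M := l * n') (fun i => red p hM (θ i)) y := by
      simp [pol, map_sum, map_mul, map_pow]
    rw [e2]
    ring
  rw [Nn, this, norm_mul, AddChar.norm_apply, one_mul, Nn]

lemma transfer {l n' m : ℕ} {D : ℝ} (hl : 1 ≤ l) (hD : Dec p l n' D) (hD0 : 0 ≤ D)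
    (hM : l * n' ≤ M) (g : Om p k M → ℝ) (hg : ∀ α, 0 ≤ g α) (a : ℤ → ℂ) (s : Finset ℤ) (ξ : ℤ)
    (hs : ∀ x ∈ s, ∃ y : ℤ, x = ξ + (p : ℤ) ^ m * y)
    (h : Fin l → Om p k M) (c : Fin l → ZMod (p ^ M))
    (hh : ∀ i (y : ℤ), pol (h i) (ξ + (p : ℤ) ^ m * y)
      = c i + (p : ZMod (p ^ M)) ^ (M - l * n') * (y : ZMod (p ^ M)) ^ (i.val + 1))
    (hgi : ∀ (α : Om p k M) (θ : Fin l → ZMod (p ^ M)), g (α + ∑ i, θ i • h i) = g α) :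
    WD g (sg l) a s (m + n') D := by
  have hp0 : (p : ℤ) ≠ 0 := by exact_mod_cast hp.out.ne_zero
  have hr := sg_pos hl
  set r := sg l
  have hinj : ∀ x y : ℤ, ξ + (p : ℤ) ^ m * x = ξ + (p : ℤ) ^ m * y → x = y := fun x y hxy => by
    have h2 : (p : ℤ) ^ m * x = (p : ℤ) ^ m * y := by linarith
    exact mul_left_cancel₀ (pow_ne_zero _ hp0) h2
  choose! yy hyy using hs
  set Y := s.image yy with hY
  set emb : ℤ → ℤ := fun y => ξ + (p : ℤ) ^ m * y with hemb
  have hsY : s = Y.image emb := by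
    ext x
    simp only [hY, Finset.mem_image]
    constructor
    · intro hx; exact ⟨yy x, ⟨x, hx, rfl⟩, (hyy x hx).symm⟩
    · rintro ⟨y, ⟨x', hx', rfl⟩, rfl⟩; rw [hemb]; simp only; rw [← hyy x' hx']; exact hx'
  -- main averaging identity
  set b : Om p k M → ℤ → ℂ := fun α y => a (emb y) * ZMod.stdAddChar (pol α (emb y)) with hb
  have ident : ∀ Z : Finset ℤ, 𝔼 α, g α * Nn a (Z.image emb) α ^ r
      = 𝔼 α, g α * 𝔼 θ : Om p l (l * n'), Nn (b α) Z θ ^ r := by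
    intro Z
    have e1 : ∀ θ : Fin l → ZMod (p ^ M), 𝔼 α, g α * Nn a (Z.image emb) α ^ r
        = 𝔼 α, g α * Nn (p := p) (k := l) (M := l * n') (b α) Z (fun i => red p hM (θ i)) ^ r := by
      intro θ
      rw [← Fintype.expect_equiv (Equiv.addRight (∑ i, θ i • h i))
        (fun α => g (α + ∑ i, θ i • h i) * Nn a (Z.image emb) (α + ∑ i, θ i • h i) ^ r) _
        (fun α => rfl)]
      refine Finset.expect_congr rfl fun α _ => ?_
      rw [hgi, transfer_aux hM a Z ξ h c hh]
    calc 𝔼 α, g α * Nn a (Z.image emb) α ^ r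
        = 𝔼 θ : Fin l → ZMod (p ^ M), 𝔼 α, g α * Nn a (Z.image emb) α ^ r :=
          (Fintype.expect_const _).symm
      _ = 𝔼 θ : Fin l → ZMod (p ^ M), 𝔼 α, g α *
            Nn (p := p) (k := l) (M := l * n') (b α) Z (fun i => red p hM (θ i)) ^ r :=
          Finset.expect_congr rfl fun θ _ => e1 θ
      _ = 𝔼 α, 𝔼 θ : Fin l → ZMod (p ^ M), g α *
            Nn (p := p) (k := l) (M := l * n') (b α) Z (fun i => red p hM (θ i)) ^ r :=
          Finset.expect_comm _ _ _
      _ = _ := by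
          refine Finset.expect_congr rfl fun α _ => ?_
          rw [← Finset.mul_expect]
          congr 1
          let φ : (Fin l → ZMod (p ^ M)) →+ Om p l (l * n') :=
            { toFun := fun θ i => red p hM (θ i)
              map_zero' := by ext i; simp
              map_add' := fun x y => by ext i; simp }
          have hφ : Function.Surjective φ := by
            intro θ
            have : Function.Surjective (red p hM) := ZMod.castHom_surjective _
            choose f hf using this
            exact ⟨fun i => f (θ i), by ext i; exact hf _⟩
          exact expect_surj φ hφ (fun θ => Nn (b α) Z θ ^ r)
  -- classes
  have hcls : ∀ c' : ZMod (p ^ n'), (cls p Y n' c').image emb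
      = cls p s (m + n') ((emb (c'.val : ℤ) : ℤ) : ZMod (p ^ (m + n'))) := by
    intro c'
    have hval : ((c'.val : ℤ) : ZMod (p ^ n')) = c' := by simp
    have hiff : ∀ y : ℤ, (y : ZMod (p ^ n')) = c' ↔
        ((emb y : ℤ) : ZMod (p ^ (m + n'))) = ((emb (c'.val : ℤ) : ℤ) : ZMod (p ^ (m + n'))) := by
      intro y
      rw [← hval, ZMod.intCast_eq_intCast_iff_dvd_sub, ZMod.intCast_eq_intCast_iff_dvd_sub, hval]
      have : emb (c'.val : ℤ) - emb y = (p : ℤ) ^ m * ((c'.val : ℤ) - y) := by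
        simp only [hemb]; ring
      rw [this]
      push_cast
      rw [pow_add]
      exact (mul_dvd_mul_iff_left (pow_ne_zero _ hp0)).symm
    ext x
    simp only [Finset.mem_image, mem_cls]
    constructor
    · rintro ⟨y, ⟨hy, hyc⟩, rfl⟩
      refine ⟨?_, (hiff y).1 hyc⟩
      rw [hsY]; exact Finset.mem_image_of_mem _ hy
    · rintro ⟨hx, hxc⟩
      rw [hsY] at hx
      obtain ⟨y, hy, rfl⟩ := Finset.mem_image.1 hx
      exact ⟨y, ⟨hy, (hiff y).2 hxc⟩, rfl⟩
  have hcinj : Function.Injective (fun c' : ZMod (p ^ n') =>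
      ((emb (c'.val : ℤ) : ℤ) : ZMod (p ^ (m + n')))) := by
    intro c1 c2 h12
    simp only at h12
    rw [ZMod.intCast_eq_intCast_iff_dvd_sub] at h12
    have e : emb (c2.val : ℤ) - emb (c1.val : ℤ) = (p : ℤ) ^ m * ((c2.val : ℤ) - c1.val) := by
      simp only [hemb]; ring
    rw [e] at h12
    push_cast at h12
    rw [pow_add] at h12
    have h3 := (mul_dvd_mul_iff_left (pow_ne_zero _ hp0)).1 h12
    have h4 : ((c1.val : ℤ) : ZMod (p ^ n')) = ((c2.val : ℤ) : ZMod (p ^ n')) := by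
      rw [ZMod.intCast_eq_intCast_iff_dvd_sub]; push_cast; push_cast at h3; exact h3
    simpa using h4
  intro T hT H
  rw [hsY, ident Y]
  have hroot : ∀ (c' : ZMod (p ^ n')) (α : Om p k M), ∃ t : ℝ, 0 ≤ t ∧ t ^ r =
      𝔼 θ : Om p l (l * n'), Nn (b α) (cls p Y n' c') θ ^ r := fun c' α =>
    exists_root hr (Finset.expect_nonneg fun θ _ => pow_nonneg (Nn_nonneg _ _ _) _)
  choose t ht0 ht using hroot
  have step1 : ∀ α, 𝔼 θ : Om p l (l * n'), Nn (b α) Y θ ^ r ≤ (∑ c', D * t c' α) ^ r := by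
    intro α
    have := hD (b α) Y (fun c' => t c' α) (fun c' => ht0 c' α) (fun c' => by
      rw [ht]; simp; rfl)
    rw [← Finset.mul_sum]
    simpa using this
  have step2 : 𝔼 α, g α * (∑ c', D * t c' α) ^ r
      ≤ (∑ c' : ZMod (p ^ n'), D * T ((emb (c'.val : ℤ) : ℤ) : ZMod (p ^ (m + n')))) ^ r := by
    refine mink g hg hr _ (fun c' α => mul_nonneg hD0 (ht0 c' α)) _
      (fun c' => mul_nonneg hD0 (hT _)) (fun c' => ?_)
    have h5 := H ((emb (c'.val : ℤ) : ℤ) : ZMod (p ^ (m + n')))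
    rw [← hcls, ident] at h5
    simp only [mul_pow, ht]
    calc 𝔼 α, g α * (D ^ r * 𝔼 θ : Om p l (l * n'), Nn (b α) (cls p Y n' c') θ ^ r)
        = D ^ r * 𝔼 α, g α * 𝔼 θ : Om p l (l * n'), Nn (b α) (cls p Y n' c') θ ^ r := by
          rw [Finset.mul_expect]
          exact Finset.expect_congr rfl fun α _ => by ring
      _ ≤ _ := by gcongr
  refine (Finset.expect_le_expect fun α _ => mul_le_mul_of_nonneg_left (step1 α) (hg α)).trans
    (step2.trans ?_)
  refine pow_le_pow_left₀ (Finset.sum_nonneg fun c' _ => mul_nonneg hD0 (hT _)) ?_ r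
  rw [← Finset.mul_sum]
  refine mul_le_mul_of_nonneg_left ?_ hD0
  calc ∑ c' : ZMod (p ^ n'), T ((emb (c'.val : ℤ) : ℤ) : ZMod (p ^ (m + n')))
      = ∑ c ∈ univ.image (fun c' : ZMod (p ^ n') =>
        ((emb (c'.val : ℤ) : ℤ) : ZMod (p ^ (m + n')))), T c := by
        rw [Finset.sum_image (fun x _ y _ hxy => hcinj hxy)]
    _ ≤ ∑ c, T c := Finset.sum_le_sum_of_subset_of_nonneg (Finset.subset_univ _)
        (fun c _ _ => hT c)
end
end VMV

namespace VMV
open Finset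
section
variable {p : ℕ} [hp : Fact p.Prime] {k M : ℕ}
open Polynomial

lemma unit_nat {j : ℕ} (h1 : 1 ≤ j) (h2 : j < p) : IsUnit ((j : ℕ) : ZMod (p ^ M)) := by
  rw [ZMod.isUnit_iff_coprime]
  exact Nat.Coprime.pow_right _ (Nat.coprime_of_lt_prime (by omega) h2 hp.out).symm
 
lemma antider (hkp : k < p) (g : (ZMod (p ^ M))[X]) (hg : ∀ j, k ≤ j → g.coeff j = 0) :
    ∃ Q : (ZMod (p ^ M))[X], derivative Q = g ∧ ∀ j, k < j → Q.coeff j = 0 := by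
  refine ⟨∑ j ∈ Finset.range k, monomial (j + 1) (g.coeff j * ((j + 1 : ℕ) : ZMod (p ^ M))⁻¹), ?_, ?_⟩
  · ext i
    simp only [derivative_sum, derivative_monomial, finsetSum_coeff, coeff_monomial]
    simp only [Nat.add_sub_cancel, Finset.sum_ite_eq', Finset.mem_range]
    split_ifs with h
    · have := ZMod.mul_inv_of_unit _ (unit_nat (p := p) (M := M) (j := i + 1) (by omega) (by omega))
      rw [mul_assoc, mul_comm _ ((i + 1 : ℕ) : ZMod (p ^ M)), this, mul_one]
    · exact (hg i (by omega)).symm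
  · intro j hj
    simp only [finsetSum_coeff, coeff_monomial]
    refine Finset.sum_eq_zero fun i hi => ?_
    rw [Finset.mem_range] at hi
    rw [if_neg (by omega)]

lemma taylor_local {R : Type*} [CommRing R] (e : ℕ) (hu : ∀ j : ℕ, 1 ≤ j → j ≤ e + 1 → IsUnit ((j : ℕ) : R))
    (Q f : R[X]) (t : R) (hQ : derivative Q = (X - C t) ^ e * f) :
    ∃ d : R, ((e + 1 : ℕ) : R) * d = f.eval t ∧
      ∀ u : R, ∃ E : R, Q.eval (t + u) = Q.eval t + d * u ^ (e + 1) + u ^ (e + 2) * E := by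
  set P := taylor t Q with hP
  have hder : derivative P = X ^ e * taylor t f := by
    have h1 : derivative P = taylor t (derivative Q) := by
      rw [hP]; simp [taylor_apply, derivative_comp]
    rw [h1, hQ]
    simp [taylor_mul]
  have hc : ∀ j, P.coeff (j + 1) * ((j + 1 : ℕ) : R) = (X ^ e * taylor t f).coeff j := by
    intro j
    rw [← hder, coeff_derivative]; push_cast; rfl
  refine ⟨P.coeff (e + 1), ?_, ?_⟩
  · rw [mul_comm, hc]
    rw [coeff_X_pow_mul']
    simp
  · intro u
    have hdvd : X ^ (e + 2) ∣ P - C (P.coeff 0) - C (P.coeff (e + 1)) * X ^ (e + 1) := by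
      rw [X_pow_dvd_iff]
      intro d hd
      simp only [coeff_sub, coeff_C, coeff_C_mul, coeff_X_pow]
      rcases Nat.eq_zero_or_pos d with rfl | hd0
      · simp
      · obtain ⟨j, rfl⟩ : ∃ j, d = j + 1 := ⟨d - 1, by omega⟩
        by_cases hje : j = e
        · subst hje; simp
        · have h2 := hc j
          rw [coeff_X_pow_mul', if_neg (by omega)] at h2
          have h3 := (hu (j + 1) (by omega) (by omega)).mul_left_eq_zero.1 h2
          simp [h3, hje]
    obtain ⟨E, hE⟩ := hdvd
    refine ⟨E.eval u, ?_⟩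
    have h4 := congrArg (Polynomial.eval u) hE
    have h5 : P.eval u = Q.eval (t + u) := by
      rw [hP, taylor_eval, add_comm]
    have h6 : P.coeff 0 = Q.eval t := by rw [hP, taylor_coeff_zero]
    simp only [eval_sub, eval_mul, eval_pow, eval_X, eval_C] at h4
    rw [← h5, ← h6]
    linear_combination h4

lemma pol_coeff (Q : (ZMod (p ^ M))[X]) (hQ : ∀ j, k < j → Q.coeff j = 0) (x : ℤ) :
    pol (p := p) (k := k) (M := M) (fun i => Q.coeff (i.val + 1)) x
      = Q.eval (x : ZMod (p ^ M)) - Q.coeff 0 := by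
  have hd : Q.natDegree < k + 1 := by
    rw [Nat.lt_succ_iff, natDegree_le_iff_coeff_eq_zero]; exact hQ
  rw [eval_eq_sum_range' hd, Finset.sum_range_succ', pol]
  rw [Fin.sum_univ_eq_sum_range (fun i => Q.coeff (i + 1) * (x : ZMod (p ^ M)) ^ (i + 1))]
  simp

lemma pow_eq_zero_of_le {j : ℕ} (h : M ≤ j) : (p : ZMod (p ^ M)) ^ j = 0 := by
  have : ((p ^ M : ℕ) : ZMod (p ^ M)) = 0 := ZMod.natCast_self _
  push_cast at this
  rw [show j = M + (j - M) by omega, pow_add, this, zero_mul]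

lemma step {l n' m b : ℕ} {D : ℝ} (hl : 1 ≤ l) (hlk : l ≤ k) (hkp : k < p) (hD : Dec p l n' D) (hD0 : 0 ≤ D)
    (hM : l * (m + n') ≤ M) (hm : l * n' ≤ m) (hb : l * (m + n') ≤ (k - l + 1) * b)
    (a : ℤ → ℂ) (s Y : Finset ℤ) (ξ η : ℤ) (e : ℕ)
    (hξη : ¬ (p : ℤ) ∣ ξ - η)
    (hs : ∀ x ∈ s, (p : ℤ) ^ m ∣ x - ξ) (hY : ∀ y ∈ Y, (p : ℤ) ^ b ∣ y - η) :
    WD (p := p) (k := k) (M := M) (fun α => Nn a Y α ^ e) (sg l) a s (m + n') D := by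
  have hu : ∀ j : ℕ, 1 ≤ j → j ≤ k → IsUnit ((j : ℕ) : ZMod (p ^ M)) := fun j h1 h2 =>
    unit_nat h1 (by omega)
  have hunit : IsUnit (((ξ - η : ℤ)) : ZMod (p ^ M)) := by
    rw [ZMod.coe_int_isUnit_iff_isCoprime]
    push_cast
    refine IsCoprime.pow_left ?_
    exact (Prime.coprime_iff_not_dvd (Nat.prime_iff_prime_int.1 hp.out)).2 hξη
  have key : ∀ i : Fin l, ∃ (h : Om p k M) (c c' : ZMod (p ^ M)),
      (∀ y : ℤ, pol h (ξ + (p : ℤ) ^ m * y)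
        = c + (p : ZMod (p ^ M)) ^ (M - l * n') * (y : ZMod (p ^ M)) ^ (i.val + 1)) ∧
      (∀ y ∈ Y, pol h y = c') := by
    intro i
    have hi := i.2
    set x0 : ZMod (p ^ M) := (ξ : ZMod (p ^ M))
    set y0 : ZMod (p ^ M) := (η : ZMod (p ^ M))
    obtain ⟨Q, hQ1, hQ2⟩ := antider (p := p) (M := M) hkp ((X - C y0) ^ (k - l) * (X - C x0) ^ i.val) (by
      intro j hj
      apply coeff_eq_zero_of_natDegree_lt
      refine lt_of_le_of_lt natDegree_mul_le ?_
      have h1 := natDegree_pow_le (p := (X - C y0)) (n := k - l)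
      have h2 := natDegree_pow_le (p := (X - C x0)) (n := i.val)
      have h3 : (X - C y0).natDegree ≤ 1 := natDegree_X_sub_C_le _
      have h4 : (X - C x0).natDegree ≤ 1 := natDegree_X_sub_C_le _
      have h5 : (k - l) * (X - C y0).natDegree ≤ (k - l) * 1 := Nat.mul_le_mul_left _ h3
      have h6 : i.val * (X - C x0).natDegree ≤ i.val * 1 := Nat.mul_le_mul_left _ h4
      omega)
    obtain ⟨d, hd1, hd2⟩ := taylor_local i.val (fun j h1 h2 => hu j h1 (by omega)) Q
      ((X - C y0) ^ (k - l)) x0 (by rw [hQ1, mul_comm])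
    obtain ⟨d', hd1', hd2'⟩ := taylor_local (k - l) (fun j h1 h2 => hu j h1 (by omega)) Q
      ((X - C x0) ^ i.val) y0 hQ1
    have hdu : IsUnit d := by
      have : IsUnit (((i.val + 1 : ℕ) : ZMod (p ^ M)) * d) := by
        rw [hd1]
        simp only [eval_pow, eval_sub, eval_X, eval_C]
        apply IsUnit.pow
        have := hunit
        push_cast at this
        exact this
      exact isUnit_of_mul_isUnit_right this
    obtain ⟨d, rfl⟩ := hdu
    set w : ZMod (p ^ M) := (p : ZMod (p ^ M)) ^ (M - (i.val + 1) * m - l * n') * (↑d⁻¹ : ZMod (p ^ M)) with hw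
    have him : (i.val + 1) * m + l * n' ≤ l * (m + n') := by
      have : (i.val + 1) * m ≤ l * m := Nat.mul_le_mul_right _ (by omega)
      nlinarith
    have hpol : ∀ x : ℤ, pol (p := p) (k := k) (M := M) (fun i => (C w * Q).coeff (i.val + 1)) x
        = w * Q.eval (x : ZMod (p ^ M)) - w * Q.coeff 0 := by
      intro x
      rw [pol_coeff]
      · simp
      · intro j hj; simp [hQ2 j hj]
    refine ⟨fun i => (C w * Q).coeff (i.val + 1), w * Q.eval x0 - w * Q.coeff 0,
      w * Q.eval y0 - w * Q.coeff 0, ?_, ?_⟩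
    · intro y
      rw [hpol]
      push_cast
      obtain ⟨E, hE⟩ := hd2 ((p : ZMod (p ^ M)) ^ m * (y : ZMod (p ^ M)))
      rw [hE]
      have e1 : (p : ZMod (p ^ M)) ^ (M - l * n') = (p : ZMod (p ^ M)) ^ (M - (i.val + 1) * m - l * n')
          * (p : ZMod (p ^ M)) ^ ((i.val + 1) * m) := by
        rw [← pow_add]; congr 1; omega
      have e2 : (p : ZMod (p ^ M)) ^ (M - (i.val + 1) * m - l * n')
          * ((p : ZMod (p ^ M)) ^ m) ^ (i.val + 2) = 0 := by
        rw [← pow_mul, ← pow_add]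
        apply pow_eq_zero_of_le
        have : m * (i.val + 2) = (i.val + 1) * m + m := by ring
        omega
      have e3 : (p : ZMod (p ^ M)) ^ ((i.val + 1) * m) = ((p : ZMod (p ^ M)) ^ m) ^ (i.val + 1) := by
        rw [← pow_mul, mul_comm]
      have e4 : (↑d⁻¹ : ZMod (p ^ M)) * d = 1 := by simp
      rw [e1, e3, hw]
      set Pm := (p : ZMod (p ^ M)) ^ m
      set P0 := (p : ZMod (p ^ M)) ^ (M - (i.val + 1) * m - l * n')
      linear_combination (↑d⁻¹ : ZMod (p ^ M)) * (y : ZMod (p ^ M)) ^ (i.val + 2) * E * e2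
        + P0 * (Pm * (y : ZMod (p ^ M))) ^ (i.val + 1) * e4
    · intro y hy
      obtain ⟨z, hz⟩ := hY y hy
      rw [hpol]
      have : (y : ZMod (p ^ M)) = y0 + (p : ZMod (p ^ M)) ^ b * (z : ZMod (p ^ M)) := by
        have h7 : y = η + (p : ℤ) ^ b * z := by linarith
        rw [h7]; push_cast; rfl
      rw [this]
      obtain ⟨E, hE⟩ := hd2' ((p : ZMod (p ^ M)) ^ b * (z : ZMod (p ^ M)))
      rw [hE]
      have e2 : (p : ZMod (p ^ M)) ^ (M - (i.val + 1) * m - l * n')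
          * ((p : ZMod (p ^ M)) ^ b) ^ (k - l + 1) = 0 := by
        rw [← pow_mul, ← pow_add]
        apply pow_eq_zero_of_le
        have : b * (k - l + 1) = (k - l + 1) * b := by ring
        omega
      rw [hw]
      linear_combination (↑d⁻¹ : ZMod (p ^ M)) * ((z : ZMod (p ^ M)) ^ (k - l + 1) * d'
        + (p : ZMod (p ^ M)) ^ b * (z : ZMod (p ^ M)) ^ (k - l + 2) * E) * e2
  choose h c c' h1 h2 using key
  refine transfer hl hD hD0 (by nlinarith) _ (fun α => pow_nonneg (Nn_nonneg _ _ _) _) a s ξ ?_ h c h1 ?_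
  · intro x hx
    obtain ⟨y, hy⟩ := hs x hx
    exact ⟨y, by linarith⟩
  · intro α θ
    rw [Nn_shift_const a Y α θ h c' (fun x hx i => h2 i x hx)]

lemma rescale {n b : ℕ} {D : ℝ} (hk : 1 ≤ k) (hbn : b ≤ n) (hD : Dec p k (n - b) D) (hD0 : 0 ≤ D)
    (a : ℤ → ℂ) (s : Finset ℤ) (ξ : ℤ)
    (hs : ∀ x ∈ s, (p : ℤ) ^ b ∣ x - ξ) :
    WD (p := p) (k := k) (M := k * n) (fun _ => 1) (sg k) a s n D := by
  have hbk : k * b ≤ k * n := Nat.mul_le_mul_left _ hbn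
  have hn : n = b + (n - b) := by omega
  have hMeq : k * n - k * (n - b) = k * b := by rw [← Nat.mul_sub]; congr 1; omega
  have key : ∀ i : Fin k, ∃ (h : Om p k (k * n)) (c : ZMod (p ^ (k * n))),
      (∀ y : ℤ, pol h (ξ + (p : ℤ) ^ b * y)
        = c + (p : ZMod (p ^ (k * n))) ^ (k * n - k * (n - b)) * (y : ZMod (p ^ (k * n))) ^ (i.val + 1)) := by
    intro i
    have hi := i.2
    set x0 : ZMod (p ^ (k * n)) := (ξ : ZMod (p ^ (k * n)))
    set w : ZMod (p ^ (k * n)) := (p : ZMod (p ^ (k * n))) ^ ((k - (i.val + 1)) * b) with hw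
    set Q : (ZMod (p ^ (k * n)))[X] := C w * (X - C x0) ^ (i.val + 1) with hQ
    refine ⟨fun i => Q.coeff (i.val + 1), - Q.coeff 0, ?_⟩
    intro y
    rw [pol_coeff]
    · rw [hQ]
      simp only [eval_mul, eval_C, eval_pow, eval_sub, eval_X]
      rw [hMeq, show k * b = (k - (i.val + 1)) * b + b * (i.val + 1) by
        rw [mul_comm b, ← add_mul]; congr 1; omega, pow_add _ _ (b * _), pow_mul _ b]
      push_cast
      ring
    · intro j hj
      apply coeff_eq_zero_of_natDegree_lt
      refine lt_of_le_of_lt (natDegree_C_mul_le _ _) ?_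
      have h1 := natDegree_pow_le (p := (X - C x0)) (n := i.val + 1)
      have h4 : (X - C x0).natDegree ≤ 1 := natDegree_X_sub_C_le _
      have h6 : (i.val + 1) * (X - C x0).natDegree ≤ (i.val + 1) * 1 := Nat.mul_le_mul_left _ h4
      omega
  choose h c h1 using key
  have := transfer (p := p) (k := k) (M := k * n) (m := b) hk hD hD0 (Nat.mul_le_mul_left _ (Nat.sub_le _ _))
    (fun _ => 1) (fun α => zero_le_one) a s ξ (by
      intro x hx
      obtain ⟨y, hy⟩ := hs x hx
      exact ⟨y, by linarith⟩) h c h1 (fun _ _ => rfl)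
  rw [← hn] at this
  exact this
end
end VMV

namespace VMV
open Finset
section
variable {p : ℕ} [hp : Fact p.Prime] {k M : ℕ}

def HDec (p : ℕ) [Fact p.Prime] (l : ℕ) : Prop :=
  ∀ ε : ℝ, 0 < ε → ∃ C : ℝ, 0 < C ∧ ∀ n : ℕ, Dec p l n (C * (p : ℝ) ^ (ε * n))

lemma Dec_mono {l n : ℕ} {D D' : ℝ} (h : Dec p l n D) (h0 : 0 ≤ D) (hD : D ≤ D') : Dec p l n D' :=
  fun a s => WD_mono (h a s) h0 hD

lemma WD_empty (g : Om p k M → ℝ) {r : ℕ} (hr : 1 ≤ r) (a : ℤ → ℂ) (m : ℕ) {W : ℝ} (hW : 0 ≤ W) :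
    WD g r a ∅ m W := by
  intro T hT _
  have h0 : 0 ≤ ∑ c, T c := Finset.sum_nonneg fun c _ => hT c
  simp only [Nn_empty, zero_pow (show r ≠ 0 by omega), mul_zero, Finset.expect_const_zero]
  positivity

lemma one_lt_p : (1 : ℝ) < p := by exact_mod_cast hp.out.one_lt

lemma pp0 : (0 : ℝ) < p := lt_trans zero_lt_one one_lt_p

lemma exists_pow_ge (C1 : ℝ) {ε : ℝ} (hε : 0 < ε) : ∃ n0 : ℕ, 1 ≤ n0 ∧ ∀ n : ℕ, n0 ≤ n → C1 ≤ (p : ℝ) ^ (ε * n) := by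
  have h1 : 1 < (p : ℝ) ^ ε := Real.one_lt_rpow one_lt_p hε
  obtain ⟨n0, hn0⟩ := pow_unbounded_of_one_lt C1 h1
  refine ⟨n0 + 1, by omega, fun n hn => ?_⟩
  rw [Real.rpow_mul pp0.le, Real.rpow_natCast]
  exact hn0.le.trans (pow_le_pow_right₀ h1.le (by omega))

lemma lemL {l : ℕ} (hl : 1 ≤ l) (hlk : l ≤ k) (hkp : k < p) (hD : HDec p l) {ε : ℝ} (hε : 0 < ε) :
    ∃ C : ℝ, 1 ≤ C ∧ ∀ (M m' b : ℕ) (a : ℤ → ℂ) (X Y : Finset ℤ) (η : ℤ) (e : ℕ),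
      (∀ x ∈ X, ¬ (p : ℤ) ∣ x - η) → (∀ y ∈ Y, (p : ℤ) ^ b ∣ y - η) →
      l * m' ≤ (k - l + 1) * b → l * m' ≤ M →
      WD (p := p) (k := k) (M := M) (fun α => Nn a Y α ^ e) (sg l) a X m' (C * (p : ℝ) ^ (ε * m')) := by
  obtain ⟨C1, hC1, hC⟩ := hD (ε / 2) (by positivity)
  obtain ⟨n0, hn0, hn⟩ := exists_pow_ge (p := p) C1 (ε := ε / 2) (by positivity)
  have hdec : ∀ n, n0 ≤ n → Dec p l n ((p : ℝ) ^ (ε * n)) := by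
    intro n h
    have hpos : (0 : ℝ) < (p : ℝ) ^ (ε / 2 * n) := Real.rpow_pos_of_pos pp0 _
    refine Dec_mono (hC n) (by positivity) ?_
    calc C1 * (p : ℝ) ^ (ε / 2 * n) ≤ (p : ℝ) ^ (ε / 2 * n) * (p : ℝ) ^ (ε / 2 * n) := by
          gcongr; exact hn n h
      _ = _ := by rw [← Real.rpow_add pp0]; congr 1; ring
  have hC1' : (1 : ℝ) ≤ (p : ℝ) ^ ((l + 1) * n0) := one_le_pow₀ one_lt_p.le
  refine ⟨(p : ℝ) ^ ((l + 1) * n0), hC1', ?_⟩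
  intro M m' b a X Y η e hX hY
  induction m' using Nat.strong_induction_on with
  | _ m' ih =>
    intro h1 h2
    have hg : ∀ α : Om p k M, 0 ≤ Nn a Y α ^ e := fun α => pow_nonneg (Nn_nonneg _ _ _) _
    by_cases hsm : m' ≤ (l + 1) * n0
    · refine WD_mono (WD_trivial _ hg (sg_pos hl) a X m') (by positivity) ?_
      have h3 : (1 : ℝ) ≤ (p : ℝ) ^ (ε * m') := Real.one_le_rpow one_lt_p.le (by positivity)
      have h4 : (p : ℝ) ^ m' ≤ (p : ℝ) ^ ((l + 1) * n0) := pow_le_pow_right₀ one_lt_p.le hsm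
      nlinarith
    · push Not at hsm
      set n' := m' / (l + 1) with hn'
      have hle : (l + 1) * n' ≤ m' := Nat.mul_div_le _ _
      have hn0' : n0 ≤ n' := by
        rw [hn', Nat.le_div_iff_mul_le (by omega)]; nlinarith
      have hln : l * n' + n' ≤ m' := by nlinarith
      obtain ⟨m, hm⟩ : ∃ m, m' = m + n' := ⟨m' - n', by omega⟩
      have hlm : l * m ≤ l * m' := Nat.mul_le_mul_left _ (by omega)
      have I := ih m (by omega) (by omega) (by omega)
      have e1 : (p : ℝ) ^ ((l + 1) * n0) * (p : ℝ) ^ (ε * m')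
          = ((p : ℝ) ^ ((l + 1) * n0) * (p : ℝ) ^ (ε * m)) * (p : ℝ) ^ (ε * n') := by
        rw [mul_assoc, ← Real.rpow_add pp0]
        congr 2
        rw [hm]; push_cast; ring
      rw [e1]
      have hpos : (0 : ℝ) ≤ (p : ℝ) ^ (ε * n') := Real.rpow_nonneg pp0.le _
      refine WD_comp (sg_pos hl) (by omega) hpos I (fun c => ?_)
      rcases (cls p X m c).eq_empty_or_nonempty with hemp | ⟨ξ, hξ⟩
      · rw [hemp]; exact WD_empty _ (sg_pos hl) a m' hpos
      · rw [mem_cls] at hξ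
        rw [hm]
        refine step hl hlk hkp (hdec n' hn0') hpos (by rw [← hm]; exact h2) (by omega)
          (by rw [← hm]; exact h1) a _ Y ξ η e (hX ξ hξ.1) ?_ hY
        intro x hx
        rw [mem_cls] at hx
        have := (ZMod.intCast_eq_intCast_iff_dvd_sub ξ x (p ^ m)).1 (by rw [hξ.2, hx.2])
        exact_mod_cast this
end
end VMV

namespace VMV
open Finset
section
variable {p : ℕ} [hp : Fact p.Prime] {k : ℕ}

def BP (p : ℕ) [Fact p.Prime] (k l n a0 b0 : ℕ) (B : ℝ) : Prop :=
  ∀ (a : ℤ → ℂ) (X Y : Finset ℤ) (ξ η : ℤ), ¬ (p : ℤ) ∣ ξ - η →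
    (∀ x ∈ X, (p : ℤ) ^ a0 ∣ x - ξ) → (∀ y ∈ Y, (p : ℤ) ^ b0 ∣ y - η) →
    ∀ T U : ZMod (p ^ n) → ℝ, (∀ c, 0 ≤ T c) → (∀ c, 0 ≤ U c) →
    (∀ c, 𝔼 α : Om p k (k * n), Nn a (cls p X n c) α ^ (sg k) ≤ T c ^ (sg k)) →
    (∀ c, 𝔼 α : Om p k (k * n), Nn a (cls p Y n c) α ^ (sg k) ≤ U c ^ (sg k)) →
    𝔼 α : Om p k (k * n), Nn a Y α ^ (sg k - sg l) * Nn a X α ^ (sg l)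
      ≤ B * (∑ c, T c) ^ (sg l) * (∑ c, U c) ^ (sg k - sg l)

lemma BP_mono {l n a0 b0 a1 b1 : ℕ} {B B' : ℝ} (h : BP p k l n a0 b0 B) (ha : a0 ≤ a1) (hb : b0 ≤ b1)
    (hB : B ≤ B') : BP p k l n a1 b1 B' := by
  intro a X Y ξ η hξ hX hY T U hT hU h1 h2
  refine (h a X Y ξ η hξ (fun x hx => (pow_dvd_pow _ ha).trans (hX x hx))
    (fun x hx => (pow_dvd_pow _ hb).trans (hY x hx)) T U hT hU h1 h2).trans ?_
  have h3 : 0 ≤ ∑ c, T c := Finset.sum_nonneg fun c _ => hT c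
  have h4 : 0 ≤ ∑ c, U c := Finset.sum_nonneg fun c _ => hU c
  gcongr

lemma BP_improve {l n a0 a' b0 : ℕ} {B W : ℝ} (hl : 1 ≤ l) (ha0 : 1 ≤ a0) (haa : a0 ≤ a') (han : a' ≤ n)
    (hB : 0 ≤ B) (hW : 0 ≤ W)
    (hWD : ∀ (a : ℤ → ℂ) (X Y : Finset ℤ) (η : ℤ) (e : ℕ),
      (∀ x ∈ X, ¬ (p : ℤ) ∣ x - η) → (∀ y ∈ Y, (p : ℤ) ^ b0 ∣ y - η) →
      WD (p := p) (k := k) (M := k * n) (fun α => Nn a Y α ^ e) (sg l) a X a' W)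
    (h : BP p k l n a' b0 B) : BP p k l n a0 b0 (W ^ (sg l) * B) := by
  intro a X Y ξ η hξ hX hY T U hT hU h1 h2
  have hsl := sg_pos hl
  have h3 : 0 ≤ ∑ c, T c := Finset.sum_nonneg fun c _ => hT c
  have h4 : 0 ≤ ∑ c, U c := Finset.sum_nonneg fun c _ => hU c
  have hXη : ∀ x ∈ X, ¬ (p : ℤ) ∣ x - η := by
    intro x hx hd
    have h5 : (p : ℤ) ∣ x - ξ := (dvd_pow_self _ (by omega)).trans (hX x hx)
    apply hξ
    have h6 := dvd_sub hd h5
    rwa [show x - η - (x - ξ) = ξ - η by ring] at h6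
  obtain ⟨lam, hlam0, hlam⟩ := exists_root hsl (x := B * (∑ c, U c) ^ (sg k - sg l)) (by positivity)
  have := hWD a X Y η (sg k - sg l) hXη hY
    (fun c' => lam * ∑ c, if red p han c = c' then T c else 0)
    (fun c' => mul_nonneg hlam0 (Finset.sum_nonneg fun c _ => by split_ifs <;> simp [hT]))
    (fun c' => by
      rcases (cls p X a' c').eq_empty_or_nonempty with hemp | ⟨ξ', hξ'⟩
      · rw [hemp]
        simp only [Nn_empty, zero_pow (show sg l ≠ 0 by omega), mul_zero, Finset.expect_const_zero]
        exact pow_nonneg (mul_nonneg hlam0 (Finset.sum_nonneg fun c _ => by split_ifs <;> simp [hT])) _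
      · rw [mem_cls] at hξ'
        refine (h a (cls p X a' c') Y ξ' η (hXη ξ' hξ'.1) ?_ hY
          (fun c => if red p han c = c' then T c else 0) U
          (fun c => by split_ifs <;> simp [hT]) hU ?_ h2).trans ?_
        · intro x hx
          rw [mem_cls] at hx
          have := (ZMod.intCast_eq_intCast_iff_dvd_sub ξ' x (p ^ a')).1 (by rw [hξ'.2, hx.2])
          exact_mod_cast this
        · intro c
          rw [cls_cls han]
          split_ifs
          · exact h1 c
          · have : sg k ≠ 0 ∨ sg k = 0 := by tauto
            rcases this with h0 | h0
            · simp [Nn_empty, h0]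
            · simp [h0]
        · rw [mul_pow, hlam]; apply le_of_eq; ring)
  refine this.trans ?_
  rw [← Finset.mul_sum, Finset.sum_comm]
  simp only [Finset.sum_ite_eq, Finset.mem_univ, if_true, mul_pow, hlam]
  apply le_of_eq; ring

lemma sg_mono {i j : ℕ} (h : i ≤ j) : sg i ≤ sg j := by
  have := two_sg i; have := two_sg j
  have : i * (i + 1) ≤ j * (j + 1) := Nat.mul_le_mul h (by omega)
  omega

lemma BP_holder {l n a0 b0 : ℕ} {B B1 B2 : ℝ} (hl : 1 ≤ l) (hlk : l < k)
    (hB : 0 ≤ B) (hB1 : 0 ≤ B1) (hB2 : 0 ≤ B2) (h : B1 * B2 ^ (k - l) ≤ B ^ (k - l + 1))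
    (h1 : BP p k (k - l) n b0 a0 B1) (h2 : BP p k (l - 1) n a0 b0 B2) : BP p k l n a0 b0 B := by
  intro a X Y ξ η hξ hX hY T U hT hU hTT hUU
  have h3 : 0 ≤ ∑ c, T c := Finset.sum_nonneg fun c _ => hT c
  have h4 : 0 ≤ ∑ c, U c := Finset.sum_nonneg fun c _ => hU c
  have H1 := h1 a Y X η ξ (by rw [← dvd_neg, neg_sub]; exact hξ) hY hX U T hU hT hUU hTT
  have H2 := h2 a X Y ξ η hξ hX hY T U hT hU hTT hUU
  obtain ⟨m, rfl⟩ : ∃ m, k = l + m := ⟨k - l, by omega⟩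
  obtain ⟨i, rfl⟩ : ∃ i, l = i + 1 := ⟨l - 1, by omega⟩
  simp only [Nat.add_sub_cancel_left, Nat.add_sub_cancel] at *
  set k := i + 1 + m with hkk
  have e0 := two_sg k
  have e1 := two_sg (i + 1)
  have e2 := two_sg m
  have e3 := two_sg i
  have m1 : sg (i + 1) ≤ sg k := sg_mono (by omega)
  have m2 : sg m ≤ sg k := sg_mono (by omega)
  have m3 : sg i ≤ sg k := sg_mono (by omega)
  have x1 : sg (i + 1) * (m + 1) = (sg k - sg m) + sg i * m := by
    zify [m2]; zify at e0 e1 e2 e3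
    have : 2 * ((sg (i + 1) : ℤ) * (m + 1)) = 2 * ((sg k : ℤ) - sg m + sg i * m) := by
      have hk' : (k : ℤ) = i + 1 + m := by rw [hkk]; push_cast; ring
      rw [hk'] at e0
      linear_combination (m + 1 : ℤ) * e1 - e0 + e2 - m * e3
    linarith
  have x2 : (sg k - sg (i + 1)) * (m + 1) = sg m + (sg k - sg i) * m := by
    zify [m2, m1, m3]; zify [m2] at x1
    linear_combination -x1
  have y1 : ∀ x y : ℝ, (y ^ (sg k - sg (i + 1)) * x ^ (sg (i + 1))) ^ (m + 1)
      = (x ^ (sg k - sg m) * y ^ (sg m)) * (y ^ (sg k - sg i) * x ^ sg i) ^ m := by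
    intro x y
    rw [mul_pow, mul_pow, ← pow_mul, ← pow_mul, ← pow_mul, ← pow_mul, x1, x2, pow_add, pow_add]; ring
  have hol := holder (Ω := Om p k (k * n)) (fun α => Nn a Y α ^ (sg k - sg (i + 1)) * Nn a X α ^ (sg (i + 1)))
    (fun α => Nn a X α ^ (sg k - sg m) * Nn a Y α ^ (sg m))
    (fun α => Nn a Y α ^ (sg k - sg i) * Nn a X α ^ (sg i))
    (fun α => mul_nonneg (pow_nonneg (Nn_nonneg _ _ _) _) (pow_nonneg (Nn_nonneg _ _ _) _))
    (fun α => mul_nonneg (pow_nonneg (Nn_nonneg _ _ _) _) (pow_nonneg (Nn_nonneg _ _ _) _))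
    (fun α => mul_nonneg (pow_nonneg (Nn_nonneg _ _ _) _) (pow_nonneg (Nn_nonneg _ _ _) _))
    (m := m) (by omega) (fun α => y1 _ _)
  have hpos : ∀ α : Om p k (k * n), 0 ≤ Nn a Y α ^ (sg k - sg i) * Nn a X α ^ (sg i) := fun α =>
    mul_nonneg (pow_nonneg (Nn_nonneg _ _ _) _) (pow_nonneg (Nn_nonneg _ _ _) _)
  refine le_of_pow_le_pow_left₀ (n := m + 1) (by omega) (by positivity) (hol.trans ?_)
  calc _ ≤ (B1 * (∑ c, U c) ^ (sg m) * (∑ c, T c) ^ (sg k - sg m)) *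
        (B2 * (∑ c, T c) ^ (sg i) * (∑ c, U c) ^ (sg k - sg i)) ^ m := by
        refine mul_le_mul H1 (pow_le_pow_left₀ (Finset.expect_nonneg fun α _ => hpos α) H2 m)
          (pow_nonneg (Finset.expect_nonneg fun α _ => hpos α) m) (by positivity)
    _ = (B1 * B2 ^ m) * ((∑ c, U c) ^ (sg k - sg (i + 1)) * (∑ c, T c) ^ (sg (i + 1))) ^ (m + 1) := by
        rw [y1]; ring
    _ ≤ B ^ (m + 1) * ((∑ c, U c) ^ (sg k - sg (i + 1)) * (∑ c, T c) ^ (sg (i + 1))) ^ (m + 1) := by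
        gcongr
    _ = _ := by ring

lemma two_holder {Ω : Type*} [Fintype Ω] [Nonempty Ω] (x y : Ω → ℝ) (hx : ∀ ω, 0 ≤ x ω) (hy : ∀ ω, 0 ≤ y ω)
    (i j : ℕ) {P Q : ℝ} (hP : 0 ≤ P) (hQ : 0 ≤ Q) (h1 : 𝔼 ω, x ω ^ (j + i) ≤ P ^ (j + i))
    (h2 : 𝔼 ω, y ω ^ (j + i) ≤ Q ^ (j + i)) : 𝔼 ω, y ω ^ j * x ω ^ i ≤ 2 * P ^ i * Q ^ j := by
  have hc : Continuous (fun e : ℝ => 2 * (P + e) ^ i * (Q + e) ^ j) := by fun_prop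
  have ht : Filter.Tendsto (fun e : ℝ => 2 * (P + e) ^ i * (Q + e) ^ j) (nhdsWithin 0 (Set.Ioi 0))
      (nhds (2 * P ^ i * Q ^ j)) := by
    have := (hc.tendsto 0).mono_left (nhdsWithin_le_nhds (s := Set.Ioi 0))
    simpa using this
  refine ge_of_tendsto ht ?_
  filter_upwards [self_mem_nhdsWithin] with e he
  have he : 0 < e := he
  have pt : ∀ u v : ℝ, 0 ≤ u → 0 ≤ v → v ^ j * u ^ i ≤ u ^ (j + i) + v ^ (j + i) := by
    intro u v hu hv
    rcases le_total u v with h | h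
    · calc v ^ j * u ^ i ≤ v ^ j * v ^ i := by gcongr
        _ = v ^ (j + i) := by rw [pow_add]
        _ ≤ _ := by have : 0 ≤ u ^ (j + i) := by positivity
                    linarith
    · calc v ^ j * u ^ i ≤ u ^ j * u ^ i := by gcongr
        _ = u ^ (j + i) := by rw [pow_add]
        _ ≤ _ := by have : 0 ≤ v ^ (j + i) := by positivity
                    linarith
  have hPe : 0 < P + e := by linarith
  have hQe : 0 < Q + e := by linarith
  calc 𝔼 ω, y ω ^ j * x ω ^ i
      ≤ 𝔼 ω, ((P + e) ^ i * (Q + e) ^ j) * ((x ω ^ (j + i)) / (P + e) ^ (j + i) + (y ω ^ (j + i)) / (Q + e) ^ (j + i)) := by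
        refine Finset.expect_le_expect fun ω _ => ?_
        have := pt (x ω / (P + e)) (y ω / (Q + e)) (div_nonneg (hx ω) hPe.le) (div_nonneg (hy ω) hQe.le)
        rw [← div_pow, ← div_pow]
        calc y ω ^ j * x ω ^ i = ((P + e) ^ i * (Q + e) ^ j) * ((y ω / (Q + e)) ^ j * (x ω / (P + e)) ^ i) := by
              rw [div_pow, div_pow]; field_simp
          _ ≤ _ := by gcongr
    _ = ((P + e) ^ i * (Q + e) ^ j) * ((𝔼 ω, x ω ^ (j + i)) / (P + e) ^ (j + i) + (𝔼 ω, y ω ^ (j + i)) / (Q + e) ^ (j + i)) := by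
        rw [← Finset.mul_expect, Finset.expect_add_distrib, Finset.expect_div, Finset.expect_div]
    _ ≤ ((P + e) ^ i * (Q + e) ^ j) * (1 + 1) := by
        gcongr
        · rw [div_le_one (by positivity)]
          exact h1.trans (pow_le_pow_left₀ hP (by linarith) _)
        · rw [div_le_one (by positivity)]
          exact h2.trans (pow_le_pow_left₀ hQ (by linarith) _)
    _ = _ := by ring

lemma BP_triv {l n b0 : ℕ} {D D' : ℝ} (hk : 1 ≤ k) (hlk : l ≤ k) (hbn : b0 ≤ n) (hD0 : 0 ≤ D) (hD0' : 0 ≤ D')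
    (hD : Dec p k n D) (hD' : Dec p k (n - b0) D') :
    BP p k l n 0 b0 (2 * D ^ (sg l) * D' ^ (sg k - sg l)) := by
  intro a X Y ξ η hξ hX hY T U hT hU h1 h2
  have h3 : 0 ≤ ∑ c, T c := Finset.sum_nonneg fun c _ => hT c
  have h4 : 0 ≤ ∑ c, U c := Finset.sum_nonneg fun c _ => hU c
  have hs : sg k - sg l + sg l = sg k := Nat.sub_add_cancel (sg_mono hlk)
  have H1 := hD a X T hT (by simpa using h1)
  have H2 := rescale hk hbn hD' hD0' a Y η hY U hU (by simpa using h2)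
  simp only [one_mul] at H1 H2
  have := two_holder (Ω := Om p k (k * n)) (fun α => Nn a X α) (fun α => Nn a Y α)
    (fun α => Nn_nonneg _ _ _) (fun α => Nn_nonneg _ _ _) (sg l) (sg k - sg l)
    (P := D * ∑ c, T c) (Q := D' * ∑ c, U c) (by positivity) (by positivity)
    (by rw [hs]; exact H1) (by rw [hs]; exact H2)
  refine this.trans (le_of_eq ?_)
  rw [mul_pow, mul_pow]; ring

end
end VMV

namespace VMV
open Finset
section
variable {p : ℕ} [hp : Fact p.Prime] {k : ℕ}

def HD (p : ℕ) [Fact p.Prime] (k : ℕ) (x : ℝ) : Prop :=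
  ∃ C : ℝ, 1 ≤ C ∧ ∀ n : ℕ, ∃ D : ℝ, 0 ≤ D ∧ Dec p k n D ∧ D ^ (sg k) = C * (p : ℝ) ^ (x * n)

def SS (p : ℕ) [Fact p.Prime] (k : ℕ) (x : ℝ) (l : ℕ) (c : ℝ) (K : ℕ) : Prop :=
  ∀ ε : ℝ, 0 < ε → ∃ C : ℝ, 1 ≤ C ∧ ∀ n a b : ℕ, 1 ≤ a → 1 ≤ b → l * a ≤ (k - l + 1) * b → K * b ≤ n →
    BP p k l n a b (C * (p : ℝ) ^ (x * n - c * b + ε * n))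

lemma SS_mono {x c : ℝ} {l K K' : ℕ} (h : SS p k x l c K) (hK : K ≤ K') : SS p k x l c K' := by
  intro ε hε
  obtain ⟨C, hC, H⟩ := h ε hε
  exact ⟨C, hC, fun n a b h1 h2 h3 h4 => H n a b h1 h2 h3 ((Nat.mul_le_mul_right _ hK).trans h4)⟩

lemma rp_le {x y : ℝ} (h : x ≤ y) : (p : ℝ) ^ x ≤ (p : ℝ) ^ y :=
  Real.rpow_le_rpow_of_exponent_le one_lt_p.le h

lemma rp_pos (x : ℝ) : 0 < (p : ℝ) ^ x := Real.rpow_pos_of_pos pp0 _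

lemma HD_triv (hk : 1 ≤ k) {x : ℝ} (hx : 0 ≤ x) (h : HD p k x) : ∃ C : ℝ, 1 ≤ C ∧ ∀ l n : ℕ, l ≤ k →
    BP p k l n 0 0 (C * (p : ℝ) ^ (x * n)) := by
  obtain ⟨C, hC, H⟩ := h
  refine ⟨2 * C, by linarith, fun l n hl => ?_⟩
  obtain ⟨D, hD0, hD, hDs⟩ := H n
  refine BP_mono (BP_triv hk hl (Nat.zero_le n) hD0 hD0 hD (by simpa using hD)) le_rfl le_rfl ?_
  rw [mul_assoc, ← pow_add, Nat.add_sub_cancel' (sg_mono hl), hDs, mul_assoc]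

lemma SS_zero (hk : 1 ≤ k) {x : ℝ} (hx : 0 ≤ x) (h : HD p k x) : SS p k x 0 x 1 := by
  intro ε hε
  obtain ⟨C, hC, H⟩ := h
  refine ⟨2 * C, by linarith, fun n a b h1 h2 h3 h4 => ?_⟩
  have hbn : b ≤ n := by omega
  obtain ⟨D, hD0, hD, hDs⟩ := H n
  obtain ⟨D', hD0', hD', hDs'⟩ := H (n - b)
  refine BP_mono (BP_triv hk (Nat.zero_le k) hbn hD0 hD0' hD hD') (Nat.zero_le _) le_rfl ?_
  have : sg 0 = 0 := rfl
  rw [this, pow_zero, mul_one, Nat.sub_zero, hDs', mul_assoc]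
  have : (p : ℝ) ^ (x * ((n - b : ℕ) : ℝ)) ≤ (p : ℝ) ^ (x * n - x * b + ε * n) := by
    apply rp_le
    push_cast [hbn]
    have : 0 ≤ ε * n := by positivity
    linarith
  gcongr

lemma SS_triv (hk : 1 ≤ k) {x : ℝ} (hx : 0 ≤ x) (h : HD p k x) {l : ℕ} (hl : l ≤ k) (K : ℕ) : SS p k x l 0 K := by
  intro ε hε
  obtain ⟨C, hC, H⟩ := HD_triv hk hx h
  refine ⟨C, hC, fun n a b h1 h2 h3 h4 => BP_mono (H l n hl) (Nat.zero_le _) (Nat.zero_le _) ?_⟩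
  have : (p : ℝ) ^ (x * n) ≤ (p : ℝ) ^ (x * n - 0 * b + ε * n) := by
    apply rp_le
    have : 0 ≤ ε * n := by positivity
    linarith
  gcongr

lemma SS_step (hkp : k < p) {x : ℝ} (hx : 0 ≤ x) (h : HD p k x) {l : ℕ} (hl : 1 ≤ l) (hlk : l < k)
    (hdec : HDec p l) {c1 c2 : ℝ} (hc1 : 0 ≤ c1) (hc2 : 0 ≤ c2) {K : ℕ} (hK : 1 ≤ K)
    (h1 : SS p k x (k - l) c1 K) (h2 : SS p k x (l - 1) c2 K) :
    SS p k x l (c1 / l + c2 * ((k - l : ℕ) : ℝ) / ((k - l : ℕ) + 1 : ℝ)) (k * K) := by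
  intro ε hε
  set c := c1 / l + c2 * ((k - l : ℕ) : ℝ) / ((k - l : ℕ) + 1 : ℝ) with hc
  have hl0 : (0 : ℝ) < l := by exact_mod_cast hl
  have hc0 : 0 ≤ c := by positivity
  set ε' := ε / (sg l + 1) with hε'
  have hε0 : 0 < ε' := by positivity
  obtain ⟨C0, hC0, H0⟩ := HD_triv (by omega) hx h
  obtain ⟨CL, hCL, HL⟩ := lemL hl hlk.le hkp hdec hε0
  obtain ⟨C1, hC1, H1⟩ := h1 ε' hε0
  obtain ⟨C2, hC2, H2⟩ := h2 ε' hε0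
  set C3 := C1 * (p : ℝ) ^ c1 * C2 with hC3
  have hpc1 : 1 ≤ (p : ℝ) ^ c1 := Real.one_le_rpow one_lt_p.le hc1
  have hpck : 1 ≤ (p : ℝ) ^ (c * k) := Real.one_le_rpow one_lt_p.le (by positivity)
  have hC31 : 1 ≤ C3 := by
    have := one_le_mul_of_one_le_of_one_le (one_le_mul_of_one_le_of_one_le hC1 hpc1) hC2
    exact this
  have hCLs : 1 ≤ CL ^ (sg l) := one_le_pow₀ hCL
  refine ⟨C0 * (p : ℝ) ^ (c * k) + CL ^ (sg l) * C3, ?_, ?_⟩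
  · have := one_le_mul_of_one_le_of_one_le hC0 hpck
    have := one_le_mul_of_one_le_of_one_le hCLs hC31
    linarith
  intro n a b ha hb hab hKb
  have hKb' : K * (k * b) ≤ n := by rw [← mul_assoc, mul_comm K]; exact hKb
  have hkb : k * b ≤ n := le_trans (Nat.le_mul_of_pos_left _ hK) hKb'
  set E := (p : ℝ) ^ (x * n - c * b + ε * n) with hE
  have hEpos : 0 < E := rp_pos _
  by_cases hbk : b < k
  · refine BP_mono (H0 l n hlk.le) (Nat.zero_le _) (Nat.zero_le _) ?_
    have : (p : ℝ) ^ (x * n) ≤ (p : ℝ) ^ (c * k) * E := by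
      rw [hE, ← Real.rpow_add pp0]
      apply rp_le
      have h5 : (b : ℝ) ≤ k := by exact_mod_cast hbk.le
      have h6 : c * b ≤ c * k := by gcongr
      have : 0 ≤ ε * n := by positivity
      linarith
    calc C0 * (p : ℝ) ^ (x * n) ≤ C0 * ((p : ℝ) ^ (c * k) * E) := by gcongr
      _ ≤ (C0 * (p : ℝ) ^ (c * k) + CL ^ (sg l) * C3) * E := by
        have : 0 ≤ CL ^ (sg l) * C3 * E := by positivity
        linarith
  push Not at hbk
  set m := k - l with hm
  set a' := (m + 1) * b / l with ha'
  have hla' : l * a' ≤ (m + 1) * b := Nat.mul_div_le _ _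
  have hla'2 : (m + 1) * b < l * a' + l := by
    have := Nat.lt_mul_div_succ ((m + 1) * b) (show 0 < l by omega)
    rw [← ha'] at this; nlinarith
  have haa : a ≤ a' := by
    rw [ha', Nat.le_div_iff_mul_le (by omega)]; linarith [mul_comm a l]
  have hm1k : (m + 1) * b ≤ k * b := Nat.mul_le_mul_right _ (by omega)
  have ha'k : a' ≤ k * b := by
    have : 1 * a' ≤ l * a' := Nat.mul_le_mul_right _ hl
    omega
  have hKa' : K * a' ≤ n := (Nat.mul_le_mul_left _ ha'k).trans hKb'
  have B1 := H1 n b a' hb (by omega) (by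
    rw [show k - m + 1 = l + 1 by omega]
    have : (m + 1) * b = m * b + b := by ring
    have : (l + 1) * a' = l * a' + a' := by ring
    omega) hKa'
  have B2 := H2 n a' b (by omega) hb (by
    have e1 : (l - 1) * a' ≤ l * a' := Nat.mul_le_mul_right _ (by omega)
    have e2 : (m + 1) * b ≤ (k - (l - 1) + 1) * b := Nat.mul_le_mul_right _ (by omega)
    omega) (le_trans (Nat.mul_le_mul_left _ (Nat.le_mul_of_pos_left _ (by omega))) hKb')
  have B3 : BP p k l n a' b (C3 * (p : ℝ) ^ (x * n - c * b + ε' * n)) := by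
    refine BP_holder hl hlk (by positivity) (by positivity) (by positivity) ?_ B1 B2
    rw [mul_pow, mul_pow, ← Real.rpow_mul_natCast pp0.le, ← Real.rpow_mul_natCast pp0.le]
    have e1 : C1 * (p : ℝ) ^ c1 * C2 ^ m ≤ C3 ^ (m + 1) := by
      have : C1 * (p : ℝ) ^ c1 ≤ C3 := le_mul_of_one_le_right (by positivity) hC2
      have : C2 ≤ C3 := le_mul_of_one_le_left (by positivity)
        (one_le_mul_of_one_le_of_one_le hC1 hpc1)
      rw [pow_succ, mul_comm (C3 ^ m)]
      gcongr
    have e2 : (x * n - c1 * a' + ε' * n) + (x * n - c2 * b + ε' * n) * m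
        ≤ c1 + (x * n - c * b + ε' * n) * ((m + 1 : ℕ) : ℝ) := by
      have e3 : c * ((m + 1 : ℕ) : ℝ) = c1 * ((m + 1) / l) + c2 * m := by
        rw [hc]; push_cast; field_simp
      have e4 : ((m : ℝ) + 1) / l * b ≤ a' + 1 := by
        have : ((m : ℝ) + 1) * b ≤ l * a' + l := by exact_mod_cast hla'2.le
        rw [div_mul_eq_mul_div, div_le_iff₀ hl0]; linarith
      have e5 : c1 * (((m : ℝ) + 1) / l * b) ≤ c1 * (a' + 1) := by gcongr
      have e6 : (x * n - c * b + ε' * n) * ((m + 1 : ℕ) : ℝ)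
          = (x * n + ε' * n) * (m + 1) - (c * ((m + 1 : ℕ) : ℝ)) * b := by push_cast; ring
      rw [e6, e3]
      nlinarith
    calc C1 * (p : ℝ) ^ (x * n - c1 * a' + ε' * n) * (C2 ^ m * (p : ℝ) ^ ((x * n - c2 * b + ε' * n) * m))
        = C1 * C2 ^ m * (p : ℝ) ^ ((x * n - c1 * a' + ε' * n) + (x * n - c2 * b + ε' * n) * m) := by
          rw [Real.rpow_add pp0 (x * n - c1 * a' + ε' * n)]; ring
      _ ≤ C1 * C2 ^ m * (p : ℝ) ^ (c1 + (x * n - c * b + ε' * n) * ((m + 1 : ℕ) : ℝ)) := by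
          gcongr; exact one_lt_p.le
      _ = C1 * (p : ℝ) ^ c1 * C2 ^ m * (p : ℝ) ^ ((x * n - c * b + ε' * n) * ((m + 1 : ℕ) : ℝ)) := by
          rw [Real.rpow_add pp0]; ring
      _ ≤ _ := by gcongr
  refine BP_mono (BP_improve hl ha haa (ha'k.trans hkb) (by positivity)
    (W := CL * (p : ℝ) ^ (ε' * a')) (by positivity) ?_ B3) le_rfl le_rfl ?_
  · intro w X Y η e hX hY
    refine HL (k * n) a' b w X Y η e hX hY hla' ?_
    have : n ≤ k * n := Nat.le_mul_of_pos_left _ (by omega)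
    omega
  · have ha'n : (a' : ℝ) ≤ n := by exact_mod_cast ha'k.trans hkb
    rw [mul_pow, ← Real.rpow_mul_natCast pp0.le]
    calc CL ^ sg l * (p : ℝ) ^ (ε' * a' * (sg l : ℝ)) * (C3 * (p : ℝ) ^ (x * n - c * b + ε' * n))
        = CL ^ sg l * C3 * (p : ℝ) ^ (ε' * a' * (sg l : ℝ) + (x * n - c * b + ε' * n)) := by
          rw [Real.rpow_add pp0 (ε' * a' * (sg l : ℝ))]; ring
      _ ≤ CL ^ sg l * C3 * E := by
          have : ε' * a' * (sg l : ℝ) + (x * n - c * b + ε' * n) ≤ x * n - c * b + ε * n := by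
            have e1 : ε' * a' * (sg l : ℝ) ≤ ε' * n * (sg l : ℝ) := by gcongr
            have e2 : ε' * (sg l + 1) = ε := by rw [hε']; field_simp
            have e3 : ε * n = ε' * n * sg l + ε' * n := by rw [← e2]; ring
            linarith
          have := rp_le (p := p) this
          gcongr
      _ ≤ _ := by
        have : 0 ≤ C0 * (p : ℝ) ^ (c * k) * E := by positivity
        linarith

lemma SS_iter (hk : 2 ≤ k) (hkp : k < p) {x : ℝ} (hx : 0 ≤ x) (h : HD p k x)
    (hdec : ∀ l, 1 ≤ l → l < k → HDec p l) (r : ℕ) :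
    ∃ c : ℕ → ℝ, c 0 = x ∧ (∀ l, 0 ≤ c l) ∧
      ∑ i ∈ range (k - 1), c (i + 1) = r * (x * ((k : ℝ) - 1) / k) ∧
      ∀ l, l < k → SS p k x l (c l) (k ^ r) := by
  have hk1 : 1 ≤ k := by omega
  induction r with
  | zero =>
    refine ⟨fun l => if l = 0 then x else 0, by simp, fun l => by dsimp only; split_ifs <;> simp [hx], by simp, ?_⟩
    intro l hl
    dsimp only
    split_ifs with h0
    · subst h0; simpa using SS_zero hk1 hx h
    · exact SS_triv hk1 hx h hl.le _
  | succ r ih =>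
    obtain ⟨c, hc0, hc, hsum, hS⟩ := ih
    refine ⟨fun l => if l = 0 then x else if l < k then
      c (k - l) / l + c (l - 1) * ((k - l : ℕ) : ℝ) / ((k - l : ℕ) + 1 : ℝ) else 0, by simp, ?_, ?_, ?_⟩
    · intro l
      dsimp only
      split_ifs
      · exact hx
      · have := hc (k - l); have := hc (l - 1); positivity
      · exact le_rfl
    · obtain ⟨K, rfl⟩ : ∃ K, k = K + 1 := ⟨k - 1, by omega⟩
      simp only [Nat.add_sub_cancel] at *
      have e1 : ∀ i ∈ range K, (if i + 1 = 0 then x else if i + 1 < K + 1 then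
          c (K + 1 - (i + 1)) / ((i + 1 : ℕ) : ℝ) + c i * ((K + 1 - (i + 1) : ℕ) : ℝ) / ((K + 1 - (i + 1) : ℕ) + 1 : ℝ) else 0)
          = c (K - i) / ((i : ℝ) + 1) + c i * ((K : ℝ) - i) / ((K : ℝ) - i + 1) := by
        intro i hi
        rw [Finset.mem_range] at hi
        rw [if_neg (by omega), if_pos (by omega)]
        rw [show K + 1 - (i + 1) = K - i by omega]
        push_cast [hi.le]; rfl
      rw [Finset.sum_congr rfl e1, Finset.sum_add_distrib]
      have e2 : ∑ i ∈ range K, c (K - i) / ((i : ℝ) + 1) = ∑ i ∈ range K, c (i + 1) / ((K : ℝ) - i) := by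
        rw [← Finset.sum_range_reflect]
        refine Finset.sum_congr rfl fun i hi => ?_
        rw [Finset.mem_range] at hi
        have e3 : ((K - 1 - i : ℕ) : ℝ) = (K : ℝ) - 1 - i := by
          rw [Nat.cast_sub (by omega), Nat.cast_sub (by omega)]; simp
        rw [e3, show K - (K - 1 - i) = i + 1 by omega]
        congr 1; ring
      have e4 : ∑ i ∈ range K, c i * ((K : ℝ) - i) / ((K : ℝ) - i + 1)
          = x * K / (K + 1) + ∑ i ∈ range K, c (i + 1) * ((K : ℝ) - i - 1) / ((K : ℝ) - i) := by
        have h5 := Finset.sum_range_succ (fun i : ℕ => c i * ((K : ℝ) - i) / ((K : ℝ) - i + 1)) K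
        have h6 := Finset.sum_range_succ' (fun i : ℕ => c i * ((K : ℝ) - i) / ((K : ℝ) - i + 1)) K
        rw [h5] at h6
        simp only [sub_self, mul_zero, zero_div, add_zero, Nat.cast_zero, sub_zero, hc0] at h6
        rw [h6, add_comm]
        congr 1
        refine Finset.sum_congr rfl fun i _ => ?_
        push_cast
        rw [show (K : ℝ) - (i + 1) + 1 = K - i by ring, show (K : ℝ) - (i + 1) = K - i - 1 by ring]
      rw [e2, e4, add_left_comm, ← Finset.sum_add_distrib]
      have e5 : ∑ i ∈ range K, (c (i + 1) / ((K : ℝ) - i) + c (i + 1) * ((K : ℝ) - i - 1) / ((K : ℝ) - i))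
          = ∑ i ∈ range K, c (i + 1) := by
        refine Finset.sum_congr rfl fun i hi => ?_
        rw [Finset.mem_range] at hi
        have : (0 : ℝ) < (K : ℝ) - i := by
          have : (i : ℝ) < K := by exact_mod_cast hi
          linarith
        field_simp; ring
      rw [e5, hsum]
      push_cast; ring
    · intro l hl
      dsimp only
      split_ifs with h0
      · subst h0
        exact SS_mono (SS_zero hk1 hx h) (Nat.one_le_pow _ _ (by omega))
      · rw [pow_succ, mul_comm (k ^ r)]
        exact SS_step hkp hx h (by omega) hl (hdec l (by omega) hl) (hc _) (hc _)
          (Nat.one_le_pow _ _ (by omega)) (hS _ (by omega)) (hS _ (by omega))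
end
end VMV

namespace VMV
open Finset
section
variable {p : ℕ} [hp : Fact p.Prime] {k : ℕ}

lemma BP_improveY {l n a0 b0 b' : ℕ} {B : ℝ} (hlk : l < k) (hb0 : 1 ≤ b0) (hbb : b0 ≤ b') (hbn : b' ≤ n)
    (hB : 0 ≤ B)
    (h : BP p k l n a0 b' B) : BP p k l n a0 b0 (((p : ℝ) ^ b') ^ (sg k - sg l) * B) := by
  intro a X Y ξ η hξ hX hY T U hT hU h1 h2
  have hsl : 1 ≤ sg k - sg l := by
    have e1 := two_sg k; have e2 := two_sg l
    have : l * (l + 1) < k * (k + 1) := Nat.mul_lt_mul_of_lt_of_le hlk (by omega) (by omega)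
    omega
  have h3 : 0 ≤ ∑ c, T c := Finset.sum_nonneg fun c _ => hT c
  have h4 : 0 ≤ ∑ c, U c := Finset.sum_nonneg fun c _ => hU c
  obtain ⟨lam, hlam0, hlam⟩ := exists_root hsl (x := B * (∑ c, T c) ^ (sg l)) (by positivity)
  have := WD_trivial (p := p) (k := k) (M := k * n) (fun α => Nn a X α ^ (sg l))
    (fun α => pow_nonneg (Nn_nonneg _ _ _) _) hsl a Y b'
    (fun c' => lam * ∑ c, if red p hbn c = c' then U c else 0)
    (fun c' => mul_nonneg hlam0 (Finset.sum_nonneg fun c _ => by split_ifs <;> simp [hU]))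
    (fun c' => by
      rcases (cls p Y b' c').eq_empty_or_nonempty with hemp | ⟨η', hη'⟩
      · rw [hemp]
        simp only [Nn_empty, zero_pow (show sg k - sg l ≠ 0 by omega), mul_zero, Finset.expect_const_zero]
        exact pow_nonneg (mul_nonneg hlam0 (Finset.sum_nonneg fun c _ => by split_ifs <;> simp [hU])) _
      · rw [mem_cls] at hη'
        have := (h a X (cls p Y b' c') ξ η' ?_ hX ?_ T
          (fun c => if red p hbn c = c' then U c else 0) hT
          (fun c => by split_ifs <;> simp [hU]) h1 ?_)
        · simp only [mul_comm (Nn a X _ ^ _)]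
          refine this.trans ?_
          rw [mul_pow, hlam]
        · intro hd
          have h5 : (p : ℤ) ∣ η' - η := (dvd_pow_self _ (by omega)).trans (hY η' hη'.1)
          have h6 := dvd_add hd h5
          rw [show ξ - η' + (η' - η) = ξ - η by ring] at h6
          exact hξ h6
        · intro x hx
          rw [mem_cls] at hx
          have := (ZMod.intCast_eq_intCast_iff_dvd_sub η' x (p ^ b')).1 (by rw [hη'.2, hx.2])
          exact_mod_cast this
        · intro c
          rw [cls_cls hbn]
          split_ifs
          · exact h2 c
          · simp [Nn_empty, show sg k ≠ 0 by omega])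
  simp only [mul_comm (Nn a X _ ^ _)] at this
  refine this.trans ?_
  rw [← Finset.mul_sum, Finset.sum_comm]
  simp only [Finset.sum_ite_eq, Finset.mem_univ, if_true, mul_pow, hlam]
  apply le_of_eq; ring

lemma bil (hk : 2 ≤ k) (hkp : k < p) (hdec : ∀ l, 1 ≤ l → l < k → HDec p l) {x0 : ℝ} (hx0 : 0 < x0) :
    ∃ δ : ℝ, 0 < δ ∧ ∀ x, x0 ≤ x → HD p k x → ∃ l, 1 ≤ l ∧ l < k ∧ ∃ C : ℝ, 1 ≤ C ∧
      ∀ n : ℕ, BP p k l n 1 1 (C * (p : ℝ) ^ ((x - δ) * n)) := by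
  have hkR : (0 : ℝ) < k := by exact_mod_cast (by omega : 0 < k)
  obtain ⟨r, hr⟩ := exists_nat_ge ((sg k + 1) * k / x0)
  set K := k ^ r with hK
  have hK1 : 1 ≤ K := Nat.one_le_pow _ _ (by omega)
  have hKR : (1 : ℝ) ≤ K := by exact_mod_cast hK1
  refine ⟨1 / (2 * K), by positivity, fun x hx h => ?_⟩
  have hx0' : 0 ≤ x := by linarith
  obtain ⟨c, hc0, hc, hsum, hS⟩ := SS_iter hk hkp hx0' h hdec r
  obtain ⟨i, hi, hci⟩ : ∃ i ∈ range (k - 1), (sg k + 1 : ℝ) ≤ c (i + 1) := by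
    apply Finset.exists_le_of_sum_le (Finset.nonempty_range_iff.2 (by omega))
    rw [hsum, Finset.sum_const, Finset.card_range, nsmul_eq_mul, Nat.cast_sub (by omega)]
    have e1 : (sg k + 1 : ℝ) * k ≤ r * x := by
      have := (div_le_iff₀ hx0).1 hr
      have : (r : ℝ) * x0 ≤ r * x := by gcongr
      linarith
    have e2 : (sg k + 1 : ℝ) ≤ r * x / k := by rw [le_div_iff₀ hkR]; exact e1
    have e3 : (0 : ℝ) ≤ (k : ℝ) - 1 := by
      have : (1 : ℝ) ≤ k := by exact_mod_cast (by omega : 1 ≤ k)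
      linarith
    calc (((k : ℝ) - ((1 : ℕ) : ℝ)) * (sg k + 1)) = ((k : ℝ) - 1) * (sg k + 1) := by simp
      _ ≤ ((k : ℝ) - 1) * (r * x / k) := by gcongr
      _ = _ := by ring
  rw [Finset.mem_range] at hi
  set l := i + 1 with hl
  refine ⟨l, by omega, by omega, ?_⟩
  obtain ⟨C1, hC1, H1⟩ := hS l (by omega) (1 / (4 * K)) (by positivity)
  obtain ⟨C0, hC0, H0⟩ := HD_triv (by omega) hx0' h
  refine ⟨C0 * (p : ℝ) ^ (k : ℝ) + C1 * p, ?_, fun n => ?_⟩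
  · have := one_le_mul_of_one_le_of_one_le hC0 (Real.one_le_rpow (one_lt_p (p := p)).le hkR.le)
    have h3 : 0 ≤ C1 * p := by have := pp0 (p := p); positivity
    linarith
  have hppos := pp0 (p := p)
  have hE := rp_pos (p := p) ((x - 1 / (2 * K)) * n)
  by_cases hn : n < K * k
  · refine BP_mono (H0 l n (by omega)) (Nat.zero_le _) (Nat.zero_le _) ?_
    have e1 : (p : ℝ) ^ (x * n) ≤ (p : ℝ) ^ (k : ℝ) * (p : ℝ) ^ ((x - 1 / (2 * K)) * n) := by
      rw [← Real.rpow_add pp0]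
      apply rp_le
      have h4 : (n : ℝ) ≤ K * k := by exact_mod_cast hn.le
      have : 1 / (2 * (K : ℝ)) * n ≤ k := by
        rw [div_mul_eq_mul_div, div_le_iff₀ (by positivity)]
        nlinarith
      linarith
    calc C0 * (p : ℝ) ^ (x * n) ≤ C0 * ((p : ℝ) ^ (k : ℝ) * (p : ℝ) ^ ((x - 1 / (2 * K)) * n)) := by gcongr
      _ ≤ _ := by
        have : 0 ≤ C1 * p * (p : ℝ) ^ ((x - 1 / (2 * K)) * n) := by positivity
        linarith
  push Not at hn
  set b := n / K with hb
  have hKb : K * b ≤ n := Nat.mul_div_le _ _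
  have hbk : k ≤ b := by rw [hb, Nat.le_div_iff_mul_le (by omega)]; linarith [mul_comm k K]
  have hbK : n < K * b + K := by
    have := Nat.lt_mul_div_succ n (show 0 < K by omega)
    rw [← hb] at this; linarith
  have hbn : b ≤ n := le_trans (Nat.le_mul_of_pos_left _ hK1) hKb
  have B1 := H1 n 1 b le_rfl (by omega) (by
    have : 1 * b ≤ (k - l + 1) * b := Nat.mul_le_mul_right _ (by omega)
    omega) hKb
  refine BP_mono (BP_improveY (by omega) le_rfl (show 1 ≤ b by omega) hbn (by positivity) B1) le_rfl le_rfl ?_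
  have e2 : ((p : ℝ) ^ b) ^ (sg k - sg l) ≤ (p : ℝ) ^ ((b : ℝ) * sg k) := by
    rw [← pow_mul, ← Real.rpow_natCast]
    apply rp_le
    have h7 : b * (sg k - sg l) ≤ b * sg k := Nat.mul_le_mul_left _ (Nat.sub_le _ _)
    exact_mod_cast h7
  have hKb2 : (n : ℝ) ≤ K * b + K := by exact_mod_cast hbK.le
  have e3 : (b : ℝ) * sg k + (x * n - c l * b + 1 / (4 * K) * n) ≤ 1 + (x - 1 / (2 * K)) * n := by
    have h8 : (sg k + 1 : ℝ) * b ≤ c l * b := by gcongr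
    have h9 : (n : ℝ) / K ≤ b + 1 := by rw [div_le_iff₀ (by positivity)]; linarith
    have h10 : 1 / (4 * (K : ℝ)) * n = (n / K) / 4 := by field_simp
    have h11 : 1 / (2 * (K : ℝ)) * n = (n / K) / 2 := by field_simp
    have h12 : 0 ≤ (n : ℝ) / K := by positivity
    rw [sub_mul, h10, h11]
    linarith
  calc ((p : ℝ) ^ b) ^ (sg k - sg l) * (C1 * (p : ℝ) ^ (x * n - c l * b + 1 / (4 * K) * n))
      ≤ (p : ℝ) ^ ((b : ℝ) * sg k) * (C1 * (p : ℝ) ^ (x * n - c l * b + 1 / (4 * K) * n)) := by gcongr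
    _ = C1 * (p : ℝ) ^ ((b : ℝ) * sg k + (x * n - c l * b + 1 / (4 * K) * n)) := by
        rw [Real.rpow_add pp0 ((b : ℝ) * sg k)]; ring
    _ ≤ C1 * (p : ℝ) ^ (1 + (x - 1 / (2 * K)) * n) := by
        have := rp_le (p := p) e3
        gcongr
    _ = C1 * p * (p : ℝ) ^ ((x - 1 / (2 * K)) * n) := by
        rw [Real.rpow_add pp0, Real.rpow_one]; ring
    _ ≤ _ := by
        have : 0 ≤ C0 * (p : ℝ) ^ (k : ℝ) * (p : ℝ) ^ ((x - 1 / (2 * K)) * n) := by positivity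
        linarith

lemma bn_pt {ι : Type*} [Fintype ι] [DecidableEq ι] [Nonempty ι] (u : ι → ℝ) (hu : ∀ c, 0 ≤ u c) (i j : ℕ) {τ : ℝ} (hτ : 0 < τ) :
    (∑ c, u c) ^ (j + i) ≤ (1 + τ) ^ (j + i) * ∑ c, u c ^ (j + i) +
      ((Fintype.card ι : ℝ) ^ (j + i) * (Fintype.card ι / τ) ^ j) *
        ∑ c, ∑ c', if c = c' then 0 else u c' ^ j * u c ^ i := by
  obtain ⟨c0, -, hc0⟩ := Finset.exists_max_image univ u Finset.univ_nonempty
  have hcard : (0 : ℝ) < Fintype.card ι := by exact_mod_cast Fintype.card_pos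
  have h1 : 0 ≤ ∑ c, u c := Finset.sum_nonneg fun c _ => hu c
  have h2 : ∀ c c', (0 : ℝ) ≤ if c = c' then 0 else u c' ^ j * u c ^ i := fun c c' => by
    split_ifs
    · exact le_rfl
    · have := hu c; have := hu c'; positivity
  have h3 : u c0 ^ (j + i) ≤ ∑ c, u c ^ (j + i) :=
    Finset.single_le_sum (f := fun c => u c ^ (j + i)) (fun c _ => pow_nonneg (hu c) _) (Finset.mem_univ c0)
  have h4 : 0 ≤ ∑ c, ∑ c', if c = c' then 0 else u c' ^ j * u c ^ i :=
    Finset.sum_nonneg fun c _ => Finset.sum_nonneg fun c' _ => h2 c c'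
  have h5 : 0 ≤ ∑ c, u c ^ (j + i) := Finset.sum_nonneg fun c _ => pow_nonneg (hu c) _
  by_cases hcase : ∀ c, c ≠ c0 → u c ≤ τ / Fintype.card ι * u c0
  · have h6 : ∑ c, u c ≤ (1 + τ) * u c0 := by
      rw [← Finset.add_sum_erase _ _ (Finset.mem_univ c0)]
      have : ∑ c ∈ univ.erase c0, u c ≤ ∑ c ∈ univ.erase c0, τ / Fintype.card ι * u c0 :=
        Finset.sum_le_sum fun c hc => hcase c (Finset.ne_of_mem_erase hc)
      rw [Finset.sum_const, nsmul_eq_mul] at this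
      have h7 : ((univ.erase c0).card : ℝ) ≤ Fintype.card ι := by
        exact_mod_cast Finset.card_le_univ _
      have h8 : ((univ.erase c0).card : ℝ) * (τ / Fintype.card ι * u c0) ≤ Fintype.card ι * (τ / Fintype.card ι * u c0) := by
        have := hu c0
        gcongr
      have h9 : (Fintype.card ι : ℝ) * (τ / Fintype.card ι * u c0) = τ * u c0 := by field_simp
      linarith
    calc (∑ c, u c) ^ (j + i) ≤ ((1 + τ) * u c0) ^ (j + i) := by gcongr
      _ = (1 + τ) ^ (j + i) * u c0 ^ (j + i) := mul_pow _ _ _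
      _ ≤ (1 + τ) ^ (j + i) * ∑ c, u c ^ (j + i) := by gcongr
      _ ≤ _ := by
        have : 0 ≤ ((Fintype.card ι : ℝ) ^ (j + i) * (Fintype.card ι / τ) ^ j) *
          ∑ c, ∑ c', if c = c' then 0 else u c' ^ j * u c ^ i := by positivity
        linarith
  · push Not at hcase
    obtain ⟨c1, hc1, hlt⟩ := hcase
    have h6 : ∑ c, u c ≤ Fintype.card ι * u c0 := by
      have : ∑ c, u c ≤ ∑ c : ι, u c0 := Finset.sum_le_sum fun c hc => hc0 c hc
      simpa using this
    have h7 : u c0 ≤ Fintype.card ι / τ * u c1 := by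
      have : u c0 = Fintype.card ι / τ * (τ / Fintype.card ι * u c0) := by field_simp
      rw [this]
      gcongr
    have h8 : u c1 ^ j * u c0 ^ i ≤ ∑ c, ∑ c', if c = c' then 0 else u c' ^ j * u c ^ i := by
      refine le_trans ?_ (Finset.single_le_sum (f := fun c => ∑ c', if c = c' then 0 else u c' ^ j * u c ^ i)
        (fun c _ => Finset.sum_nonneg fun c' _ => h2 c c') (Finset.mem_univ c0))
      refine le_trans ?_ (Finset.single_le_sum (f := fun c' => if c0 = c' then 0 else u c' ^ j * u c0 ^ i)
        (fun c' _ => h2 c0 c') (Finset.mem_univ c1))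
      rw [if_neg (Ne.symm hc1)]
    have hu0 := hu c0
    have hu1 := hu c1
    calc (∑ c, u c) ^ (j + i) ≤ (Fintype.card ι * u c0) ^ (j + i) := by gcongr
      _ = (Fintype.card ι : ℝ) ^ (j + i) * (u c0 ^ j * u c0 ^ i) := by rw [mul_pow, ← pow_add]
      _ ≤ (Fintype.card ι : ℝ) ^ (j + i) * ((Fintype.card ι / τ * u c1) ^ j * u c0 ^ i) := by gcongr
      _ = ((Fintype.card ι : ℝ) ^ (j + i) * (Fintype.card ι / τ) ^ j) * (u c1 ^ j * u c0 ^ i) := by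
          rw [mul_pow]; ring
      _ ≤ ((Fintype.card ι : ℝ) ^ (j + i) * (Fintype.card ι / τ) ^ j) * 
        ∑ c, ∑ c', (if c = c' then 0 else u c' ^ j * u c ^ i) := by gcongr
      _ ≤ _ := by
        have : 0 ≤ (1 + τ) ^ (j + i) * ∑ c, u c ^ (j + i) := by positivity
        linarith

end
end VMV

namespace VMV
open Finset
section
variable {p : ℕ} [hp : Fact p.Prime] {k : ℕ}

lemma cls_dvd {s : Finset ℤ} {m : ℕ} {c : ZMod (p ^ m)} {x : ℤ} (hx : x ∈ cls p s m c) :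
    (p : ℤ) ^ m ∣ x - (c.val : ℤ) := by
  rw [mem_cls] at hx
  have := (ZMod.intCast_eq_intCast_iff_dvd_sub (c.val : ℤ) x (p ^ m)).1 (by rw [hx.2]; simp)
  exact_mod_cast this

lemma sum_pow_le {ι : Type*} [Fintype ι] (u : ι → ℝ) (hu : ∀ c, 0 ≤ u c) {r : ℕ} (hr : 1 ≤ r) :
    ∑ c, u c ^ r ≤ (∑ c, u c) ^ r := by
  obtain ⟨r, rfl⟩ : ∃ q, r = q + 1 := ⟨r - 1, by omega⟩
  rw [pow_succ, Finset.mul_sum]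
  refine Finset.sum_le_sum fun c _ => ?_
  rw [pow_succ]
  have h1 := Finset.single_le_sum (f := u) (fun c _ => hu c) (Finset.mem_univ c)
  have := hu c
  gcongr

lemma bn_step {l n : ℕ} (hk : 1 ≤ k) (hl : l < k) {τ D B : ℝ} (hτ : 0 < τ) (hD0 : 0 ≤ D) (hB : 0 ≤ B)
    (hD : Dec p k n D) (hBP : BP p k l (n + 1) 1 1 B) {D' : ℝ} (hD'0 : 0 ≤ D')
    (hD' : D' ^ (sg k) = (1 + τ) ^ (2 * sg k) * D ^ (sg k) +
      ((p : ℝ) ^ (2 * sg k) * (p / τ) ^ (2 * (sg k - sg l)) * p ^ 2) * B) : Dec p k (n + 1) D' := by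
  intro a s T hT H
  simp only [one_mul] at H ⊢
  have hppos := pp0 (p := p)
  have hcard : Fintype.card (ZMod (p ^ 1)) = p := by rw [ZMod.card]; simp
  have h1n : 1 ≤ n + 1 := by omega
  set Tc : ZMod (p ^ 1) → ZMod (p ^ (n + 1)) → ℝ := fun c c' => if red p h1n c' = c then T c' else 0 with hTc
  have hTc0 : ∀ c c', 0 ≤ Tc c c' := fun c c' => by simp only [hTc]; split_ifs <;> simp [hT]
  set S := ∑ c, T c with hS
  have hS0 : 0 ≤ S := Finset.sum_nonneg fun c _ => hT c
  have hsum : ∑ c, ∑ c', Tc c c' = S := by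
    rw [Finset.sum_comm]; simp [hTc, hS]
  have hTcS : ∀ c, ∑ c', Tc c c' ≤ S := fun c => by
    rw [← hsum]
    exact Finset.single_le_sum (f := fun c => ∑ c', Tc c c')
      (fun c _ => Finset.sum_nonneg fun c' _ => hTc0 c c') (Finset.mem_univ c)
  have hTcn : ∀ c, 0 ≤ ∑ c', Tc c c' := fun c => Finset.sum_nonneg fun c' _ => hTc0 c c'
  have hs0 : sg k ≠ 0 := by have := sg_pos hk; omega
  have hcl : ∀ c c', 𝔼 α : Om p k (k * (n + 1)), Nn a (cls p (cls p s 1 c) (n + 1) c') α ^ sg k ≤ Tc c c' ^ sg k := by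
    intro c c'
    rw [cls_cls h1n]
    simp only [hTc]
    split_ifs
    · exact H c'
    · simp [Nn_empty, hs0]
  have narrow : ∀ c, 𝔼 α : Om p k (k * (n + 1)), Nn a (cls p s 1 c) α ^ sg k ≤ D ^ sg k * (∑ c', Tc c c') ^ sg k := by
    intro c
    have := rescale (p := p) (k := k) (n := n + 1) (b := 1) (D := D) hk h1n (by simpa using hD) hD0 a (cls p s 1 c) (c.val : ℤ)
      (fun x hx => cls_dvd hx) (Tc c) (hTc0 c) (by simpa using hcl c)
    rw [mul_pow] at this
    simpa using this
  have broad : ∀ c c', c ≠ c' → 𝔼 α : Om p k (k * (n + 1)),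
      Nn a (cls p s 1 c') α ^ (sg k - sg l) * Nn a (cls p s 1 c) α ^ (sg l) ≤ B * S ^ sg k := by
    intro c c' hne
    refine (hBP a (cls p s 1 c) (cls p s 1 c') (c.val : ℤ) (c'.val : ℤ) ?_
      (fun x hx => cls_dvd hx) (fun x hx => cls_dvd hx) (Tc c) (Tc c') (hTc0 c) (hTc0 c') (hcl c) (hcl c')).trans ?_
    · intro hd
      apply hne
      have := (ZMod.intCast_eq_intCast_iff_dvd_sub (c'.val : ℤ) (c.val : ℤ) (p ^ 1)).2 (by simpa using hd)
      simpa using this.symm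
    · calc B * (∑ c_1, Tc c c_1) ^ sg l * (∑ c, Tc c' c) ^ (sg k - sg l)
          ≤ B * S ^ sg l * S ^ (sg k - sg l) := by
            have := hTcn c; have := hTcn c'
            gcongr
            · exact hTcS c
            · exact hTcS c'
        _ = B * S ^ sg k := by
            rw [mul_assoc, ← pow_add, Nat.add_sub_cancel' (sg_mono hl.le)]
  have hexp : 2 * (sg k - sg l) + 2 * sg l = 2 * sg k := by have := sg_mono hl.le; omega
  set A1 : ℝ := (1 + τ) ^ (2 * sg k) with hA1
  set A2 : ℝ := (p : ℝ) ^ (2 * sg k) * (p / τ) ^ (2 * (sg k - sg l)) with hA2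
  have hA20 : 0 ≤ A2 := by positivity
  have hA10 : 0 ≤ A1 := by positivity
  have pt : ∀ α : Om p k (k * (n + 1)), Nn a s α ^ sg k ≤ A1 * ∑ c, Nn a (cls p s 1 c) α ^ sg k +
      A2 * ∑ c, ∑ c', if c = c' then 0 else Nn a (cls p s 1 c') α ^ (sg k - sg l) * Nn a (cls p s 1 c) α ^ (sg l) := by
    intro α
    have h1 := bn_pt (fun c : ZMod (p ^ 1) => ‖Fs a (cls p s 1 c) α‖) (fun c => norm_nonneg _)
      (2 * sg l) (2 * (sg k - sg l)) hτ
    rw [hexp, hcard] at h1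
    simp only [Nn, ← pow_mul]
    refine le_trans ?_ h1
    rw [Fs_eq_sum_cls a s 1 α]
    exact pow_le_pow_left₀ (norm_nonneg _) (norm_sum_le _ _) _
  calc 𝔼 α : Om p k (k * (n + 1)), Nn a s α ^ sg k
      ≤ 𝔼 α : Om p k (k * (n + 1)), (A1 * ∑ c, Nn a (cls p s 1 c) α ^ sg k +
      A2 * ∑ c, ∑ c', if c = c' then 0 else Nn a (cls p s 1 c') α ^ (sg k - sg l) * Nn a (cls p s 1 c) α ^ (sg l)) :=
        Finset.expect_le_expect fun α _ => pt α
    _ = A1 * ∑ c, 𝔼 α : Om p k (k * (n + 1)), Nn a (cls p s 1 c) α ^ sg k +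
        A2 * ∑ c, ∑ c', 𝔼 α : Om p k (k * (n + 1)), if c = c' then 0 else Nn a (cls p s 1 c') α ^ (sg k - sg l) * Nn a (cls p s 1 c) α ^ (sg l) := by
        rw [Finset.expect_add_distrib, ← Finset.mul_expect, ← Finset.mul_expect, Finset.expect_sum_comm,
          Finset.expect_sum_comm]
        simp only [Finset.expect_sum_comm]
    _ ≤ A1 * ∑ c, D ^ sg k * (∑ c', Tc c c') ^ sg k + A2 * ∑ c : ZMod (p ^ 1), ∑ c' : ZMod (p ^ 1), B * S ^ sg k := by
        gcongr with c _ c _ c' _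
        · exact narrow c
        · split_ifs with hcc
          · simp; positivity
          · exact broad c c' hcc
    _ ≤ A1 * (D ^ sg k * S ^ sg k) + A2 * (p ^ 2 * (B * S ^ sg k)) := by
        rw [← Finset.mul_sum]
        have h3 : ∑ c, (∑ c', Tc c c') ^ sg k ≤ S ^ sg k := by
          rw [← hsum]
          exact sum_pow_le _ hTcn (sg_pos hk)
        have h4 : ∑ c : ZMod (p ^ 1), ∑ c' : ZMod (p ^ 1), B * S ^ sg k = p ^ 2 * (B * S ^ sg k) := by
          simp only [Finset.sum_const, Finset.card_univ, hcard, nsmul_eq_mul]; ring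
        rw [h4]
        gcongr
    _ = (D' * S) ^ sg k := by rw [mul_pow, hD']; ring

lemma HD_of (hk : 1 ≤ k) {x A : ℝ} (hA : 1 ≤ A)
    (h : ∀ n : ℕ, ∃ D : ℝ, 0 ≤ D ∧ Dec p k n D ∧ D ^ (sg k) ≤ A * (p : ℝ) ^ (x * n)) : HD p k x := by
  refine ⟨A, hA, fun n => ?_⟩
  obtain ⟨D, h0, h1, h2⟩ := h n
  obtain ⟨y, hy0, hy⟩ := exists_root (sg_pos hk) (x := A * (p : ℝ) ^ (x * n)) (by have := rp_pos (p := p) (x * n); positivity)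
  refine ⟨y, hy0, Dec_mono h1 h0 ?_, hy⟩
  rw [← hy] at h2
  exact le_of_pow_le_pow_left₀ (by have := sg_pos hk; omega) hy0 h2

lemma HD_mono (hk : 1 ≤ k) {x y : ℝ} (hxy : x ≤ y) (h : HD p k x) : HD p k y := by
  obtain ⟨C, hC, H⟩ := h
  refine HD_of hk hC fun n => ?_
  obtain ⟨D, h0, h1, h2⟩ := H n
  refine ⟨D, h0, h1, h2.le.trans ?_⟩
  have := rp_le (p := p) (x := x * n) (y := y * n) (by gcongr)
  gcongr

lemma HD_start (hk : 1 ≤ k) : HD p k (sg k) := by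
  refine HD_of hk le_rfl fun n => ⟨(p : ℝ) ^ n, by positivity, fun a s => WD_trivial _ (fun _ => zero_le_one) (sg_pos hk) a s n, ?_⟩
  rw [one_mul, mul_comm, Real.rpow_mul pp0.le, Real.rpow_natCast, Real.rpow_natCast]

lemma HD_improve (hk : 2 ≤ k) (hkp : k < p) (hdec : ∀ l, 1 ≤ l → l < k → HDec p l) {x0 : ℝ} (hx0 : 0 < x0) :
    ∃ δ : ℝ, 0 < δ ∧ ∀ x, x0 ≤ x → HD p k x → HD p k (x - δ) := by
  obtain ⟨δ', hδ', H⟩ := bil hk hkp hdec hx0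
  set δ := min δ' (x0 / 2) with hδ
  have hppos := pp0 (p := p)
  refine ⟨δ, lt_min hδ' (by positivity), fun x hx h => ?_⟩
  obtain ⟨l, hl1, hlk, C, hC, HB⟩ := H x hx h
  have hy : x0 / 2 ≤ x - δ := by have := min_le_right δ' (x0 / 2); linarith
  have hyy : x - δ' ≤ x - δ := by have := min_le_left δ' (x0 / 2); linarith
  set y := x - δ
  obtain ⟨τ, hτ, hρ⟩ : ∃ τ : ℝ, 0 < τ ∧ (1 + τ) ^ (2 * sg k) ≤ (p : ℝ) ^ (x0 / 4) := by
    have hc : Continuous (fun t : ℝ => (1 + t) ^ (2 * sg k)) := by fun_prop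
    have ht : Filter.Tendsto (fun t : ℝ => (1 + t) ^ (2 * sg k)) (nhdsWithin 0 (Set.Ioi 0)) (nhds 1) := by
      have := (hc.tendsto 0).mono_left (nhdsWithin_le_nhds (s := Set.Ioi 0))
      simpa using this
    have h1 : (1 : ℝ) < (p : ℝ) ^ (x0 / 4) := Real.one_lt_rpow one_lt_p (by positivity)
    obtain ⟨t, ht1, ht2⟩ := ((ht.eventually (gt_mem_nhds h1)).and self_mem_nhdsWithin).exists
    exact ⟨t, ht2, ht1.le⟩
  set ρ : ℝ := (1 + τ) ^ (2 * sg k)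
  have hρ0 : 0 ≤ ρ := by positivity
  set κ : ℝ := (p : ℝ) ^ (2 * sg k) * (p / τ) ^ (2 * (sg k - sg l)) * p ^ 2 with hκ
  have hκ0 : 0 ≤ κ := by positivity
  set θ : ℝ := (p : ℝ) ^ (-(x0 / 4)) with hθ
  have hθ1 : θ < 1 := Real.rpow_lt_one_of_one_lt_of_neg one_lt_p (by linarith)
  have hρθ : ρ ≤ θ * (p : ℝ) ^ y := by
    refine hρ.trans ?_
    rw [hθ, ← Real.rpow_add pp0]
    apply rp_le; linarith
  set A : ℝ := 1 + κ * C / (1 - θ) with hA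
  have hA1 : 1 ≤ A := by
    have : 0 ≤ κ * C / (1 - θ) := div_nonneg (by positivity) (by linarith)
    linarith
  have hAκ : κ * C ≤ A * (1 - θ) := by
    have : 0 < 1 - θ := by linarith
    rw [hA, add_mul, div_mul_cancel₀ _ this.ne']; linarith
  refine HD_of (by omega) hA1 fun n => ?_
  induction n with
  | zero =>
    refine ⟨1, zero_le_one, fun a s => ?_, by simpa using hA1⟩
    have := WD_trivial (p := p) (k := k) (M := k * 0) (fun _ => 1) (fun _ => zero_le_one) (sg_pos (show 1 ≤ k by omega)) a s 0
    simpa using this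
  | succ n ih =>
    obtain ⟨D, hD0, hD, hDs⟩ := ih
    have hp1 := rp_pos (p := p) ((x - δ') * (n + 1 : ℕ))
    have hp2 := rp_pos (p := p) (y * n)
    have hp3 := rp_pos (p := p) y
    obtain ⟨D', hD'0, hD'⟩ := exists_root (sg_pos (show 1 ≤ k by omega))
      (x := ρ * D ^ (sg k) + κ * (C * (p : ℝ) ^ ((x - δ') * (n + 1 : ℕ)))) (by positivity)
    refine ⟨D', hD'0, bn_step (by omega) hlk hτ hD0 (by positivity) hD (HB (n + 1)) hD'0 hD', ?_⟩
    rw [hD']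
    have e1 : (p : ℝ) ^ ((x - δ') * (n + 1 : ℕ)) ≤ (p : ℝ) ^ (y * (n + 1 : ℕ)) := by
      apply rp_le; gcongr
    have e2 : (p : ℝ) ^ (y * (n + 1 : ℕ)) = (p : ℝ) ^ y * (p : ℝ) ^ (y * n) := by
      rw [← Real.rpow_add pp0]; congr 1; push_cast; ring
    calc ρ * D ^ (sg k) + κ * (C * (p : ℝ) ^ ((x - δ') * (n + 1 : ℕ)))
        ≤ (θ * (p : ℝ) ^ y) * (A * (p : ℝ) ^ (y * n)) + κ * (C * (p : ℝ) ^ (y * (n + 1 : ℕ))) := by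
          gcongr
      _ = (θ * A + κ * C) * ((p : ℝ) ^ y * (p : ℝ) ^ (y * n)) := by rw [e2]; ring
      _ ≤ A * ((p : ℝ) ^ y * (p : ℝ) ^ (y * n)) := by
          gcongr; linarith
      _ = _ := by rw [e2]

lemma HDec_of_HD (hk : 1 ≤ k) (h : ∀ x : ℝ, 0 < x → HD p k x) : HDec p k := by
  intro ε hε
  have hs := sg_pos hk
  obtain ⟨C, hC, H⟩ := h (ε * sg k) (by positivity)
  refine ⟨C, by linarith, fun n => ?_⟩
  obtain ⟨D, h0, h1, h2⟩ := H n
  refine Dec_mono h1 h0 ?_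
  have hp1 := rp_pos (p := p) (ε * n)
  refine le_of_pow_le_pow_left₀ (n := sg k) (by omega) (by positivity) ?_
  rw [h2, mul_pow, ← Real.rpow_mul_natCast pp0.le]
  have e1 : C ≤ C ^ sg k := le_self_pow₀ hC (by omega)
  have e2 : ε * (sg k : ℝ) * n = ε * n * sg k := by ring
  rw [e2]
  gcongr

lemma HDec_succ (hk : 2 ≤ k) (hkp : k < p) (hdec : ∀ l, 1 ≤ l → l < k → HDec p l) : HDec p k := by
  refine HDec_of_HD (by omega) fun x0 hx0 => ?_
  obtain ⟨δ, hδ, H⟩ := HD_improve hk hkp hdec hx0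
  have key : ∀ j : ℕ, HD p k (max x0 (sg k - j * δ)) := by
    intro j
    induction j with
    | zero => exact HD_mono (by omega) (by simp) (HD_start (by omega))
    | succ j ih =>
      refine HD_mono (by omega) ?_ (H _ (le_max_left _ _) ih)
      rw [sub_le_iff_le_add]
      refine max_le ?_ ?_
      · have := le_max_left x0 ((sg k : ℝ) - (j + 1 : ℕ) * δ); linarith
      · have := le_max_right x0 ((sg k : ℝ) - (j + 1 : ℕ) * δ); push_cast at this ⊢; linarith
  obtain ⟨j, hj⟩ := exists_nat_ge ((sg k : ℝ) / δ)
  have := key j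
  rwa [max_eq_left] at this
  have := (div_le_iff₀ hδ).1 hj
  linarith

lemma parseval {N : ℕ} [NeZero N] (A : ZMod N → ℂ) :
    𝔼 t : ZMod N, ‖∑ c, A c * ZMod.stdAddChar (t * c)‖ ^ 2 = ∑ c, ‖A c‖ ^ 2 := by
  rw [Fintype.expect_eq_sum_div_card, ZMod.card]
  have hN : (N : ℝ) ≠ 0 := by exact_mod_cast NeZero.ne N
  rw [div_eq_iff hN]
  apply Complex.ofReal_injective
  push_cast
  simp only [← Complex.mul_conj', map_sum, map_mul]
  have e1 : ∀ t : ZMod N, (∑ c, A c * ZMod.stdAddChar (t * c)) *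
      (∑ c, (starRingEnd ℂ) (A c) * (starRingEnd ℂ) (ZMod.stdAddChar (t * c)))
      = ∑ c, ∑ c', A c * (starRingEnd ℂ) (A c') * ZMod.stdAddChar (t * (c - c')) := by
    intro t
    rw [Finset.sum_mul_sum]
    refine Finset.sum_congr rfl fun c _ => Finset.sum_congr rfl fun c' _ => ?_
    rw [← AddChar.map_neg_eq_conj, show t * (c - c') = t * c + -(t * c') by ring, AddChar.map_add_eq_mul]
    ring
  simp only [e1]
  rw [Finset.sum_comm, Finset.sum_mul]
  refine Finset.sum_congr rfl fun c _ => ?_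
  rw [Finset.sum_comm]
  simp only [← Finset.mul_sum]
  have e2 : ∀ c' : ZMod N, ∑ t : ZMod N, (ZMod.stdAddChar (t * (c - c')) : ℂ) = if c' = c then (N : ℂ) else 0 := by
    intro c'
    rw [AddChar.sum_mulShift (c - c') (ZMod.isPrimitive_stdAddChar N), ZMod.card]
    simp [sub_eq_zero, eq_comm]
  simp only [e2]
  simp

lemma Dec_one_aux {M n : ℕ} (h : M = n) (a : ℤ → ℂ) (s : Finset ℤ) :
    WD (p := p) (k := 1) (M := M) (fun _ => 1) (sg 1) a s n 1 := by
  subst h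
  intro T hT H
  have hsg : sg 1 = 1 := rfl
  simp only [hsg, pow_one, one_mul] at H ⊢
  refine le_trans (le_of_eq ?_) (Finset.sum_le_sum fun c _ => H c)
  have e0 : ∀ f : Om p 1 M → ℝ, 𝔼 α, f α = 𝔼 t : ZMod (p ^ M), f (fun _ => t) := by
    intro f
    refine Fintype.expect_equiv (Equiv.funUnique (Fin 1) _) _ _ fun α => ?_
    congr 1
    ext i
    fin_cases i
    rfl
  simp only [e0]
  have hpol : ∀ (t : ZMod (p ^ M)) (x : ℤ), pol (p := p) (k := 1) (M := M) (fun _ => t) x = t * x := by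
    intro t x; simp [pol]
  set A : ZMod (p ^ M) → ℂ := fun c => ∑ x ∈ cls p s M c, a x with hA
  have e1 : ∀ t c, Fs (p := p) (k := 1) (M := M) a (cls p s M c) (fun _ => t) = A c * ZMod.stdAddChar (t * c) := by
    intro t c
    rw [Fs, hA, Finset.sum_mul]
    refine Finset.sum_congr rfl fun x hx => ?_
    rw [mem_cls] at hx
    rw [hpol, hx.2]
  have e2 : ∀ t, Nn (p := p) (k := 1) (M := M) a s (fun _ => t) = ‖∑ c, A c * ZMod.stdAddChar (t * c)‖ ^ 2 := by
    intro t
    rw [Nn, Fs_eq_sum_cls a s M]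
    simp only [e1]
  have e3 : ∀ t c, Nn (p := p) (k := 1) (M := M) a (cls p s M c) (fun _ => t) = ‖A c‖ ^ 2 := by
    intro t c
    rw [Nn, e1, norm_mul, AddChar.norm_apply, mul_one]
  simp only [e2, e3, Fintype.expect_const]
  exact parseval A

lemma Dec_one (n : ℕ) : Dec p 1 n 1 := fun a s => Dec_one_aux (one_mul n) a s

theorem HDec_all (hk : 1 ≤ k) (hkp : k < p) : HDec p k := by
  induction k using Nat.strong_induction_on with
  | _ k ih =>
    rcases Nat.lt_or_ge 1 k with h | h
    · exact HDec_succ h hkp fun l h1 h2 => ih l h2 h1 (by omega)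
    · obtain rfl : k = 1 := by omega
      intro ε hε
      refine ⟨1, one_pos, fun n => Dec_mono (Dec_one n) zero_le_one ?_⟩
      rw [one_mul]
      exact Real.one_le_rpow one_lt_p.le (by positivity)
end
end VMV

namespace VMV
open Finset

def nr (x t : ℝ) : Prop := ∃ z : ℤ, |x - z| ≤ t

lemma nr_add {x y s t : ℝ} (hx : nr x s) (hy : nr y t) : nr (x + y) (s + t) := by
  obtain ⟨z, hz⟩ := hx
  obtain ⟨w, hw⟩ := hy
  refine ⟨z + w, ?_⟩
  push_cast
  rw [show x + y - ((z : ℝ) + w) = (x - z) + (y - w) by ring]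
  exact (abs_add_le _ _).trans (add_le_add hz hw)

lemma nr_mono {x s t : ℝ} (hx : nr x s) (h : s ≤ t) : nr x t := by
  obtain ⟨z, hz⟩ := hx
  exact ⟨z, hz.trans h⟩

lemma nr_mul {x t : ℝ} (hx : nr x t) (c : ℤ) : nr (c * x) (|(c : ℝ)| * t) := by
  obtain ⟨z, hz⟩ := hx
  refine ⟨c * z, ?_⟩
  push_cast
  rw [← mul_sub, abs_mul]
  gcongr

lemma nr_sum {ι : Type*} (s : Finset ι) (x t : ι → ℝ) (h : ∀ i ∈ s, nr (x i) (t i)) :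
    nr (∑ i ∈ s, x i) (∑ i ∈ s, t i) := by
  induction s using Finset.induction_on with
  | empty => exact ⟨0, by simp⟩
  | insert a s ha ih =>
    rw [Finset.sum_insert ha, Finset.sum_insert ha]
    exact nr_add (h a (Finset.mem_insert_self _ _)) (ih fun i hi => h i (Finset.mem_insert_of_mem hi))

lemma geom_bd (m m' : ℤ) (N e : ℕ) (hm : |m| ≤ N) (hm' : |m'| ≤ N) :
    ∃ W : ℤ, m ^ e - m' ^ e = (m - m') * W ∧ |(W : ℝ)| ≤ e * (N : ℝ) ^ (e - 1) := by
  refine ⟨∑ i ∈ range e, m ^ i * m' ^ (e - 1 - i), ((Commute.all m m').mul_geom_sum₂ e).symm, ?_⟩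
  push_cast
  refine (Finset.abs_sum_le_sum_abs _ _).trans ?_
  have h1 : |(m : ℝ)| ≤ N := by exact_mod_cast hm
  have h2 : |(m' : ℝ)| ≤ N := by exact_mod_cast hm'
  have : ∀ i ∈ range e, |(m : ℝ) ^ i * (m' : ℝ) ^ (e - 1 - i)| ≤ (N : ℝ) ^ (e - 1) := by
    intro i hi
    rw [Finset.mem_range] at hi
    rw [abs_mul, abs_pow, abs_pow]
    calc |(m : ℝ)| ^ i * |(m' : ℝ)| ^ (e - 1 - i) ≤ (N : ℝ) ^ i * (N : ℝ) ^ (e - 1 - i) := by gcongr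
      _ = _ := by rw [← pow_add]; congr 1; omega
  refine (Finset.sum_le_sum this).trans ?_
  simp

lemma elim (k t : ℕ) (ht : t + 1 ≤ k) : ∃ c : ℕ, 1 ≤ c ∧ ∃ κ : ℝ, 0 ≤ κ ∧
    ∀ (N : ℕ), 1 ≤ N → ∀ (α : ℕ → ℝ) (m m' : ℤ), |m| ≤ N → |m'| ≤ N →
      (∀ i, 1 ≤ i → i < k →
        nr (∑ h ∈ Icc 1 k, (h.choose i : ℝ) * α h * ((m : ℝ) ^ (h - i) - (m' : ℝ) ^ (h - i))) ((N : ℝ) ^ i)⁻¹) →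
      ∀ h, k + 1 ≤ h + t → h ≤ k → nr (c * ((m : ℝ) - m') * α h) (κ * (N * ((N : ℝ) ^ h)⁻¹)) := by
  induction t with
  | zero =>
    refine ⟨1, le_rfl, 0, le_rfl, ?_⟩
    intro N _ α m m' _ _ _ h h1 h2
    omega
  | succ t ih =>
    obtain ⟨c, hc, κ, hκ, H⟩ := ih (by omega)
    obtain ⟨h0, hh0⟩ : ∃ h0, h0 = k - t := ⟨_, rfl⟩
    have hh2 : 2 ≤ h0 := by omega
    refine ⟨c * h0, by nlinarith, h0 * κ + (c + ∑ h ∈ Icc (h0 + 1) k, (h.choose (h0 - 1) : ℝ) * k * κ), by positivity, ?_⟩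
    intro N hN α m m' hm hm' hyp h h1 h2
    have hNR : (1 : ℝ) ≤ N := by exact_mod_cast hN
    have HH := H N hN α m m' hm hm' hyp
    have hsn : 0 ≤ (c + ∑ h ∈ Icc (h0 + 1) k, (h.choose (h0 - 1) : ℝ) * k * κ) := by positivity
    by_cases hh : k + 1 ≤ h + t
    · have := nr_mul (HH h hh h2) (h0 : ℤ)
      have e : (((h0 : ℤ) : ℝ)) * (c * ((m : ℝ) - m') * α h) = ((c * h0 : ℕ) : ℝ) * ((m : ℝ) - m') * α h := by
        push_cast; ring
      rw [e] at this
      refine nr_mono this ?_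
      have e2 : |(((h0 : ℤ) : ℝ))| = h0 := by simp
      rw [e2, ← mul_assoc]
      have : 0 ≤ (N : ℝ) * ((N : ℝ) ^ h)⁻¹ := by positivity
      nlinarith
    · have hEq : h0 = h := by omega
      subst hEq
      rename' h0 => h
      have hy := nr_mul (hyp (h - 1) (by omega) (by omega)) (c : ℤ)
      have hsplit : ∑ h' ∈ Icc 1 k, (h'.choose (h - 1) : ℝ) * α h' * ((m : ℝ) ^ (h' - (h - 1)) - (m' : ℝ) ^ (h' - (h - 1)))
          = h * α h * ((m : ℝ) - m') + ∑ h' ∈ Icc (h + 1) k, (h'.choose (h - 1) : ℝ) * α h' * ((m : ℝ) ^ (h' - (h - 1)) - (m' : ℝ) ^ (h' - (h - 1))) := by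
        have hu : Icc 1 k = Icc 1 (h - 1) ∪ (insert h (Icc (h + 1) k)) := by
          ext x; simp only [Finset.mem_Icc, Finset.mem_union, Finset.mem_insert]; omega
        rw [hu, Finset.sum_union, Finset.sum_insert, Finset.sum_eq_zero, zero_add]
        · rw [show h - (h - 1) = 1 by omega, pow_one, pow_one]
          congr 3
          rw [Nat.choose_symm_of_eq_add (show h = h - 1 + 1 by omega)]
          simp
        · intro x hx
          rw [Finset.mem_Icc] at hx
          rw [show x - (h - 1) = 0 by omega]; simp
        · simp
        · rw [Finset.disjoint_left]
          intro x; simp only [Finset.mem_Icc, Finset.mem_insert]; omega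
      have hterm : ∀ h' ∈ Icc (h + 1) k, nr (-(c * ((h'.choose (h - 1) : ℝ) * α h' * ((m : ℝ) ^ (h' - (h - 1)) - (m' : ℝ) ^ (h' - (h - 1))))))
          ((h'.choose (h - 1) : ℝ) * k * κ * (N * ((N : ℝ) ^ h)⁻¹)) := by
        intro h' hh'
        rw [Finset.mem_Icc] at hh'
        obtain ⟨W, hW1, hW2⟩ := geom_bd m m' N (h' - (h - 1)) hm hm'
        have h3 := nr_mul (HH h' (by omega) hh'.2) (-(h'.choose (h - 1) : ℤ) * W)
        have hW1' : (m : ℝ) ^ (h' - (h - 1)) - (m' : ℝ) ^ (h' - (h - 1)) = ((m : ℝ) - m') * W := by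
          exact_mod_cast hW1
        have e : ((-(h'.choose (h - 1) : ℤ) * W : ℤ) : ℝ) * (c * ((m : ℝ) - m') * α h')
            = -(c * ((h'.choose (h - 1) : ℝ) * α h' * ((m : ℝ) ^ (h' - (h - 1)) - (m' : ℝ) ^ (h' - (h - 1))))) := by
          rw [hW1']; push_cast; ring
        rw [e] at h3
        refine nr_mono h3 ?_
        have e2 : |((-(h'.choose (h - 1) : ℤ) * W : ℤ) : ℝ)| = (h'.choose (h - 1) : ℝ) * |(W : ℝ)| := by
          push_cast; rw [abs_mul, abs_neg]; simp
        rw [e2]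
        have e3 : |(W : ℝ)| ≤ k * (N : ℝ) ^ (h' - h) := by
          refine hW2.trans ?_
          rw [show h' - (h - 1) - 1 = h' - h by omega]
          gcongr
          omega
        have e4 : (N : ℝ) ^ (h' - h) * ((N : ℝ) ^ h')⁻¹ = ((N : ℝ) ^ h)⁻¹ := by
          have : (N : ℝ) ^ h' = (N : ℝ) ^ (h' - h) * (N : ℝ) ^ h := by rw [← pow_add]; congr 1; omega
          rw [this]; field_simp
        calc (h'.choose (h - 1) : ℝ) * |(W : ℝ)| * (κ * (N * ((N : ℝ) ^ h')⁻¹))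
            ≤ (h'.choose (h - 1) : ℝ) * (k * (N : ℝ) ^ (h' - h)) * (κ * (N * ((N : ℝ) ^ h')⁻¹)) := by gcongr
          _ = (h'.choose (h - 1) : ℝ) * k * κ * (N * ((N : ℝ) ^ (h' - h) * ((N : ℝ) ^ h')⁻¹)) := by ring
          _ = _ := by rw [e4]
      have hall := nr_add hy (nr_sum _ _ _ hterm)
      rw [hsplit] at hall
      have e : (((c : ℤ) : ℝ)) * (h * α h * ((m : ℝ) - m') + ∑ h' ∈ Icc (h + 1) k, (h'.choose (h - 1) : ℝ) * α h' * ((m : ℝ) ^ (h' - (h - 1)) - (m' : ℝ) ^ (h' - (h - 1)))) + ∑ h' ∈ Icc (h + 1) k, (-(c * ((h'.choose (h - 1) : ℝ) * α h' * ((m : ℝ) ^ (h' - (h - 1)) - (m' : ℝ) ^ (h' - (h - 1)))))) = ((c * h : ℕ) : ℝ) * ((m : ℝ) - m') * α h := by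
        rw [Finset.sum_neg_distrib, ← Finset.mul_sum]; push_cast; ring
      rw [e] at hall
      refine nr_mono hall ?_
      rw [← Finset.sum_mul]
      have e5 : ((N : ℝ) ^ (h - 1))⁻¹ = N * ((N : ℝ) ^ h)⁻¹ := by
        have : (N : ℝ) ^ h = (N : ℝ) ^ (h - 1) * N := by rw [← pow_succ]; congr 1; omega
        rw [this]; field_simp
      have e6 : |(((c : ℤ) : ℝ))| = c := by simp
      rw [e5, e6]
      have : 0 ≤ (h : ℝ) * κ * ((N : ℝ) * ((N : ℝ) ^ h)⁻¹) := by positivity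
      nlinarith

lemma sep (α : ℝ) (a : ℤ) (q : ℕ) (hq : 0 < q) (hg : Int.gcd a (q : ℤ) = 1)
    (hα : |α - (a : ℝ) / (q : ℝ)| ≤ ((q : ℝ)) ⁻¹ ^ 2) (r : ℤ) (hr0 : r ≠ 0) (hr : 2 * |r| ≤ q) (z : ℤ) :
    1 / (2 * (q : ℝ)) ≤ |r * α - z| := by
  have hqR : (0 : ℝ) < q := by exact_mod_cast hq
  have h1 : r * a - z * q ≠ 0 := by
    intro h
    have hd : (q : ℤ) ∣ r * a := ⟨z, by linarith⟩
    have hd2 : (q : ℤ) ∣ r := (Int.isCoprime_iff_gcd_eq_one.2 hg).symm.dvd_of_dvd_mul_right hd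
    have := Int.le_of_dvd (abs_pos.2 hr0) ((dvd_abs _ _).2 hd2)
    have : 0 < |r| := abs_pos.2 hr0
    omega
  have h2 : (1 : ℝ) ≤ |(r : ℝ) * a - z * q| := by
    have := Int.one_le_abs h1
    exact_mod_cast this
  have h3 : (r : ℝ) * α - z = ((r : ℝ) * a - z * q) / q + r * (α - a / q) := by field_simp; ring
  have h4 : |(r : ℝ) * (α - a / q)| ≤ 1 / (2 * q) := by
    rw [abs_mul]
    have h5 : |(r : ℝ)| ≤ q / 2 := by
      have : 2 * |(r : ℝ)| ≤ q := by exact_mod_cast hr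
      linarith
    calc |(r : ℝ)| * |α - a / q| ≤ q / 2 * ((q : ℝ)⁻¹ ^ 2) := by gcongr
      _ = _ := by field_simp
  have h6 : 1 / (q : ℝ) ≤ |((r : ℝ) * a - z * q) / q| := by
    rw [abs_div, abs_of_pos hqR]; gcongr
  rw [h3]
  have h7 : |((r : ℝ) * a - z * q) / q| - |(r : ℝ) * (α - a / q)| ≤ |((r : ℝ) * a - z * q) / q + r * (α - a / q)| := by
    have := abs_sub_abs_le_abs_sub (((r : ℝ) * a - z * q) / q) (-(r * (α - a / q)))
    rwa [abs_neg, sub_neg_eq_add] at this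
  have h8 : 1 / (q : ℝ) = 1 / (2 * q) + 1 / (2 * q) := by field_simp; norm_num
  linarith

lemma modlem (X Y B : ℕ) (hB : 1 ≤ B) (e : X / B = Y / B) : |(X : ℤ) - Y| < B := by
  have d1 := Nat.div_add_mod X B
  have d2 := Nat.div_add_mod Y B
  have d3 := Nat.mod_lt X hB
  have d4 := Nat.mod_lt Y hB
  rw [e] at d1
  generalize B * (Y / B) = Z at *
  rw [abs_lt]
  omega

lemma count (α : ℝ) (a : ℤ) (q : ℕ) (hq : 0 < q) (hg : Int.gcd a (q : ℤ) = 1)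
    (hα : |α - (a : ℝ) / (q : ℝ)| ≤ ((q : ℝ)) ⁻¹ ^ 2) (δ : ℝ) (hδ : 0 ≤ δ) (c N : ℕ) (hc : 1 ≤ c) (I : Finset ℕ)
    (hI : ∀ m ∈ I, m ≤ N) (h : ∀ m ∈ I, ∀ m' ∈ I, nr (c * ((m : ℝ) - m') * α) δ) :
    (I.card : ℝ) ≤ (2 * c * N / q + 1) * (4 * q * δ + 1) := by
  have hqR : (0 : ℝ) < q := by exact_mod_cast hq
  rcases I.eq_empty_or_nonempty with rfl | hne
  · simp; positivity
  set m0 := I.min' hne with hm0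
  have hm0I : m0 ∈ I := I.min'_mem hne
  have hmin : ∀ m ∈ I, m0 ≤ m := fun m hm => I.min'_le m hm
  have hz : ∀ m : ℕ, ∃ z : ℤ, m ∈ I → |c * ((m : ℝ) - m0) * α - z| ≤ δ := by
    intro m
    by_cases hm : m ∈ I
    · obtain ⟨z, hz⟩ := h m hm m0 hm0I; exact ⟨z, fun _ => hz⟩
    · exact ⟨0, fun h => absurd h hm⟩
  choose z hz using hz
  set B := (q + 1) / 2 with hB
  have hB1 : 1 ≤ B := by omega
  set u : ℕ → ℝ := fun m => c * ((m : ℝ) - m0) * α - z m with hu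
  set φ : ℕ → ℕ × ℕ := fun m => (c * (m - m0) / B, ⌊2 * q * (u m + δ)⌋₊) with hφ
  have hmaps : ∀ m ∈ I, φ m ∈ range (c * N / B + 1) ×ˢ range (⌊4 * q * δ⌋₊ + 1) := by
    intro m hm
    rw [Finset.mem_product, Finset.mem_range, Finset.mem_range, Nat.lt_succ_iff, Nat.lt_succ_iff]
    refine ⟨Nat.div_le_div_right (Nat.mul_le_mul_left _ ((Nat.sub_le _ _).trans (hI m hm))), Nat.floor_le_floor ?_⟩
    have := (abs_le.1 (hz m hm)).2
    have h2 : u m + δ ≤ 2 * δ := by simp only [hu]; linarith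
    calc 2 * q * (u m + δ) ≤ 2 * q * (2 * δ) := by gcongr
      _ = _ := by ring
  have hinj : Set.InjOn φ I := by
    intro m hm m' hm' heq
    by_contra hne'
    have hm := Finset.mem_coe.1 hm
    have hm' := Finset.mem_coe.1 hm'
    simp only [hφ, Prod.mk.injEq] at heq
    obtain ⟨e1, e2⟩ := heq
    have l1 := hmin m hm
    have l2 := hmin m' hm'
    set r : ℤ := c * ((m : ℤ) - m') with hr
    have hr0 : r ≠ 0 := by
      rw [hr]
      have : (m : ℤ) - m' ≠ 0 := by omega
      exact mul_ne_zero (by omega) this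
    have hrb : |r| < B := by
      have : r = (c * (m - m0) : ℕ) - (c * (m' - m0) : ℕ) := by
        push_cast [l1, l2]; rw [hr]; ring
      rw [this]
      exact modlem _ _ B hB1 e1
    have hsep := sep α a q hq hg hα r hr0 (by omega) (z m - z m')
    have hdiff : (r : ℝ) * α - ((z m - z m' : ℤ) : ℝ) = u m - u m' := by
      simp only [hu, hr]; push_cast; ring
    rw [hdiff] at hsep
    have p1 : 0 ≤ 2 * q * (u m + δ) := by
      have := (abs_le.1 (hz m hm)).1
      have : 0 ≤ u m + δ := by simp only [hu]; linarith
      positivity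
    have p2 : 0 ≤ 2 * q * (u m' + δ) := by
      have := (abs_le.1 (hz m' hm')).1
      have : 0 ≤ u m' + δ := by simp only [hu]; linarith
      positivity
    have f1 := Nat.floor_le p1
    have f2 := Nat.lt_floor_add_one (2 * q * (u m + δ))
    have f3 := Nat.floor_le p2
    have f4 := Nat.lt_floor_add_one (2 * q * (u m' + δ))
    rw [e2] at f1 f2
    have hlt : |2 * q * (u m - u m')| < 1 := by
      rw [abs_lt]; constructor <;> linarith
    rw [abs_mul, abs_of_pos (by positivity)] at hlt
    rw [div_le_iff₀ (by positivity)] at hsep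
    linarith
  have hcard := Finset.card_le_card_of_injOn φ hmaps hinj
  rw [Finset.card_product, Finset.card_range, Finset.card_range] at hcard
  have hBq : (q : ℝ) / 2 ≤ B := by
    have : q ≤ 2 * B := by omega
    have : (q : ℝ) ≤ 2 * B := by exact_mod_cast this
    linarith
  calc (I.card : ℝ) ≤ (((c * N / B + 1) * (⌊4 * q * δ⌋₊ + 1) : ℕ) : ℝ) := by exact_mod_cast hcard
    _ = (((c * N / B : ℕ) : ℝ) + 1) * ((⌊4 * q * δ⌋₊ : ℝ) + 1) := by push_cast; ring
    _ ≤ _ := by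
      have g1 : ((c * N / B : ℕ) : ℝ) ≤ 2 * c * N / q := by
        refine Nat.cast_div_le.trans ?_
        push_cast
        calc (c : ℝ) * N / B ≤ c * N / (q / 2) := by gcongr
          _ = _ := by field_simp
      have g2 : (⌊4 * q * δ⌋₊ : ℝ) ≤ 4 * q * δ := Nat.floor_le (by positivity)
      gcongr
end VMV

namespace VMV
open Finset
section
variable {p : ℕ} [hp : Fact p.Prime] {d M n : ℕ}

lemma mv {D : ℝ} (hd : 1 ≤ d) (hD : Dec p d n D) (N : ℕ) (hN : 2 * N + 1 ≤ p ^ n)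
    (a : ℤ → ℂ) (ha : ∀ x, ‖a x‖ ≤ 2) :
    𝔼 β : Om p d (d * n), Nn a (Icc (-N : ℤ) N) β ^ sg d ≤ (D * (4 * (2 * N + 1))) ^ sg d := by
  have hone : ∀ c, #(cls p (Icc (-N : ℤ) N) n c) ≤ 1 := by
    intro c
    rw [Finset.card_le_one]
    intro x hx y hy
    rw [mem_cls, Finset.mem_Icc] at hx hy
    have h := hx.2.trans hy.2.symm
    rw [ZMod.intCast_eq_intCast_iff_dvd_sub] at h
    have hlt : |y - x| < ((p ^ n : ℕ) : ℤ) := by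
      rw [abs_lt]; omega
    have := Int.eq_zero_of_abs_lt_dvd h hlt
    omega
  have := hD a (Icc (-N : ℤ) N) (fun c => 4 * #(cls p (Icc (-N : ℤ) N) n c)) (fun c => by positivity) ?_
  · simp only [one_mul] at this
    refine this.trans (le_of_eq ?_)
    rw [← Finset.mul_sum]
    congr 3
    have hc := Finset.card_eq_sum_card_fiberwise (f := fun x : ℤ => (x : ZMod (p ^ n))) (s := Icc (-N : ℤ) N) (t := univ) (fun _ _ => by simp)
    have h2 : #(Icc (-N : ℤ) N) = 2 * N + 1 := by rw [Int.card_Icc]; omega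
    rw [h2] at hc
    have hc' : ((2 * N + 1 : ℕ) : ℝ) = ((∑ c, #(cls p (Icc (-N : ℤ) N) n c) : ℕ) : ℝ) := by
      rw [hc]; rfl
    push_cast at hc'
    rw [hc']
  · intro c
    simp only [one_mul]
    refine Finset.expect_le univ_nonempty (fun α _ => ?_)
    refine pow_le_pow_left₀ (Nn_nonneg _ _ _) ?_ _
    have h1 : ‖Fs a (cls p (Icc (-N : ℤ) N) n c) α‖ ≤ 2 * #(cls p (Icc (-N : ℤ) N) n c) := by
      rw [Fs]
      refine (norm_sum_le _ _).trans ?_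
      refine (Finset.sum_le_card_nsmul _ _ 2 ?_).trans (by simp [mul_comm])
      intro x _
      rw [norm_mul, AddChar.norm_apply, mul_one]
      exact ha x
    have h2 : (#(cls p (Icc (-N : ℤ) N) n c) : ℝ) ≤ 1 := by exact_mod_cast hone c
    have h3 : (0 : ℝ) ≤ #(cls p (Icc (-N : ℤ) N) n c) := by positivity
    rw [Nn]
    calc _ ≤ (2 * (#(cls p (Icc (-N : ℤ) N) n c) : ℝ)) ^ 2 := pow_le_pow_left₀ (norm_nonneg _) h1 2
      _ ≤ _ := by nlinarith

lemma avg (B : Finset (Om p d M)) (hB : B.Nonempty) (s : Finset ℤ) (a : ℤ → ℂ) (ha : ∀ x, ‖a x‖ ≤ 1)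
    (hw : ∀ x ∈ s, ∀ θ ∈ B, ‖(ZMod.stdAddChar (pol θ x) : ℂ) - 1‖ ≤ 1 / 2) (r : ℕ) :
    ∃ a' : ℤ → ℂ, (∀ x, ‖a' x‖ ≤ 2) ∧ ∀ β : Om p d M, Nn a s β ^ r ≤ (#B : ℝ)⁻¹ * ∑ θ ∈ B, Nn a' s (β + θ) ^ r := by
  have hBc : (0 : ℝ) < #B := by exact_mod_cast hB.card_pos
  have hBc' : (#B : ℂ) ≠ 0 := by exact_mod_cast hB.card_pos.ne'
  set w : ℤ → ℂ := fun x => (#B : ℂ)⁻¹ * ∑ θ ∈ B, ZMod.stdAddChar (pol θ x) with hwdef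
  have hw1 : ∀ x ∈ s, ‖w x - 1‖ ≤ 1 / 2 := by
    intro x hx
    have : w x - 1 = (#B : ℂ)⁻¹ * ∑ θ ∈ B, ((ZMod.stdAddChar (pol θ x) : ℂ) - 1) := by
      rw [Finset.sum_sub_distrib, mul_sub]
      simp only [hwdef, sum_const, nsmul_eq_mul, mul_one]
      rw [inv_mul_cancel₀ hBc']
    rw [this, norm_mul, norm_inv, Complex.norm_natCast]
    rw [inv_mul_le_iff₀ hBc]
    refine (norm_sum_le _ _).trans ?_
    refine (Finset.sum_le_card_nsmul _ _ (1/2) (hw x hx)).trans (by simp)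
  have hw2 : ∀ x ∈ s, 1 / 2 ≤ ‖w x‖ := by
    intro x hx
    have h1 := hw1 x hx
    have h2 := norm_sub_norm_le (1 : ℂ) (1 - w x)
    rw [norm_one, sub_sub_cancel, ← norm_neg (1 - w x), neg_sub] at h2
    linarith
  refine ⟨fun x => if x ∈ s then a x / w x else 0, ?_, ?_⟩
  · intro x
    dsimp only
    split_ifs with hx
    · rw [norm_div, div_le_iff₀ (by linarith [hw2 x hx])]
      linarith [ha x, hw2 x hx]
    · simp
  intro β
  set a' : ℤ → ℂ := fun x => if x ∈ s then a x / w x else 0 with ha'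
  have hF : Fs a s β = (#B : ℂ)⁻¹ * ∑ θ ∈ B, Fs a' s (β + θ) := by
    simp only [Fs]
    rw [Finset.sum_comm, Finset.mul_sum]
    refine Finset.sum_congr rfl fun x hx => ?_
    have hne : w x ≠ 0 := by
      intro h
      have := hw2 x hx
      rw [h, norm_zero] at this
      linarith
    have : ∀ θ, a' x * (ZMod.stdAddChar (pol (β + θ) x) : ℂ) = a' x * ZMod.stdAddChar (pol β x) * ZMod.stdAddChar (pol θ x) := by
      intro θ; rw [pol_add, AddChar.map_add_eq_mul]; ring
    simp only [this]
    rw [← Finset.mul_sum]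
    have e : ∑ θ ∈ B, (ZMod.stdAddChar (pol θ x) : ℂ) = #B * w x := by
      simp only [hwdef]; rw [mul_inv_cancel_left₀ hBc']
    rw [e]
    simp only [ha', hx, if_true]
    field_simp
  have hnorm : ‖Fs a s β‖ ≤ (#B : ℝ)⁻¹ * ∑ θ ∈ B, ‖Fs a' s (β + θ)‖ := by
    rw [hF, norm_mul, norm_inv, Complex.norm_natCast]
    gcongr
    exact norm_sum_le _ _
  simp only [Nn, ← pow_mul]
  have hpm := Real.pow_arith_mean_le_arith_mean_pow B (fun _ => (#B : ℝ)⁻¹) (fun θ => ‖Fs a' s (β + θ)‖)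
    (fun _ _ => by positivity) (by rw [sum_const, nsmul_eq_mul, mul_inv_cancel₀ hBc.ne']) (fun _ _ => norm_nonneg _) (2 * r)
  rw [← Finset.mul_sum, ← Finset.mul_sum] at hpm
  exact (pow_le_pow_left₀ (norm_nonneg _) hnorm _).trans hpm

lemma avg2 (B : Finset (Om p d M)) (f : Om p d M → ℝ) (hf : ∀ γ, 0 ≤ f γ) (I : Finset ℕ)
    (β : ℕ → Om p d M) (mult : ℝ) (hm : ∀ γ, (#{m ∈ I | γ - β m ∈ B} : ℝ) ≤ mult) :
    ∑ m ∈ I, ∑ θ ∈ B, f (β m + θ) ≤ mult * ∑ γ, f γ := by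
  have h1 : ∀ m, ∑ θ ∈ B, f (β m + θ) = ∑ γ, if γ - β m ∈ B then f γ else 0 := by
    intro m
    rw [← Finset.sum_filter]
    refine Finset.sum_bij' (fun θ _ => β m + θ) (fun γ _ => γ - β m) ?_ ?_ ?_ ?_ ?_
    · intro θ hθ; simp [hθ]
    · intro γ hγ; simpa using hγ
    · intro θ _; simp
    · intro γ _; simp
    · intro θ _; rfl
  simp only [h1]
  rw [Finset.sum_comm, Finset.mul_sum]
  refine Finset.sum_le_sum fun γ _ => ?_
  rw [← Finset.sum_filter, sum_const, nsmul_eq_mul]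
  exact mul_le_mul_of_nonneg_right (hm γ) (hf γ)

def box (p d M N : ℕ) : Finset (Om p d M) :=
  Fintype.piFinset fun i : Fin d => (range (p ^ M / (16 * d * N ^ (i.val + 1)) + 1)).image (fun x : ℕ => (x : ZMod (p ^ M)))

lemma mem_box {N : ℕ} {θ : Om p d M} (h : θ ∈ box p d M N) :
    ∃ t : Fin d → ℕ, ∀ i, ((t i : ℕ) : ZMod (p ^ M)) = θ i ∧ t i * (16 * d * N ^ (i.val + 1)) ≤ p ^ M := by
  rw [box, Fintype.mem_piFinset] at h
  have : ∀ i, ∃ t : ℕ, (t : ZMod (p ^ M)) = θ i ∧ t * (16 * d * N ^ (i.val + 1)) ≤ p ^ M := by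
    intro i
    obtain ⟨t, ht, he⟩ := Finset.mem_image.1 (h i)
    rw [Finset.mem_range, Nat.lt_succ_iff] at ht
    exact ⟨t, he, (Nat.mul_le_mul_right _ ht).trans (Nat.div_mul_le_self _ _)⟩
  choose t ht using this
  exact ⟨t, ht⟩

lemma box_small {N : ℕ} (hd : 1 ≤ d) {θ : Om p d M} (h : θ ∈ box p d M N) (x : ℤ) (hx : x ∈ Icc (-N : ℤ) N) :
    ‖(ZMod.stdAddChar (pol θ x) : ℂ) - 1‖ ≤ 1 / 2 := by
  obtain ⟨t, ht⟩ := mem_box h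
  have hQ : (0 : ℝ) < ((p ^ M : ℕ) : ℝ) := by exact_mod_cast pow_pos hp.out.pos M
  have hdR : (0 : ℝ) < d := by exact_mod_cast hd
  have hpol : pol θ x = ((∑ i, (t i : ℤ) * x ^ (i.val + 1) : ℤ) : ZMod (p ^ M)) := by
    rw [pol]; push_cast
    exact Finset.sum_congr rfl fun i _ => by rw [(ht i).1]
  set z : ℤ := ∑ i, (t i : ℤ) * x ^ (i.val + 1) with hz
  have hxN : |(x : ℝ)| ≤ N := by
    rw [Finset.mem_Icc] at hx
    rw [abs_le]; constructor <;> exact_mod_cast (by omega)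
  have hzb : |(z : ℝ)| ≤ ((p ^ M : ℕ) : ℝ) / 16 := by
    rw [hz]; push_cast
    refine (Finset.abs_sum_le_sum_abs _ _).trans ?_
    refine (Finset.sum_le_card_nsmul _ _ (((p ^ M : ℕ) : ℝ) / (16 * d)) ?_).trans ?_
    · intro i _
      rw [abs_mul, abs_pow, Nat.abs_cast, le_div_iff₀ (by positivity)]
      have h2 : ((t i : ℝ)) * (16 * d * (N : ℝ) ^ (i.val + 1)) ≤ ((p ^ M : ℕ) : ℝ) := by exact_mod_cast (ht i).2
      refine le_trans ?_ h2
      calc (t i : ℝ) * |(x : ℝ)| ^ (i.val + 1) * (16 * d) ≤ (t i : ℝ) * (N : ℝ) ^ (i.val + 1) * (16 * d) := by gcongr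
        _ = _ := by ring
    · rw [nsmul_eq_mul, card_univ, Fintype.card_fin]
      apply le_of_eq; push_cast; field_simp
  rw [hpol, ZMod.stdAddChar_coe]
  have he : (2 * (π : ℂ) * Complex.I * z / ((p ^ M : ℕ) : ℂ)) = Complex.I * ((2 * π * z / ((p ^ M : ℕ) : ℝ) : ℝ) : ℂ) := by
    push_cast; ring
  rw [he]
  refine (Real.norm_exp_I_mul_ofReal_sub_one_le).trans ?_
  rw [Real.norm_eq_abs, abs_div, abs_mul, abs_of_pos hQ, abs_of_pos (by positivity), div_le_iff₀ hQ]
  have := Real.pi_lt_four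
  have := Real.pi_pos
  have : |(z : ℝ)| * π ≤ ((p ^ M : ℕ) : ℝ) / 16 * 4 := by gcongr
  linarith

lemma box_card {N : ℕ} (hd : 1 ≤ d) (hN : 1 ≤ N) :
    (Fintype.card (Om p d M) : ℝ) ≤ (16 * d) ^ d * (N : ℝ) ^ sg d * #(box p d M N) := by
  have hQ : 0 < p ^ M := pow_pos hp.out.pos M
  have hc : #(box p d M N) = ∏ i : Fin d, (p ^ M / (16 * d * N ^ (i.val + 1)) + 1) := by
    rw [box, Fintype.card_piFinset]
    refine Finset.prod_congr rfl fun i _ => ?_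
    rw [Finset.card_image_of_injOn, card_range]
    intro x hx y hy hxy
    rw [Finset.mem_coe, Finset.mem_range] at hx hy
    have hlt : p ^ M / (16 * d * N ^ (i.val + 1)) < p ^ M := Nat.div_lt_self hQ (by
      have : 1 ≤ N ^ (i.val + 1) := Nat.one_le_pow _ _ hN
      nlinarith)
    have := congrArg ZMod.val hxy
    simp only at this
    rwa [ZMod.val_natCast_of_lt (by omega), ZMod.val_natCast_of_lt (by omega)] at this
  have hs : ∏ i : Fin d, N ^ (i.val + 1) = N ^ sg d := by
    rw [Finset.prod_pow_eq_pow_sum, Fin.sum_univ_eq_sum_range (fun i => i + 1)]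
    congr 1
    have h1 := Finset.sum_range_id_mul_two (d + 1)
    rw [Finset.sum_range_succ'] at h1
    have h2 := two_sg d
    simp only [add_tsub_cancel_right] at h1
    nlinarith
  have key : Fintype.card (Om p d M) ≤ (16 * d) ^ d * N ^ sg d * #(box p d M N) := by
    rw [hc, ← hs]
    have e : (16 * d) ^ d = ∏ _i : Fin d, 16 * d := by simp
    rw [e, ← Finset.prod_mul_distrib, ← Finset.prod_mul_distrib]
    simp only [Om, Fintype.card_pi, ZMod.card]
    refine Finset.prod_le_prod' fun i _ => ?_
    have hpos : 0 < 16 * d * N ^ (i.val + 1) := by positivity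
    have := Nat.lt_div_mul_add (a := p ^ M) hpos
    nlinarith
  exact_mod_cast key

lemma LS {D : ℝ} (hd : 1 ≤ d) (hD : Dec p d n D) (hD0 : 0 ≤ D) (N : ℕ) (hN1 : 1 ≤ N) (hN : 2 * N + 1 ≤ p ^ n)
    (a : ℤ → ℂ) (ha : ∀ x, ‖a x‖ ≤ 1) (I : Finset ℕ) (β : ℕ → Om p d (d * n)) (mult : ℝ) (hm0 : 0 ≤ mult)
    (hm : ∀ γ, (#{m ∈ I | γ - β m ∈ box p d (d * n) N} : ℝ) ≤ mult) :
    ∑ m ∈ I, Nn a (Icc (-N : ℤ) N) (β m) ^ sg d ≤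
      mult * ((16 * d) ^ d * (N : ℝ) ^ sg d) * (D * (4 * (2 * N + 1))) ^ sg d := by
  have hne : (box p d (d * n) N).Nonempty := by
    rw [box, Fintype.piFinset_nonempty]
    intro i; simp
  obtain ⟨a', ha', H⟩ := avg (box p d (d * n) N) hne (Icc (-N : ℤ) N) a ha
    (fun x hx θ hθ => box_small hd hθ x hx) (sg d)
  have hBc : (0 : ℝ) < #(box p d (d * n) N) := by exact_mod_cast hne.card_pos
  have hE := mv hd hD N hN a' ha'
  have hE0 : 0 ≤ 𝔼 β : Om p d (d * n), Nn a' (Icc (-N : ℤ) N) β ^ sg d :=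
    Finset.expect_nonneg fun _ _ => pow_nonneg (Nn_nonneg _ _ _) _
  have hsum : ∑ γ : Om p d (d * n), Nn a' (Icc (-N : ℤ) N) γ ^ sg d
      = Fintype.card (Om p d (d * n)) * 𝔼 β : Om p d (d * n), Nn a' (Icc (-N : ℤ) N) β ^ sg d := by
    rw [← Fintype.card_mul_expect]
  calc ∑ m ∈ I, Nn a (Icc (-N : ℤ) N) (β m) ^ sg d
      ≤ ∑ m ∈ I, (#(box p d (d * n) N) : ℝ)⁻¹ * ∑ θ ∈ box p d (d * n) N, Nn a' (Icc (-N : ℤ) N) (β m + θ) ^ sg d :=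
        Finset.sum_le_sum fun m _ => H (β m)
    _ = (#(box p d (d * n) N) : ℝ)⁻¹ * ∑ m ∈ I, ∑ θ ∈ box p d (d * n) N, Nn a' (Icc (-N : ℤ) N) (β m + θ) ^ sg d := by
        rw [Finset.mul_sum]
    _ ≤ (#(box p d (d * n) N) : ℝ)⁻¹ * (mult * ∑ γ, Nn a' (Icc (-N : ℤ) N) γ ^ sg d) := by
        gcongr
        exact avg2 _ (fun γ => Nn a' (Icc (-N : ℤ) N) γ ^ sg d) (fun γ => pow_nonneg (Nn_nonneg _ _ _) _) I β mult hm
    _ ≤ (#(box p d (d * n) N) : ℝ)⁻¹ * (mult * (((16 * d) ^ d * (N : ℝ) ^ sg d * #(box p d (d * n) N)) * (D * (4 * (2 * N + 1))) ^ sg d)) := by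
        rw [hsum]
        gcongr
        exact box_card hd hN1
    _ = _ := by field_simp
end
end VMV

namespace VMV
open Finset
section
variable {L : ℕ} [NeZero L]

def Kk (L N : ℕ) [NeZero L] (t : ZMod L) : ℂ :=
  (L : ℂ)⁻¹ * ∑ y ∈ Icc (1 : ℤ) N, ZMod.stdAddChar (-(t * (y : ZMod L)))

lemma Kk_sum (N : ℕ) (hL : 3 * N < L) (x : ℤ) (hx1 : -N ≤ x) (hx2 : x ≤ 2 * N) :
    ∑ t, Kk L N t * ZMod.stdAddChar (t * (x : ZMod L)) = if x ∈ Icc (1 : ℤ) N then 1 else 0 := by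
  have hLc : (L : ℂ) ≠ 0 := by exact_mod_cast NeZero.ne L
  have h1 : ∀ t, Kk L N t * ZMod.stdAddChar (t * (x : ZMod L))
      = ∑ y ∈ Icc (1 : ℤ) N, (L : ℂ)⁻¹ * ZMod.stdAddChar (t * (((x - y : ℤ)) : ZMod L)) := by
    intro t
    rw [Kk, Finset.mul_sum, Finset.sum_mul]
    refine Finset.sum_congr rfl fun y _ => ?_
    rw [mul_assoc, ← AddChar.map_add_eq_mul]
    congr 2
    push_cast; ring
  simp only [h1]
  rw [Finset.sum_comm]
  have h2 : ∀ y ∈ Icc (1 : ℤ) N, ∑ t, (L : ℂ)⁻¹ * ZMod.stdAddChar (t * (((x - y : ℤ)) : ZMod L)) = if x = y then 1 else 0 := by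
    intro y hy
    rw [Finset.mem_Icc] at hy
    rw [← Finset.mul_sum, AddChar.sum_mulShift _ (ZMod.isPrimitive_stdAddChar L)]
    have : (((x - y : ℤ)) : ZMod L) = 0 ↔ x = y := by
      rw [ZMod.intCast_zmod_eq_zero_iff_dvd]
      constructor
      · intro h
        have := Int.eq_zero_of_abs_lt_dvd h (by rw [abs_lt]; omega)
        omega
      · rintro rfl; simp
    simp only [this, ZMod.card]
    split_ifs
    · exact inv_mul_cancel₀ hLc
    · simp
  rw [Finset.sum_congr rfl h2, Finset.sum_ite_eq]

lemma sin_lb (u : ℝ) (h0 : 0 ≤ u) (h1 : u ≤ 1) : 2 * u * (1 - u) ≤ Real.sin (π * u) := by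
  have hp := Real.pi_pos
  rcases le_total u (1 / 2) with h | h
  · have := Real.mul_le_sin (x := π * u) (by positivity) (by nlinarith)
    have e : 2 / π * (π * u) = 2 * u := by field_simp
    nlinarith
  · have := Real.mul_le_sin (x := π * (1 - u)) (mul_nonneg hp.le (by linarith)) (by nlinarith)
    have e : 2 / π * (π * (1 - u)) = 2 * (1 - u) := by field_simp
    have e2 : Real.sin (π * (1 - u)) = Real.sin (π * u) := by
      rw [show π * (1 - u) = π - π * u by ring, Real.sin_pi_sub]
    rw [e, e2] at this
    nlinarith

lemma Kk_bd (N : ℕ) (t : ZMod L) (ht : t ≠ 0) :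
    ‖Kk L N t‖ ≤ 1 / 2 * ((t.val : ℝ)⁻¹ + ((L : ℝ) - t.val)⁻¹) := by
  have hL0 : (0 : ℝ) < L := by exact_mod_cast NeZero.pos L
  have hv0 : (0 : ℝ) < t.val := by
    have : t.val ≠ 0 := by rwa [Ne, ZMod.val_eq_zero]
    exact_mod_cast Nat.pos_of_ne_zero this
  have hvL : (t.val : ℝ) < L := by exact_mod_cast ZMod.val_lt t
  set z : ℂ := ZMod.stdAddChar (-t) with hz
  have hznorm : ‖z‖ = 1 := AddChar.norm_apply _ _
  have hlow : 4 * ((t.val : ℝ) / L) * (1 - (t.val : ℝ) / L) ≤ ‖z - 1‖ := by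
    have e1 : -t = ((-(t.val : ℤ) : ℤ) : ZMod L) := by
      push_cast; rw [ZMod.natCast_zmod_val]
    rw [hz, e1, ZMod.stdAddChar_coe]
    have he : (2 * (π : ℂ) * Complex.I * ((-(t.val : ℤ) : ℤ) : ℂ) / (L : ℂ)) = Complex.I * ((-(2 * (π * (t.val / L))) : ℝ) : ℂ) := by
      push_cast; ring
    rw [he, Complex.norm_exp_I_mul_ofReal_sub_one, Real.norm_eq_abs]
    rw [show -(2 * (π * ((t.val : ℝ) / L))) / 2 = -(π * ((t.val : ℝ) / L)) by ring, Real.sin_neg, mul_neg, abs_neg]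
    refine le_trans ?_ (le_abs_self _)
    have := sin_lb ((t.val : ℝ) / L) (by positivity) (by rw [div_le_one hL0]; exact hvL.le)
    linarith
  have hpos : 0 < 4 * ((t.val : ℝ) / L) * (1 - (t.val : ℝ) / L) := by
    have : 0 < 1 - (t.val : ℝ) / L := by rw [sub_pos, div_lt_one hL0]; exact hvL
    positivity
  have hsum : ∑ y ∈ Icc (1 : ℤ) N, (ZMod.stdAddChar (-(t * (y : ZMod L))) : ℂ) = z * ∑ i ∈ range N, z ^ i := by
    rw [Finset.mul_sum]
    symm
    refine Finset.sum_bij (fun i _ => ((i : ℤ) + 1)) ?_ ?_ ?_ ?_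
    · intro i hi; rw [Finset.mem_range] at hi; rw [Finset.mem_Icc]; omega
    · intro i _ j _ h; simpa using h
    · intro y hy
      rw [Finset.mem_Icc] at hy
      exact ⟨(y - 1).toNat, by rw [Finset.mem_range]; omega, by omega⟩
    · intro i _
      rw [← pow_succ', hz, ← AddChar.map_nsmul_eq_pow]
      congr 1
      rw [nsmul_eq_mul]; push_cast; ring
  have hgeo : ‖∑ i ∈ range N, z ^ i‖ * ‖z - 1‖ ≤ 2 := by
    rw [← norm_mul, geom_sum_mul]
    refine (norm_sub_le _ _).trans ?_
    rw [norm_pow, hznorm]; norm_num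
  have hg2 : ‖∑ i ∈ range N, z ^ i‖ ≤ 2 / (4 * ((t.val : ℝ) / L) * (1 - (t.val : ℝ) / L)) := by
    rw [le_div_iff₀ hpos]
    refine le_trans ?_ hgeo
    gcongr
  rw [Kk, hsum, norm_mul, norm_mul, hznorm, one_mul, norm_inv, Complex.norm_natCast]
  have hne : (L : ℝ) - t.val ≠ 0 := by linarith
  calc (L : ℝ)⁻¹ * ‖∑ i ∈ range N, z ^ i‖ ≤ (L : ℝ)⁻¹ * (2 / (4 * ((t.val : ℝ) / L) * (1 - (t.val : ℝ) / L))) := by gcongr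
    _ = _ := by
      have : 1 - (t.val : ℝ) / L = (L - t.val) / L := by field_simp
      rw [this]
      field_simp
      ring

lemma Kk_l1 (N : ℕ) (hL : 3 * N < L) : ∑ t, ‖Kk L N t‖ ≤ 2 + Real.log L := by
  have hL0 : (0 : ℝ) < L := by exact_mod_cast NeZero.pos L
  set g : ℕ → ℝ := fun v => if v = 0 then 1 else 1 / 2 * ((v : ℝ)⁻¹ + ((L : ℝ) - v)⁻¹) with hg
  have h1 : ∀ t : ZMod L, ‖Kk L N t‖ ≤ g t.val := by
    intro t
    by_cases ht : t = 0
    · subst ht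
      simp only [hg, ZMod.val_zero, if_true]
      rw [Kk, norm_mul, norm_inv, Complex.norm_natCast, inv_mul_le_iff₀ hL0, mul_one]
      refine (norm_sum_le _ _).trans ?_
      simp only [AddChar.norm_apply, sum_const, nsmul_eq_mul, mul_one, Int.card_Icc]
      have : ((N : ℤ) + 1 - 1).toNat ≤ L := by omega
      exact_mod_cast this
    · have hv : t.val ≠ 0 := by rwa [Ne, ZMod.val_eq_zero]
      simp only [hg, hv, if_false]
      exact Kk_bd N t ht
  have h2 : ∑ t : ZMod L, g t.val = ∑ v ∈ range L, g v := by
    refine Finset.sum_bij (fun t _ => t.val) ?_ ?_ ?_ ?_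
    · intro t _; rw [Finset.mem_range]; exact ZMod.val_lt t
    · intro a _ b _ h; exact ZMod.val_injective _ h
    · intro v hv; rw [Finset.mem_range] at hv
      exact ⟨(v : ZMod L), mem_univ _, ZMod.val_natCast_of_lt hv⟩
    · intro t _; rfl
  refine (Finset.sum_le_sum fun t _ => h1 t).trans ?_
  rw [h2]
  obtain ⟨l, rfl⟩ : ∃ l, L = l + 1 := ⟨L - 1, by have := NeZero.pos L; omega⟩
  rw [Finset.sum_range_succ']
  have h3 : ∀ i ∈ range l, g (i + 1) = 1 / 2 * (((i + 1 : ℕ) : ℝ)⁻¹ + ((l - 1 - i + 1 : ℕ) : ℝ)⁻¹) := by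
    intro i hi
    rw [Finset.mem_range] at hi
    simp only [hg, Nat.succ_ne_zero, if_false]
    congr 3
    have : l - 1 - i + 1 = l - i := by omega
    rw [this, Nat.cast_sub hi.le]
    push_cast; ring
  rw [Finset.sum_congr rfl h3, ← Finset.mul_sum, Finset.sum_add_distrib,
    Finset.sum_range_reflect (fun i => (((i + 1 : ℕ) : ℝ)⁻¹)) l]
  have h4 : ∑ i ∈ range l, (((i + 1 : ℕ) : ℝ)⁻¹) = (harmonic l : ℝ) := by
    rw [harmonic]; push_cast; rfl
  have h5 := harmonic_le_one_add_log l
  have h6 : Real.log l ≤ Real.log ((l + 1 : ℕ) : ℝ) := by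
    rcases Nat.eq_zero_or_pos l with rfl | h
    · simp
    · apply Real.log_le_log (by exact_mod_cast h); push_cast; linarith
  rw [h4]
  simp only [hg, if_true]
  linarith

lemma completion (N : ℕ) (hL : 3 * N < L) (f : ℤ → ℂ) (X : ℝ)
    (hX : ∀ t : ZMod L, ∑ m ∈ Icc 1 N, ‖∑ ν ∈ Icc (-N : ℤ) N, ZMod.stdAddChar (t * ((ν + m : ℤ) : ZMod L)) * f (ν + m)‖ ≤ X) :
    N * ‖∑ x ∈ Icc (1 : ℤ) N, f x‖ ≤ (2 + Real.log L) * X := by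
  have h1 : ∀ m ∈ Icc 1 N, ‖∑ x ∈ Icc (1 : ℤ) N, f x‖ ≤ ∑ t, ‖Kk L N t‖ * ‖∑ ν ∈ Icc (-N : ℤ) N, ZMod.stdAddChar (t * ((ν + m : ℤ) : ZMod L)) * f (ν + m)‖ := by
    intro m hm
    rw [Finset.mem_Icc] at hm
    have e : ∑ x ∈ Icc (1 : ℤ) N, f x = ∑ t, Kk L N t * ∑ ν ∈ Icc (-N : ℤ) N, ZMod.stdAddChar (t * ((ν + m : ℤ) : ZMod L)) * f (ν + m) := by
      simp only [Finset.mul_sum]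
      rw [Finset.sum_comm]
      have : ∀ ν ∈ Icc (-N : ℤ) N, ∑ t, Kk L N t * ((ZMod.stdAddChar (t * ((ν + m : ℤ) : ZMod L)) : ℂ) * f (ν + m))
          = if ν + m ∈ Icc (1 : ℤ) N then f (ν + m) else 0 := by
        intro ν hν
        rw [Finset.mem_Icc] at hν
        simp only [← mul_assoc]
        rw [← Finset.sum_mul, Kk_sum N hL _ (by omega) (by omega)]
        split_ifs <;> simp
      rw [Finset.sum_congr rfl this, ← Finset.sum_filter]
      symm
      refine Finset.sum_bij (fun ν _ => ν + m) ?_ ?_ ?_ ?_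
      · intro ν hν; exact (Finset.mem_filter.1 hν).2
      · intro a _ b _ h; simpa using h
      · intro x hx
        refine ⟨x - m, ?_, by ring⟩
        rw [Finset.mem_filter, sub_add_cancel]
        refine ⟨?_, hx⟩
        rw [Finset.mem_Icc] at hx ⊢
        omega
      · intro ν _; rfl
    rw [e]
    refine (norm_sum_le _ _).trans (le_of_eq ?_)
    simp only [norm_mul]
  have h2 := Finset.sum_le_sum h1
  rw [sum_const, nsmul_eq_mul, Nat.card_Icc, add_tsub_cancel_right, Finset.sum_comm] at h2
  have hX0 : 0 ≤ X := le_trans (Finset.sum_nonneg fun _ _ => norm_nonneg _) (hX 0)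
  refine h2.trans ?_
  calc _ ≤ ∑ t, ‖Kk L N t‖ * X := by
        refine Finset.sum_le_sum fun t _ => ?_
        rw [← Finset.mul_sum]
        exact mul_le_mul_of_nonneg_left (hX t) (norm_nonneg _)
    _ = (∑ t, ‖Kk L N t‖) * X := by rw [Finset.sum_mul]
    _ ≤ _ := mul_le_mul_of_nonneg_right (Kk_l1 N hL) hX0
end

section
variable {p : ℕ} [hp : Fact p.Prime] {d M : ℕ}

def bet (d : ℕ) (A : ℕ → ZMod (p ^ M)) (m : ℕ) : Om p d M :=
  fun i => ∑ h ∈ Icc 1 (d + 1), (h.choose (i.val + 1) : ZMod (p ^ M)) * A h * (m : ZMod (p ^ M)) ^ (h - (i.val + 1))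

lemma expand (A : ℕ → ZMod (p ^ M)) (m : ℕ) (ν : ℤ) :
    ∑ h ∈ Icc 1 (d + 1), A h * ((ν + m : ℤ) : ZMod (p ^ M)) ^ h
      = (∑ h ∈ Icc 1 (d + 1), A h * (m : ZMod (p ^ M)) ^ h) + pol (bet d A m) ν + A (d + 1) * (ν : ZMod (p ^ M)) ^ (d + 1) := by
  have h1 : ∀ h ∈ Icc 1 (d + 1), A h * ((ν + m : ℤ) : ZMod (p ^ M)) ^ h
      = ∑ i ∈ range (d + 2), (h.choose i : ZMod (p ^ M)) * A h * (m : ZMod (p ^ M)) ^ (h - i) * (ν : ZMod (p ^ M)) ^ i := by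
    intro h hh
    rw [Finset.mem_Icc] at hh
    push_cast
    rw [add_pow, Finset.mul_sum]
    rw [← Finset.sum_subset (Finset.range_subset_range.2 (show h + 1 ≤ d + 2 by omega))]
    · exact Finset.sum_congr rfl fun i _ => by ring
    · intro i _ hi
      rw [Finset.mem_range] at hi
      rw [Nat.choose_eq_zero_of_lt (by omega)]; simp
  rw [Finset.sum_congr rfl h1, Finset.sum_comm, Finset.sum_range_succ, Finset.sum_range_succ']
  have h2 : ∑ h ∈ Icc 1 (d + 1), (h.choose (d + 1) : ZMod (p ^ M)) * A h * (m : ZMod (p ^ M)) ^ (h - (d + 1)) * (ν : ZMod (p ^ M)) ^ (d + 1)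
      = A (d + 1) * (ν : ZMod (p ^ M)) ^ (d + 1) := by
    rw [Finset.sum_eq_single (d + 1)]
    · simp
    · intro h hh hne
      rw [Finset.mem_Icc] at hh
      rw [Nat.choose_eq_zero_of_lt (by omega)]; simp
    · intro h; exact absurd (Finset.mem_Icc.2 ⟨by omega, le_rfl⟩) h
  rw [h2]
  congr 1
  rw [add_comm]
  congr 1
  · exact Finset.sum_congr rfl fun h _ => by simp
  · rw [pol, ← Fin.sum_univ_eq_sum_range (fun i => ∑ h ∈ Icc 1 (d + 1), (h.choose (i + 1) : ZMod (p ^ M)) * A h * (m : ZMod (p ^ M)) ^ (h - (i + 1)) * (ν : ZMod (p ^ M)) ^ (i + 1))]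
    refine Finset.sum_congr rfl fun i _ => ?_
    rw [bet, Finset.sum_mul]

lemma G_norm (A : ℕ → ZMod (p ^ M)) (m : ℕ) (s : Finset ℤ) :
    ‖∑ ν ∈ s, (ZMod.stdAddChar (∑ h ∈ Icc 1 (d + 1), A h * ((ν + m : ℤ) : ZMod (p ^ M)) ^ h) : ℂ)‖
      = ‖Fs (fun ν => ZMod.stdAddChar (A (d + 1) * (ν : ZMod (p ^ M)) ^ (d + 1))) s (bet d A m)‖ := by
  have : ∑ ν ∈ s, (ZMod.stdAddChar (∑ h ∈ Icc 1 (d + 1), A h * ((ν + m : ℤ) : ZMod (p ^ M)) ^ h) : ℂ)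
      = ZMod.stdAddChar (∑ h ∈ Icc 1 (d + 1), A h * (m : ZMod (p ^ M)) ^ h) * Fs (fun ν => ZMod.stdAddChar (A (d + 1) * (ν : ZMod (p ^ M)) ^ (d + 1))) s (bet d A m) := by
    rw [Fs, Finset.mul_sum]
    refine Finset.sum_congr rfl fun ν _ => ?_
    rw [expand, AddChar.map_add_eq_mul, AddChar.map_add_eq_mul]
    ring
  rw [this, norm_mul, AddChar.norm_apply, one_mul]
end
end VMV

namespace VMV
open Finset

lemma mult_bd (d : ℕ) : ∃ C1 : ℝ, 0 ≤ C1 ∧ ∀ (p : ℕ) [Fact p.Prime] (M N : ℕ), 1 ≤ N → N ^ (d + 1) ≤ p ^ M →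
    ∀ (Az : ℕ → ℤ) (j : ℕ) (x : ℝ) (a : ℤ) (q : ℕ), 2 ≤ j → j ≤ d + 1 → 0 < q → Int.gcd a (q : ℤ) = 1 →
      |x - (a : ℝ) / (q : ℝ)| ≤ ((q : ℝ)) ⁻¹ ^ 2 → |x - Az j / ((p ^ M : ℕ) : ℝ)| ≤ (((p ^ M : ℕ) : ℝ))⁻¹ →
      ∀ γ : Om p d M, (#{m ∈ Icc 1 N | γ - bet d (fun h => (Az h : ZMod (p ^ M))) m ∈ box p d M N} : ℝ) ≤
        C1 * (N * ((q : ℝ)⁻¹ + (N : ℝ)⁻¹ + q * ((N : ℝ) ^ j)⁻¹)) := by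
  obtain ⟨c, hc, κ, hκ, H⟩ := elim (d + 1) d le_rfl
  refine ⟨2 * c + 4 * (κ + c) + 8 * c * (κ + c) + 1, by positivity, ?_⟩
  intro p hp M N hN hNQ Az j x a q hj hjd hq hg hxa hxA γ
  set Q : ℕ := p ^ M with hQdef
  have hQ0 : 0 < Q := pow_pos hp.out.pos M
  have hQ : (0 : ℝ) < (Q : ℝ) := by exact_mod_cast hQ0
  have hNR : (1 : ℝ) ≤ N := by exact_mod_cast hN
  have hN0 : (0 : ℝ) < N := by linarith
  have hqR : (0 : ℝ) < q := by exact_mod_cast hq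
  have hcnt := count x a q hq hg hxa ((κ + c) * (N * ((N : ℝ) ^ j)⁻¹)) (by positivity) c N hc
    {m ∈ Icc 1 N | γ - bet d (fun h => (Az h : ZMod (p ^ M))) m ∈ box p d M N}
    (fun m hm => (Finset.mem_Icc.1 (Finset.mem_filter.1 hm).1).2) ?_
  · refine hcnt.trans ?_
    have e : (2 * c * N / q + 1) * (4 * q * ((κ + c) * (N * ((N : ℝ) ^ j)⁻¹)) + 1)
        = 8 * c * (κ + c) * (N * N * ((N : ℝ) ^ j)⁻¹) + 2 * c * (N * (q : ℝ)⁻¹) + 4 * (κ + c) * (N * (q * ((N : ℝ) ^ j)⁻¹)) + 1 := by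
      field_simp
      ring
    rw [e]
    have h1 : N * N * ((N : ℝ) ^ j)⁻¹ ≤ 1 := by
      rw [← div_eq_mul_inv, div_le_one (by positivity)]
      calc (N : ℝ) * N = N ^ 2 := by ring
        _ ≤ N ^ j := pow_le_pow_right₀ hNR hj
    have h2 : 8 * c * (κ + c) * (N * N * ((N : ℝ) ^ j)⁻¹) ≤ 8 * c * (κ + c) * 1 := by gcongr
    have e2 : (N : ℝ) * ((q : ℝ)⁻¹ + (N : ℝ)⁻¹ + q * ((N : ℝ) ^ j)⁻¹) = N * (q : ℝ)⁻¹ + 1 + N * (q * ((N : ℝ) ^ j)⁻¹) := by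
      field_simp
    rw [e2]
    have u : 0 ≤ N * (q : ℝ)⁻¹ := by positivity
    have v : 0 ≤ N * (q * ((N : ℝ) ^ j)⁻¹) := by positivity
    have hcR : (0 : ℝ) ≤ c := by positivity
    generalize N * (q : ℝ)⁻¹ = U at *
    generalize N * (q * ((N : ℝ) ^ j)⁻¹) = V at *
    have w1 : 0 ≤ c * (κ + c) := by positivity
    have w2 : 0 ≤ κ + c := by positivity
    have := mul_nonneg w1 u
    have := mul_nonneg w1 v
    have := mul_nonneg w2 u
    have := mul_nonneg w2 v
    have := mul_nonneg hcR u
    have := mul_nonneg hcR v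
    nlinarith
  · intro m hm m' hm'
    rw [Finset.mem_filter, Finset.mem_Icc] at hm hm'
    obtain ⟨t, ht⟩ := mem_box hm.2
    obtain ⟨t', ht'⟩ := mem_box hm'.2
    have h1 := H N hN (fun h => Az h / (Q : ℝ)) m m' (by rw [Nat.abs_cast]; exact_mod_cast hm.1.2) (by rw [Nat.abs_cast]; exact_mod_cast hm'.1.2) ?_ j (by omega) hjd
    · have h2 : nr (c * ((m : ℝ) - m') * (x - Az j / (Q : ℝ))) (c * (N * ((N : ℝ) ^ j)⁻¹)) := by
        refine ⟨0, ?_⟩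
        rw [Int.cast_zero, sub_zero, abs_mul, abs_mul, Nat.abs_cast, mul_assoc]
        have hmm : |(m : ℝ) - m'| ≤ N := by
          have a1 : (m : ℝ) ≤ N := by exact_mod_cast hm.1.2
          have a2 : (m' : ℝ) ≤ N := by exact_mod_cast hm'.1.2
          have a3 : (0 : ℝ) ≤ m := by positivity
          have a4 : (0 : ℝ) ≤ m' := by positivity
          rw [abs_le]; constructor <;> linarith
        have hQN : (Q : ℝ)⁻¹ ≤ ((N : ℝ) ^ j)⁻¹ := by
          apply inv_anti₀ (by positivity)
          have : N ^ j ≤ Q := (Nat.pow_le_pow_right hN hjd).trans hNQ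
          exact_mod_cast this
        have := hxA.trans hQN
        gcongr
      have h3 := nr_add h1 h2
      have e : c * (((m : ℤ) : ℝ) - ((m' : ℤ) : ℝ)) * (Az j / (Q : ℝ)) + c * ((m : ℝ) - m') * (x - Az j / (Q : ℝ)) = c * ((m : ℝ) - m') * x := by
        push_cast; ring
      rw [e] at h3
      refine nr_mono h3 (le_of_eq (by ring))
    · intro i hi1 hi2
      obtain ⟨i0, rfl⟩ : ∃ i0, i = i0 + 1 := ⟨i - 1, by omega⟩
      have hi0 : i0 < d := by omega
      have a1 := ht ⟨i0, hi0⟩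
      have a2 := ht' ⟨i0, hi0⟩
      simp only [Pi.sub_apply, bet] at a1 a2
      set Z : ℤ := ∑ h ∈ Icc 1 (d + 1), (h.choose (i0 + 1) : ℤ) * Az h * ((m : ℤ) ^ (h - (i0 + 1)) - (m' : ℤ) ^ (h - (i0 + 1))) with hZ
      have hZmod : ((Z - ((t' ⟨i0, hi0⟩ : ℤ) - t ⟨i0, hi0⟩) : ℤ) : ZMod Q) = 0 := by
        have e1 := a1.1
        have e2 := a2.1
        rw [hZ]
        simp only [mul_sub, Finset.sum_sub_distrib]
        push_cast
        rw [e1, e2]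
        ring
      rw [ZMod.intCast_zmod_eq_zero_iff_dvd] at hZmod
      obtain ⟨z, hz⟩ := hZmod
      refine ⟨z, ?_⟩
      have hzR : (Z : ℝ) - ((t' ⟨i0, hi0⟩ : ℝ) - t ⟨i0, hi0⟩) = Q * z := by exact_mod_cast hz
      have hS : ∑ h ∈ Icc 1 (d + 1), (h.choose (i0 + 1) : ℝ) * (Az h / (Q : ℝ)) * (((m : ℤ) : ℝ) ^ (h - (i0 + 1)) - ((m' : ℤ) : ℝ) ^ (h - (i0 + 1))) = Z / Q := by
        rw [hZ]; push_cast
        rw [Finset.sum_div]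
        exact Finset.sum_congr rfl fun h _ => by ring
      rw [hS]
      have e3 : (Z : ℝ) / Q - z = ((t' ⟨i0, hi0⟩ : ℝ) - t ⟨i0, hi0⟩) / Q := by
        field_simp; linarith
      rw [e3, abs_div, abs_of_pos hQ, div_le_iff₀ hQ]
      have hNp : (0 : ℝ) < (N : ℝ) ^ (i0 + 1) := by positivity
      have bb : ∀ s : ℕ, s * (16 * d * N ^ (i0 + 1)) ≤ Q → (s : ℝ) ≤ ((N : ℝ) ^ (i0 + 1))⁻¹ * Q := by
        intro s hs
        rw [inv_mul_eq_div, le_div_iff₀ hNp]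
        have : s * N ^ (i0 + 1) ≤ Q := by
          refine le_trans ?_ hs
          apply Nat.mul_le_mul_left
          nlinarith [Nat.pow_pos (n := i0 + 1) hN]
        exact_mod_cast this
      have b1 := bb _ a1.2
      have b2 := bb _ a2.2
      have b3 : (0 : ℝ) ≤ t ⟨i0, hi0⟩ := by positivity
      have b4 : (0 : ℝ) ≤ t' ⟨i0, hi0⟩ := by positivity
      rw [abs_le]; constructor <;> linarith

lemma main_disc (d : ℕ) (hd : 1 ≤ d) : ∃ C2 : ℝ, 0 ≤ C2 ∧ ∀ (p : ℕ) [Fact p.Prime] (n N : ℕ) (D : ℝ), 0 ≤ D → Dec p d n D →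
    1 ≤ N → N ^ (d + 1) ≤ p ^ (d * n) → 3 * N < p ^ (d * n) → 2 * N + 1 ≤ p ^ n →
    ∀ (Az : ℕ → ℤ) (j : ℕ) (x : ℝ) (a : ℤ) (q : ℕ), 2 ≤ j → j ≤ d + 1 → 0 < q → Int.gcd a (q : ℤ) = 1 →
      |x - (a : ℝ) / (q : ℝ)| ≤ ((q : ℝ)) ⁻¹ ^ 2 → |x - Az j / ((p ^ (d * n) : ℕ) : ℝ)| ≤ (((p ^ (d * n) : ℕ) : ℝ))⁻¹ →
      ‖∑ y ∈ Icc (1 : ℤ) N, (ZMod.stdAddChar (∑ h ∈ Icc 1 (d + 1), (Az h : ZMod (p ^ (d * n))) * (y : ZMod (p ^ (d * n))) ^ h) : ℂ)‖ ^ (2 * sg d)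
        ≤ C2 * (2 + Real.log ((p ^ (d * n) : ℕ) : ℝ)) ^ (2 * sg d) * D ^ sg d * (N : ℝ) ^ (2 * sg d) *
          ((q : ℝ)⁻¹ + (N : ℝ)⁻¹ + q * ((N : ℝ) ^ j)⁻¹) := by
  obtain ⟨C1, hC1, H1⟩ := mult_bd d
  refine ⟨C1 * (16 * d) ^ d * 12 ^ sg d, by positivity, ?_⟩
  intro p hp n N D hD0 hD hN hNQ h3N h2N Az j x a q hj hjd hq hg hxa hxA
  set R : ℝ := ((q : ℝ)⁻¹ + (N : ℝ)⁻¹ + q * ((N : ℝ) ^ j)⁻¹) with hR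
  have hR0 : 0 ≤ R := by positivity
  have hNR : (1 : ℝ) ≤ N := by exact_mod_cast hN
  have hN0 : (0 : ℝ) < N := by linarith
  have hs := sg_pos hd
  have hQ0 : 0 < p ^ (d * n) := pow_pos hp.out.pos _
  have hlog : 0 ≤ Real.log ((p ^ (d * n) : ℕ) : ℝ) := Real.log_natCast_nonneg _
  obtain ⟨X, hX0, hX⟩ := exists_root (r := 2 * sg d) (by omega)
    (x := (N : ℝ) ^ (2 * sg d) * (C1 * R) * ((16 * d) ^ d * (N : ℝ) ^ sg d) * (D * (12 * N)) ^ sg d) (by positivity)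
  have hcomp := completion N h3N (fun y => (ZMod.stdAddChar (∑ h ∈ Icc 1 (d + 1), (Az h : ZMod (p ^ (d * n))) * (y : ZMod (p ^ (d * n))) ^ h) : ℂ)) X ?_
  · have h1 : (N * ‖∑ y ∈ Icc (1 : ℤ) N, (ZMod.stdAddChar (∑ h ∈ Icc 1 (d + 1), (Az h : ZMod (p ^ (d * n))) * (y : ZMod (p ^ (d * n))) ^ h) : ℂ)‖) ^ (2 * sg d)
        ≤ ((2 + Real.log ((p ^ (d * n) : ℕ) : ℝ)) * X) ^ (2 * sg d) :=
      pow_le_pow_left₀ (by positivity) hcomp _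
    rw [mul_pow, mul_pow, hX] at h1
    have h2 : (0 : ℝ) < (N : ℝ) ^ (2 * sg d) := by positivity
    refine le_of_mul_le_mul_left (h1.trans (le_of_eq ?_)) h2
    rw [mul_pow D, mul_pow 12]
    have e : (N : ℝ) ^ (2 * sg d) = (N : ℝ) ^ sg d * (N : ℝ) ^ sg d := by rw [two_mul, pow_add]
    rw [e]; ring
  · intro t
    obtain ⟨tz, rfl⟩ := ZMod.intCast_surjective t
    set Bz : ℕ → ℤ := fun h => Az h + if h = 1 then tz else 0 with hBz
    have hG : ∀ m : ℕ, ‖∑ ν ∈ Icc (-N : ℤ) N, (ZMod.stdAddChar ((tz : ZMod (p ^ (d * n))) * ((ν + m : ℤ) : ZMod (p ^ (d * n)))) : ℂ) *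
        ZMod.stdAddChar (∑ h ∈ Icc 1 (d + 1), (Az h : ZMod (p ^ (d * n))) * ((ν + m : ℤ) : ZMod (p ^ (d * n))) ^ h)‖
        = ‖Fs (fun ν => ZMod.stdAddChar ((Bz (d + 1) : ZMod (p ^ (d * n))) * (ν : ZMod (p ^ (d * n))) ^ (d + 1))) (Icc (-N : ℤ) N) (bet d (fun h => (Bz h : ZMod (p ^ (d * n)))) m)‖ := by
      intro m
      rw [← G_norm (fun h => (Bz h : ZMod (p ^ (d * n)))) m (Icc (-N : ℤ) N)]
      congr 1
      refine Finset.sum_congr rfl fun ν _ => ?_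
      rw [← AddChar.map_add_eq_mul]
      congr 1
      simp only [hBz]
      push_cast
      simp only [add_mul, Finset.sum_add_distrib]
      rw [add_comm]
      congr 1
      rw [Finset.sum_eq_single 1]
      · simp
      · intro h _ hne; simp [hne]
      · intro h; exact absurd (Finset.mem_Icc.2 ⟨le_rfl, by omega⟩) h
    simp only [hG]
    have hmult := H1 p (d * n) N hN hNQ Bz j x a q hj hjd hq hg hxa (by
      have : Bz j = Az j := by simp only [hBz]; rw [if_neg (by omega)]; simp
      rw [this]; exact hxA)
    have hLS := LS hd hD hD0 N hN h2N (fun ν => ZMod.stdAddChar ((Bz (d + 1) : ZMod (p ^ (d * n))) * (ν : ZMod (p ^ (d * n))) ^ (d + 1)))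
      (fun ν => by rw [AddChar.norm_apply]) (Icc 1 N) (bet d (fun h => (Bz h : ZMod (p ^ (d * n))))) (C1 * (N * R)) (by positivity) hmult
    simp only [Nn, ← pow_mul] at hLS
    obtain ⟨e, he⟩ : ∃ e, 2 * sg d = e + 1 := ⟨2 * sg d - 1, by omega⟩
    have hpm := pow_sum_div_card_le_sum_pow (s := Icc 1 N) (f := fun m => ‖Fs (fun ν => ZMod.stdAddChar ((Bz (d + 1) : ZMod (p ^ (d * n))) * (ν : ZMod (p ^ (d * n))) ^ (d + 1))) (Icc (-N : ℤ) N) (bet d (fun h => (Bz h : ZMod (p ^ (d * n)))) m)‖) (fun _ _ => norm_nonneg _) e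
    rw [← he, Nat.card_Icc, add_tsub_cancel_right, div_le_iff₀ (by positivity)] at hpm
    refine le_of_pow_le_pow_left₀ (n := 2 * sg d) (by omega) hX0 ?_
    rw [hX]
    refine hpm.trans ((mul_le_mul_of_nonneg_right hLS (by positivity)).trans ?_)
    have e2 : (N : ℝ) ^ (2 * sg d) = N ^ e * N := by rw [he, pow_succ]
    rw [e2]
    calc C1 * (N * R) * ((16 * d) ^ d * (N : ℝ) ^ sg d) * (D * (4 * (2 * N + 1))) ^ sg d * (N : ℝ) ^ e
        ≤ C1 * (N * R) * ((16 * d) ^ d * (N : ℝ) ^ sg d) * (D * (12 * N)) ^ sg d * (N : ℝ) ^ e := by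
          have h12 : 4 * (2 * (N : ℝ) + 1) ≤ 12 * N := by linarith
          have := mul_le_mul_of_nonneg_left h12 hD0
          gcongr ?_ * ?_ ^ _ * _
      _ = _ := by ring
end VMV

namespace VMV
open Finset

lemma exp_diff (u v : ℝ) : ‖Complex.exp (2 * π * Complex.I * u) - Complex.exp (2 * π * Complex.I * v)‖ ≤ 8 * |u - v| := by
  have e : Complex.exp (2 * π * Complex.I * u) - Complex.exp (2 * π * Complex.I * v)
      = Complex.exp (Complex.I * ((2 * π * v : ℝ) : ℂ)) * (Complex.exp (Complex.I * ((2 * π * (u - v) : ℝ) : ℂ)) - 1) := by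
    rw [mul_sub, mul_one, ← Complex.exp_add]
    congr 1
    · congr 1; push_cast; ring
    · congr 1; push_cast; ring
  rw [e, norm_mul, mul_comm Complex.I, Complex.norm_exp_ofReal_mul_I, one_mul]
  refine (Real.norm_exp_I_mul_ofReal_sub_one_le).trans ?_
  rw [Real.norm_eq_abs, abs_mul, abs_of_pos (by positivity : (0 : ℝ) < 2 * π)]
  have := Real.pi_lt_four
  gcongr
  linarith

lemma disc (k N Q : ℕ) [NeZero Q] (hN : 1 ≤ N) (hQ : N ^ (k + 1) ≤ Q) (α : ℕ → ℝ) :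
    ‖∑ n ∈ Icc 1 N, Complex.exp (2 * π * Complex.I * ((∑ i ∈ Icc 1 k, α i * (n : ℝ) ^ i : ℝ) : ℂ))
      - ∑ y ∈ Icc (1 : ℤ) N, (ZMod.stdAddChar (∑ h ∈ Icc 1 k, ((⌊α h * Q⌋ : ℤ) : ZMod Q) * (y : ZMod Q) ^ h) : ℂ)‖ ≤ 8 * k := by
  have hQ0 : (0 : ℝ) < Q := by exact_mod_cast NeZero.pos Q
  have hNR : (1 : ℝ) ≤ N := by exact_mod_cast hN
  have h1 : ∑ y ∈ Icc (1 : ℤ) N, (ZMod.stdAddChar (∑ h ∈ Icc 1 k, ((⌊α h * Q⌋ : ℤ) : ZMod Q) * (y : ZMod Q) ^ h) : ℂ)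
      = ∑ n ∈ Icc 1 N, Complex.exp (2 * π * Complex.I * ((∑ i ∈ Icc 1 k, (⌊α i * Q⌋ / Q : ℝ) * (n : ℝ) ^ i : ℝ) : ℂ)) := by
    symm
    refine Finset.sum_bij (fun n _ => (n : ℤ)) ?_ ?_ ?_ ?_
    · intro n hn; rw [Finset.mem_Icc] at hn ⊢; omega
    · intro a _ b _ h; exact_mod_cast h
    · intro y hy; rw [Finset.mem_Icc] at hy
      exact ⟨y.toNat, by rw [Finset.mem_Icc]; omega, by omega⟩
    · intro n _
      have : ∑ h ∈ Icc 1 k, ((⌊α h * Q⌋ : ℤ) : ZMod Q) * (((n : ℤ)) : ZMod Q) ^ h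
          = ((∑ h ∈ Icc 1 k, ⌊α h * Q⌋ * (n : ℤ) ^ h : ℤ) : ZMod Q) := by push_cast; rfl
      rw [this, ZMod.stdAddChar_coe]
      congr 1
      push_cast
      rw [mul_div_assoc, Finset.sum_div]
      congr 1
      exact Finset.sum_congr rfl fun i _ => by ring
  rw [h1, ← Finset.sum_sub_distrib]
  refine (norm_sum_le _ _).trans ?_
  refine (Finset.sum_le_card_nsmul _ _ (8 * k / N : ℝ) ?_).trans ?_
  · intro n hn
    rw [Finset.mem_Icc] at hn
    have hnN : (n : ℝ) ≤ N := by exact_mod_cast hn.2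
    refine (exp_diff _ _).trans ?_
    rw [← Finset.sum_sub_distrib]
    have h2 : |∑ i ∈ Icc 1 k, (α i * (n : ℝ) ^ i - (⌊α i * Q⌋ / Q : ℝ) * (n : ℝ) ^ i)| ≤ k * (1 / N) := by
      refine (Finset.abs_sum_le_sum_abs _ _).trans ?_
      refine (Finset.sum_le_card_nsmul _ _ (1 / N : ℝ) ?_).trans (by simp)
      intro i hi
      rw [Finset.mem_Icc] at hi
      have e : α i * (n : ℝ) ^ i - (⌊α i * Q⌋ / Q : ℝ) * (n : ℝ) ^ i = (α i * Q - ⌊α i * Q⌋) * ((n : ℝ) ^ i / Q) := by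
        field_simp
      rw [e, abs_mul, abs_of_nonneg (sub_nonneg.2 (Int.floor_le _)), abs_of_nonneg (by positivity)]
      have f1 : α i * Q - ⌊α i * Q⌋ ≤ 1 := by linarith [Int.lt_floor_add_one (α i * Q)]
      have f2 : (n : ℝ) ^ i / Q ≤ 1 / N := by
        rw [div_le_div_iff₀ hQ0 (by linarith), one_mul]
        calc (n : ℝ) ^ i * N ≤ (N : ℝ) ^ i * N := by gcongr
          _ ≤ (N : ℝ) ^ k * N := by gcongr; exact hi.2
          _ = (N : ℝ) ^ (k + 1) := by rw [pow_succ]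
          _ ≤ Q := by exact_mod_cast hQ
      calc _ ≤ 1 * (1 / N : ℝ) := by
            apply mul_le_mul f1 f2 (by positivity) zero_le_one
        _ = _ := one_mul _
    calc _ ≤ 8 * (k * (1 / N : ℝ)) := by gcongr
      _ = _ := by ring
  · rw [nsmul_eq_mul, Nat.card_Icc, add_tsub_cancel_right]
    apply le_of_eq; field_simp

theorem final (k : ℕ) (hk : 3 ≤ k) (ε : ℝ) (hε : 0 < ε) :
    ∃ C : ℝ, 0 < C ∧ ∀ (N : ℕ) (α : ℕ → ℝ) (j : ℕ) (a : ℤ) (q : ℕ),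
      2 ≤ j → j ≤ k → 0 < q → Int.gcd a (q : ℤ) = 1 →
      |α j - (a : ℝ) / (q : ℝ)| ≤ ((q : ℝ)) ⁻¹ ^ 2 →
      ‖∑ n ∈ Finset.Icc 1 N, Complex.exp (2 * π * Complex.I * ((∑ i ∈ Finset.Icc 1 k, α i * (n : ℝ) ^ i : ℝ) : ℂ))‖ ≤
        C * (N : ℝ) ^ (1 + ε) * ((q : ℝ)⁻¹ + (N : ℝ)⁻¹ + (q : ℝ) * (N : ℝ) ^ (-(j : ℝ))) ^ ((1 : ℝ) / ((k : ℝ) * ((k : ℝ) - 1))) := by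
  obtain ⟨d, rfl⟩ : ∃ d, k = d + 1 := ⟨k - 1, by omega⟩
  have hd : 1 ≤ d := by omega
  obtain ⟨p, hpd, hpp⟩ := Nat.exists_infinite_primes (d + 1)
  have : Fact p.Prime := ⟨hpp⟩
  have hp1 : 1 < p := hpp.one_lt
  set ε' : ℝ := ε / (2 * (d + 2)) with hε'
  have hε'0 : 0 < ε' := by positivity
  obtain ⟨C0, hC0, HD⟩ := HDec_all (p := p) hd (by omega) ε' hε'0
  obtain ⟨C2, hC2, H2⟩ := main_disc d hd
  set C0' := max 1 C0 with hC0'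
  set C2' := max 1 C2 with hC2'
  have hC0'1 : 1 ≤ C0' := le_max_left _ _
  have hC2'1 : 1 ≤ C2' := le_max_left _ _
  set E : ℝ := 2 + d / ε' with hE
  have hE0 : 0 < E := by positivity
  set F : ℝ := ((p : ℝ) * 3 ^ (d + 2)) ^ (2 * ε') with hF
  have hp0 : (0 : ℝ) < p := pp0
  have hF0 : 0 < F := by positivity
  refine ⟨C2' * E * C0' * F + 8 * (d + 1), by positivity, ?_⟩
  intro N α j a q hj hjk hq hg hα
  rcases Nat.eq_zero_or_pos N with rfl | hN
  · simp only [Finset.Icc_eq_empty_of_lt (show 0 < 1 by norm_num), Finset.sum_empty, norm_zero]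
    positivity
  have hN1 : 1 ≤ N := hN
  have hNR : (1 : ℝ) ≤ N := by exact_mod_cast hN1
  have hN0 : (0 : ℝ) < N := by linarith
  have hqR : (0 : ℝ) < q := by exact_mod_cast hq
  rw [Real.rpow_neg hN0.le, Real.rpow_natCast]
  set R : ℝ := ((q : ℝ)⁻¹ + (N : ℝ)⁻¹ + q * ((N : ℝ) ^ j)⁻¹) with hR
  have hR0 : 0 ≤ R := by positivity
  set ρ : ℝ := R ^ ((1 : ℝ) / (((d + 1 : ℕ) : ℝ) * (((d + 1 : ℕ) : ℝ) - 1))) with hρ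
  have hρ0 : 0 ≤ ρ := by positivity
  have hs := sg_pos hd
  have hexp : (1 : ℝ) / (((d + 1 : ℕ) : ℝ) * (((d + 1 : ℕ) : ℝ) - 1)) = (((2 * sg d : ℕ) : ℝ))⁻¹ := by
    rw [two_sg, one_div]; push_cast; ring
  have hρR : ρ ^ (2 * sg d) = R := by
    rw [hρ, hexp, Real.rpow_inv_natCast_pow hR0 (by omega)]
  -- choice of the modulus
  set n := Nat.clog p ((3 * N) ^ (d + 2)) with hn
  have hx1 : 1 < (3 * N) ^ (d + 2) := Nat.one_lt_pow (by omega) (by omega)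
  have hlow : (3 * N) ^ (d + 2) ≤ p ^ n := Nat.le_pow_clog hp1 _
  have hn1 : 1 ≤ n := Nat.clog_pos hp1 hx1
  have hup : p ^ n ≤ p * (3 * N) ^ (d + 2) := by
    have := Nat.pow_pred_clog_lt_self hp1 hx1
    rw [← hn] at this
    have e : p ^ n = p * p ^ n.pred := by
      rw [← pow_succ']; congr 1; simp only [Nat.pred_eq_sub_one]; omega
    rw [e]
    exact Nat.mul_le_mul_left _ this.le
  have hQn : p ^ n ≤ p ^ (d * n) := Nat.pow_le_pow_right hpp.pos (by nlinarith)
  have h3N : 3 * N < p ^ n := lt_of_lt_of_le (by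
    calc 3 * N = (3 * N) ^ 1 := (pow_one _).symm
      _ < (3 * N) ^ (d + 2) := Nat.pow_lt_pow_right (by omega) (by omega)) hlow
  have hNQ2 : N ^ (d + 2) ≤ p ^ (d * n) := ((Nat.pow_le_pow_left (by omega) _).trans hlow).trans hQn
  have hNQ1 : N ^ (d + 1) ≤ p ^ (d * n) := (Nat.pow_le_pow_right hN1 (by omega)).trans hNQ2
  set V : ℝ := ((p : ℝ) ^ n) ^ ε' with hV
  have hP1 : (1 : ℝ) ≤ (p : ℝ) ^ n := one_le_pow₀ (by exact_mod_cast hp1.le)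
  have hV1 : 1 ≤ V := Real.one_le_rpow hP1 hε'0.le
  have hVe : (p : ℝ) ^ (ε' * n) = V := by
    rw [hV, mul_comm, Real.rpow_mul hp0.le, Real.rpow_natCast]
  have hDec : Dec p d n (C0' * V) := by
    have := HD n
    rw [hVe] at this
    exact Dec_mono this (by positivity) (by gcongr; exact le_max_right _ _)
  have hQ0 : (0 : ℝ) < ((p ^ (d * n) : ℕ) : ℝ) := by exact_mod_cast pow_pos hpp.pos _
  set Az : ℕ → ℤ := fun h => ⌊α h * ((p ^ (d * n) : ℕ) : ℝ)⌋ with hAz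
  have hxA : |α j - Az j / ((p ^ (d * n) : ℕ) : ℝ)| ≤ (((p ^ (d * n) : ℕ) : ℝ))⁻¹ := by
    have e : α j - Az j / ((p ^ (d * n) : ℕ) : ℝ) = (α j * ((p ^ (d * n) : ℕ) : ℝ) - Az j) * (((p ^ (d * n) : ℕ) : ℝ))⁻¹ := by
      field_simp
    have f0 : 0 ≤ α j * ((p ^ (d * n) : ℕ) : ℝ) - Az j := sub_nonneg.2 (Int.floor_le _)
    have f1 : α j * ((p ^ (d * n) : ℕ) : ℝ) - Az j ≤ 1 := by
      linarith [Int.lt_floor_add_one (α j * ((p ^ (d * n) : ℕ) : ℝ))]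
    rw [e, abs_of_nonneg (by positivity)]
    exact mul_le_of_le_one_left (by positivity) f1
  have hmain := H2 p n N (C0' * V) (by positivity) hDec hN1 hNQ1 (lt_of_lt_of_le h3N hQn) (by omega) Az j (α j) a q hj hjk hq hg hα hxA
  have hdisc := disc (d + 1) N (p ^ (d * n)) hN1 hNQ2 α
  rw [← hR] at hmain
  set S0 := ∑ y ∈ Icc (1 : ℤ) N, (ZMod.stdAddChar (∑ h ∈ Icc 1 (d + 1), (Az h : ZMod (p ^ (d * n))) * (y : ZMod (p ^ (d * n))) ^ h) : ℂ) with hS0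
  have hlog : 2 + Real.log ((p ^ (d * n) : ℕ) : ℝ) ≤ E * V := by
    have e : Real.log ((p ^ (d * n) : ℕ) : ℝ) = d * Real.log ((p : ℝ) ^ n) := by
      push_cast
      rw [mul_comm, pow_mul, Real.log_pow]
    rw [e]
    have l1 := Real.log_le_rpow_div (x := (p : ℝ) ^ n) (by positivity) hε'0
    rw [← hV] at l1
    have l2 : (d : ℝ) * Real.log ((p : ℝ) ^ n) ≤ d * (V / ε') := by gcongr
    have e2 : E * V = 2 * V + d * (V / ε') := by rw [hE]; ring
    rw [e2]
    linarith
  have hlog0 : 0 ≤ Real.log ((p ^ (d * n) : ℕ) : ℝ) := Real.log_natCast_nonneg _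
  have hCV : 1 ≤ C0' * V := by nlinarith
  have hS0b : ‖S0‖ ≤ C2' * (E * V) * (C0' * V) * N * ρ := by
    refine le_of_pow_le_pow_left₀ (n := 2 * sg d) (by omega) (by positivity) (hmain.trans ?_)
    rw [mul_pow (C2' * (E * V) * (C0' * V) * N), mul_pow (C2' * (E * V) * (C0' * V)), mul_pow (C2' * (E * V)), mul_pow C2', hρR]
    have g1 : C2 ≤ C2' ^ (2 * sg d) := (le_max_right 1 C2).trans (le_self_pow₀ hC2'1 (by omega))
    have g2 : (C0' * V) ^ sg d ≤ (C0' * V) ^ (2 * sg d) := pow_le_pow_right₀ hCV (by omega)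
    gcongr
  have hV2 : V * V ≤ F * (N : ℝ) ^ ε := by
    have e1 : V * V = ((p : ℝ) ^ n) ^ (2 * ε') := by
      rw [hV, ← Real.rpow_add (by positivity)]; congr 1; ring
    have e2 : F * (N : ℝ) ^ ε = ((p : ℝ) * (3 * N) ^ (d + 2)) ^ (2 * ε') := by
      rw [mul_pow, ← mul_assoc, Real.mul_rpow (by positivity) (by positivity), hF]
      congr 1
      rw [← Real.rpow_natCast, ← Real.rpow_mul hN0.le]
      congr 1
      rw [hε']; push_cast; field_simp
    rw [e1, e2]
    apply Real.rpow_le_rpow (by positivity) _ (by positivity)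
    exact_mod_cast hup
  have hNe : (N : ℝ) ^ (1 + ε) = N * (N : ℝ) ^ ε := by
    rw [Real.rpow_add hN0, Real.rpow_one]
  have hone : 1 ≤ (N : ℝ) ^ (1 + ε) * ρ := by
    have r1 : (N : ℝ)⁻¹ ≤ ρ := by
      have i1 : (N : ℝ)⁻¹ ≤ ((N : ℝ)⁻¹) ^ ((((2 * sg d : ℕ) : ℝ))⁻¹) := by
        conv_lhs => rw [← Real.rpow_one ((N : ℝ)⁻¹)]
        apply Real.rpow_le_rpow_of_exponent_ge (by positivity) (inv_le_one_of_one_le₀ hNR)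
        apply inv_le_one_of_one_le₀
        exact_mod_cast (by omega : 1 ≤ 2 * sg d)
      refine i1.trans ?_
      rw [hρ, hexp]
      apply Real.rpow_le_rpow (by positivity) _ (by positivity)
      have : 0 ≤ (q : ℝ)⁻¹ := by positivity
      have : 0 ≤ q * ((N : ℝ) ^ j)⁻¹ := by positivity
      rw [hR]; linarith
    have r2 : (1 : ℝ) ≤ (N : ℝ) ^ ε := Real.one_le_rpow hNR hε.le
    rw [hNe]
    calc (1 : ℝ) = N * 1 * (N : ℝ)⁻¹ := by field_simp
      _ ≤ _ := by gcongr
  have htri : ‖∑ n ∈ Finset.Icc 1 N, Complex.exp (2 * π * Complex.I * ((∑ i ∈ Finset.Icc 1 (d + 1), α i * (n : ℝ) ^ i : ℝ) : ℂ))‖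
      ≤ ‖S0‖ + 8 * ((d + 1 : ℕ) : ℝ) := by
    have := norm_sub_norm_le (∑ n ∈ Finset.Icc 1 N, Complex.exp (2 * π * Complex.I * ((∑ i ∈ Finset.Icc 1 (d + 1), α i * (n : ℝ) ^ i : ℝ) : ℂ))) S0
    linarith
  refine htri.trans ?_
  have k1 : ‖S0‖ ≤ C2' * E * C0' * F * ((N : ℝ) ^ (1 + ε) * ρ) := by
    refine hS0b.trans ?_
    calc C2' * (E * V) * (C0' * V) * N * ρ = C2' * E * C0' * (V * V) * N * ρ := by ring
      _ ≤ C2' * E * C0' * (F * (N : ℝ) ^ ε) * N * ρ := by gcongr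
      _ = _ := by rw [hNe]; ring
  have k2 : 8 * ((d + 1 : ℕ) : ℝ) ≤ 8 * (d + 1) * ((N : ℝ) ^ (1 + ε) * ρ) := by
    push_cast
    exact le_mul_of_one_le_right (by positivity) hone
  calc _ ≤ C2' * E * C0' * F * ((N : ℝ) ^ (1 + ε) * ρ) + 8 * (d + 1) * ((N : ℝ) ^ (1 + ε) * ρ) := add_le_add k1 k2
    _ = _ := by ring
end VMV

/-- Bourgain's refinement of Weyl's inequality. -/
theorem stmt9 (k : ℕ) (hk : 3 ≤ k) (ε : ℝ) (hε : 0 < ε) :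
    ∃ C : ℝ, 0 < C ∧ ∀ (N : ℕ) (α : ℕ → ℝ) (j : ℕ) (a : ℤ) (q : ℕ),
      2 ≤ j → j ≤ k → 0 < q → Int.gcd a (q : ℤ) = 1 →
      |α j - (a : ℝ) / (q : ℝ)| ≤ ((q : ℝ)) ⁻¹ ^ 2 →
      ‖∑ n ∈ Finset.Icc 1 N, eC (∑ i ∈ Finset.Icc 1 k, α i * (n : ℝ) ^ i)‖ ≤
        C * (N : ℝ) ^ (1 + ε) *
          ((q : ℝ)⁻¹ + (N : ℝ)⁻¹ + (q : ℝ) * (N : ℝ) ^ (-(j : ℝ))) ^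
            ((1 : ℝ) / ((k : ℝ) * ((k : ℝ) - 1))) := by
  simp only [eC]
  exact VMV.final k hk ε hε
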